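/- Let a > 0 and δ ∈ (0,1/8) be fixed. The series ζ_E(s) = Σ_{k≥1} (E_{0,k}(s) + E_{1,k}(s) + E_{2,k}(s)) converges absolutely and locally uniformly on the strip {s ∈ ℂ : 1 < Re(s) < 2}, and its sum extends to a meromorphic function on ℂ which is holomorphic at s = 0. Moreover, for fixed δ, the derivative at 0 of this extension satisfies ζ_E'(0) = 4π·ζ(-1)·a + ζ(0)·log(a) + O(1/a) as a → +∞. -/

import Mathlib

open MeasureTheory Filter

/-- `E_{0,k}(s) = -(sin(πs)/π) · ∫_{k^{δ-1}}^{∞} (k²u² - 1/4)^{-s} · u/(u² + (2πa)²) du`. -/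
noncomputable def cuspE0 (a δ : ℝ) (k : ℕ) (s : ℂ) : ℂ :=
  -(Complex.sin ((Real.pi : ℂ) * s) / (Real.pi : ℂ)) *
    ∫ u in Set.Ioi ((k : ℝ) ^ (δ - 1)),
      (((k : ℝ) ^ 2 * u ^ 2 - 1 / 4 : ℝ) : ℂ) ^ (-s) *
        ((u / (u ^ 2 + (2 * Real.pi * a) ^ 2) : ℝ) : ℂ)

/-- `E_{1,k}(s) = (2 sin(πs)/π) · k · ∫_{k^{δ-1}}^{∞} (k²u² - 1/4)^{-s} · arsinh(u/(2πa)) du`. -/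
noncomputable def cuspE1 (a δ : ℝ) (k : ℕ) (s : ℂ) : ℂ :=
  (2 * Complex.sin ((Real.pi : ℂ) * s) / (Real.pi : ℂ)) * (k : ℂ) *
    ∫ u in Set.Ioi ((k : ℝ) ^ (δ - 1)),
      (((k : ℝ) ^ 2 * u ^ 2 - 1 / 4 : ℝ) : ℂ) ^ (-s) *
        ((Real.arsinh (u / (2 * Real.pi * a)) : ℝ) : ℂ)

/-- `E_{2,k}(s) = (2 sin(πs)/π)·(1/k)·∫_{k^{δ-1}}^{∞} (k²u² - 1/4)^{-s} ·
  (u·(u² + (2πa)²)^{-3/2}/24)·(13 - 15u²(u² + (2πa)²)^{-1}) du`. -/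
noncomputable def cuspE2 (a δ : ℝ) (k : ℕ) (s : ℂ) : ℂ :=
  (2 * Complex.sin ((Real.pi : ℂ) * s) / (Real.pi : ℂ)) * (1 / (k : ℂ)) *
    ∫ u in Set.Ioi ((k : ℝ) ^ (δ - 1)),
      (((k : ℝ) ^ 2 * u ^ 2 - 1 / 4 : ℝ) : ℂ) ^ (-s) *
        (((u * (u ^ 2 + (2 * Real.pi * a) ^ 2) ^ (-(3 : ℝ) / 2) / 24) *
          (13 - 15 * u ^ 2 * (u ^ 2 + (2 * Real.pi * a) ^ 2)⁻¹) : ℝ) : ℂ)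

/-- The summand of `ζ_E(s)`: `E_{0,k}(s) + E_{1,k}(s) + E_{2,k}(s)`. -/
noncomputable def cuspE (a δ : ℝ) (k : ℕ) (s : ℂ) : ℂ :=
  cuspE0 a δ k s + cuspE1 a δ k s + cuspE2 a δ k s

open scoped Topology

/-- Holomorphy of a parametric integral under local domination. -/
lemma cusp_holo_integral {μ : Measure ℝ} {Φ : ℂ → ℝ → ℂ} {U : Set ℂ} (hU : IsOpen U)
    (hm : ∀ s ∈ U, AEStronglyMeasurable (Φ s) μ)
    (hd : ∀ᵐ x ∂μ, DifferentiableOn ℂ (fun s => Φ s x) U)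
    (hb : ∀ s₀ ∈ U, ∃ V ∈ 𝓝 s₀, ∃ B : ℝ → ℝ, Integrable B μ ∧
      ∀ᵐ x ∂μ, ∀ s ∈ V, ‖Φ s x‖ ≤ B x) :
    DifferentiableOn ℂ (fun s => ∫ x, Φ s x ∂μ) U := by
  intro s₀ hs₀
  obtain ⟨V, hV, B, hB, hle⟩ := hb s₀ hs₀
  obtain ⟨R, hR, hRV⟩ := Metric.mem_nhds_iff.1 (inter_mem hV (hU.mem_nhds hs₀))
  have hball : ∀ s ∈ Metric.ball s₀ (R/2), Metric.closedBall s (R/4) ⊆ Metric.ball s₀ R := by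
    intro s hs z hz
    rw [Metric.mem_ball] at *
    rw [Metric.mem_closedBall] at hz
    calc dist z s₀ ≤ dist z s + dist s s₀ := dist_triangle _ _ _
      _ < R := by linarith
  have hsub : Metric.ball s₀ (R/2) ⊆ Metric.ball s₀ R := Metric.ball_subset_ball (by linarith)
  have hmem : s₀ ∈ Metric.ball s₀ (R/2) := Metric.mem_ball_self (by linarith)
  have key := hasDerivAt_integral_of_dominated_loc_of_deriv_le (μ := μ) (F := Φ)
    (F' := fun s x => deriv (fun s => Φ s x) s) (x₀ := s₀) (bound := fun x => B x / (R/4))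
    (Metric.ball_mem_nhds s₀ (half_pos hR)) ?_ ?_ ?_ ?_ (hB.div_const _) ?_
  · exact key.2.differentiableAt.differentiableWithinAt
  · filter_upwards [hU.mem_nhds hs₀] with s hs using hm s hs
  · refine hB.mono' (hm s₀ hs₀) ?_
    filter_upwards [hle] with x hx using hx s₀ (hRV (Metric.mem_ball_self hR)).1
  · -- measurability of the derivative as a limit of difference quotients
    have hlim : ∀ᵐ x ∂μ, Tendsto (fun n : ℕ =>
        (((R/2) / (n + 2) : ℝ) : ℂ)⁻¹ * (Φ (s₀ + (((R/2) / (n + 2) : ℝ) : ℂ)) x - Φ s₀ x)) atTop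
        (𝓝 (deriv (fun s => Φ s x) s₀)) := by
      filter_upwards [hd] with x hx
      have hda := (hx.differentiableAt (hU.mem_nhds hs₀)).hasDerivAt
      rw [hasDerivAt_iff_tendsto_slope_zero] at hda
      have h0 : Tendsto (fun n : ℕ => (((R/2) / (n + 2) : ℝ) : ℂ)) atTop (𝓝[≠] 0) := by
        rw [tendsto_nhdsWithin_iff]
        constructor
        · have : Tendsto (fun n : ℕ => (R/2) / ((n:ℝ) + 2)) atTop (𝓝 0) :=
            Tendsto.div_atTop tendsto_const_nhds
              (tendsto_atTop_add_const_right _ _ tendsto_natCast_atTop_atTop)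
          have := (Complex.continuous_ofReal.tendsto 0).comp this
          simpa only [Function.comp_def, Complex.ofReal_zero] using this
        · refine Eventually.of_forall fun n => ?_
          have : (0:ℝ) < (R/2) / (n + 2) := by positivity
          simpa only [Set.mem_compl_iff, Set.mem_singleton_iff, Complex.ofReal_eq_zero] using this.ne'
      simpa [Function.comp_def, smul_eq_mul] using hda.comp h0
    refine aestronglyMeasurable_of_tendsto_ae atTop (fun n => ?_) hlim
    have : s₀ + (((R/2) / (n + 2) : ℝ) : ℂ) ∈ U := by
      apply (hRV _).2
      rw [Metric.mem_ball, dist_eq_norm, add_sub_cancel_left, Complex.norm_real, Real.norm_eq_abs,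
        abs_of_pos (by positivity)]
      rw [div_lt_iff₀ (by positivity)]
      nlinarith [(Nat.cast_nonneg n : (0:ℝ) ≤ n)]
    exact ((hm _ this).sub (hm s₀ hs₀)).const_mul _
  · filter_upwards [hd, hle] with x hx hlx s hs
    have h1 : ∀ z ∈ Metric.sphere s (R/4), ‖Φ z x‖ ≤ B x := fun z hz =>
      hlx z (hRV (hball s hs (Metric.sphere_subset_closedBall hz))).1
    refine Complex.norm_deriv_le_of_forall_mem_sphere_norm_le (by linarith) ?_ h1
    refine DifferentiableOn.diffContOnCl ?_
    rw [closure_ball _ (by linarith)]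
    exact hx.mono fun z hz => (hRV (hball s hs hz)).2
  · filter_upwards [hd] with x hx s hs
    exact (hx.differentiableAt (hU.mem_nhds (hRV (hsub hs)).2)).hasDerivAt

lemma cusp_holo_tsum {T : ℕ → ℂ → ℂ} {U : Set ℂ} (hU : IsOpen U)
    (hd : ∀ k, DifferentiableOn ℂ (T k) U)
    (hb : ∀ s₀ ∈ U, ∃ V ∈ 𝓝 s₀, ∃ u : ℕ → ℝ, Summable u ∧ ∀ k, ∀ s ∈ V, ‖T k s‖ ≤ u k) :
    DifferentiableOn ℂ (fun s => ∑' k, T k s) U := by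
  intro s₀ hs₀
  obtain ⟨V, hV, u, hu, hle⟩ := hb s₀ hs₀
  obtain ⟨W, hW, hWo, hsW⟩ := mem_nhds_iff.1 (inter_mem hV (hU.mem_nhds hs₀))
  have := Complex.differentiableOn_tsum_of_summable_norm (F := T) hu
    (fun i => (hd i).mono fun z hz => (hW hz).2) hWo (fun i w hw => hle i w (hW hw).1)
  exact (this.differentiableAt (hWo.mem_nhds hsW)).differentiableWithinAt

lemma cusp_tlu_tsum {T : ℕ → ℂ → ℂ} {U : Set ℂ}
    (hb : ∀ s₀ ∈ U, ∃ V ∈ 𝓝 s₀, ∃ u : ℕ → ℝ, Summable u ∧ ∀ k, ∀ s ∈ V, ‖T k s‖ ≤ u k) :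
    TendstoLocallyUniformlyOn (fun (n : ℕ) (s : ℂ) => ∑ k ∈ Finset.range n, T k s)
      (fun s => ∑' k, T k s) atTop U := by
  intro w hw s₀ hs₀
  obtain ⟨V, hV, u, hu, hle⟩ := hb s₀ hs₀
  exact ⟨V, mem_nhdsWithin_of_mem_nhds hV, tendstoUniformlyOn_tsum_nat hu hle w hw⟩

/-- Identity theorem for meromorphic functions. -/
lemma cusp_mero_identity {f g : ℂ → ℂ} {U V : Set ℂ} (hU : IsPreconnected U)
    (hf : ∀ z ∈ U, MeromorphicAt f z) (hg : ∀ z ∈ U, MeromorphicAt g z)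
    (hVo : IsOpen V) (hVU : V ⊆ U) (hVn : V.Nonempty) (h : ∀ z ∈ V, f z = g z)
    {z : ℂ} (hz : z ∈ U) : f =ᶠ[𝓝[≠] z] g := by
  obtain ⟨v, hv⟩ := hVn
  have hm : MeromorphicOn (f - g) U := fun z hz => (hf z hz).sub (hg z hz)
  have h1 : meromorphicOrderAt (f - g) v = ⊤ := by
    rw [meromorphicOrderAt_eq_top_iff]
    apply mem_nhdsWithin_of_mem_nhds
    filter_upwards [hVo.mem_nhds hv] with w hw
    simp [h w hw]
  have h2 : meromorphicOrderAt (f - g) z = ⊤ := by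
    by_contra hne
    exact hm.meromorphicOrderAt_ne_top_of_isPreconnected hU hz (hVU hv) hne h1
  rw [meromorphicOrderAt_eq_top_iff] at h2
  filter_upwards [h2] with w hw
  simpa [sub_eq_zero] using hw

/-- Gluing meromorphic continuations. -/
lemma cusp_glue {ι : Type*} (D : ι → Set ℂ) (f : ι → ℂ → ℂ) (V : Set ℂ) (hVo : IsOpen V)
    (hVn : V.Nonempty) (hDo : ∀ i, IsOpen (D i)) (hDc : ∀ i, Convex ℝ (D i))
    (hVD : ∀ i, V ⊆ D i) (hf : ∀ i, ∀ z ∈ D i, MeromorphicAt (f i) z)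
    (hfe : ∀ i j, ∀ z ∈ V, f i z = f j z) (hcov : ∀ z, ∃ i, z ∈ D i) :
    ∃ F : ℂ → ℂ, (∀ z, MeromorphicNFAt F z) ∧ ∀ i, ∀ z ∈ D i, F =ᶠ[𝓝[≠] z] f i := by
  choose n hn using hcov
  let F : ℂ → ℂ := fun z => toMeromorphicNFAt (f (n z)) z z
  have key : ∀ i, ∀ z ∈ D i, F =ᶠ[𝓝 z] toMeromorphicNFAt (f i) z := by
    intro i z hz
    -- pointwise: F w = toNFAt (f i) w w for w in D i
    have h1 : ∀ w ∈ D i, F w = toMeromorphicNFAt (f i) w w := by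
      intro w hw
      have : f (n w) =ᶠ[𝓝[≠] w] f i :=
        cusp_mero_identity (U := D (n w) ∩ D i) ((hDc _).inter (hDc _)).isPreconnected
          (fun z hz => hf _ z hz.1) (fun z hz => hf _ z hz.2) hVo
          (fun z hz => ⟨hVD _ hz, hVD _ hz⟩) hVn (hfe _ _) ⟨hn w, hw⟩
      exact (toMeromorphicNFAt_eventuallyEq_nhds_congr this).self_of_nhds
    have h2 : F =ᶠ[𝓝[≠] z] f i := by
      have ha := (hf i z hz).eventually_analyticAt
      filter_upwards [ha, mem_nhdsWithin_of_mem_nhds ((hDo i).mem_nhds hz)] with w hw hwD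
      rw [h1 w hwD, toMeromorphicNFAt_eq_self.2 hw.meromorphicNFAt]
    have h3 : F =ᶠ[𝓝[≠] z] toMeromorphicNFAt (f i) z :=
      h2.trans (hf i z hz).eq_nhdsNE_toMeromorphicNFAt
    exact eventuallyEq_nhds_of_eventuallyEq_nhdsNE h3 (h1 z hz)
  refine ⟨F, fun z => ?_, fun i z hz => ?_⟩
  · have := key _ z (hn z)
    exact (meromorphicNFAt_congr this).2 meromorphicNFAt_toMeromorphicNFAt
  · exact ((key i z hz).filter_mono nhdsWithin_le_nhds).trans
      (hf i z hz).eq_nhdsNE_toMeromorphicNFAt.symm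

/-- Taylor coefficients of `(1-y)^{-s}`. -/
noncomputable def cuspA : ℕ → ℂ → ℂ
  | 0, _ => 1
  | (j+1), s => s / (j+1) * cuspA j (s+1)

/-- Taylor remainder of `(1-y)^{-s}`. -/
noncomputable def cuspR (J : ℕ) (s : ℂ) (y : ℝ) : ℂ :=
  ((1 - y : ℝ) : ℂ) ^ (-s) - ∑ j ∈ Finset.range J, cuspA j s * (y : ℂ) ^ j

lemma cuspA_differentiable (j : ℕ) : Differentiable ℂ (cuspA j) := by
  induction j with
  | zero => exact differentiable_const _
  | succ j ih =>
    have : cuspA (j+1) = fun s => s / (j+1) * cuspA j (s+1) := by ext s; rfl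
    rw [this]
    have h2 : Differentiable ℂ (fun s => cuspA j (s+1)) := ih.comp (differentiable_id.add_const 1)
    exact (differentiable_id.div_const _).mul h2

lemma cuspR_differentiable (J : ℕ) {y : ℝ} (hy : y < 1) :
    Differentiable ℂ (fun s => cuspR J s y) := by
  unfold cuspR
  refine Differentiable.sub ?_ ?_
  · intro s
    have : ((1 - y : ℝ) : ℂ) ≠ 0 := by
      rw [Complex.ofReal_ne_zero]; linarith
    exact (differentiableAt_id.neg).const_cpow (Or.inl this)
  · exact Differentiable.fun_sum fun j _ => (cuspA_differentiable j).mul_const _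

lemma cuspR_measurable (J : ℕ) (s : ℂ) : Measurable (cuspR J s) := by
  unfold cuspR
  fun_prop

lemma cuspR_hasDerivAt (J : ℕ) (s : ℂ) {y : ℝ} (hy : y < 1) :
    HasDerivAt (cuspR (J+1) s) (s * cuspR J (s+1) y) y := by
  have h1 : HasDerivAt (fun y : ℝ => ((1 - y : ℝ) : ℂ) ^ (-s))
      (s * ((1 - y : ℝ) : ℂ) ^ (-(s+1))) y := by
    have hy' : ((1:ℂ) - y) ∈ Complex.slitPlane := by
      rw [← Complex.ofReal_one, ← Complex.ofReal_sub]
      exact Complex.ofReal_mem_slitPlane.2 (by linarith)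
    have h : HasDerivAt (fun z : ℂ => (1 - z) ^ (-s)) (-s * (1 - (y:ℂ)) ^ (-s - 1) * (-1)) y :=
      ((hasDerivAt_id (y:ℂ)).const_sub 1).cpow_const hy'
    have := h.comp_ofReal
    convert this using 1
    · ext x; push_cast; rfl
    · push_cast; rw [show -(s+1) = -s - 1 by ring]; ring
  have h2 : HasDerivAt (fun y : ℝ => ∑ j ∈ Finset.range (J+1), cuspA j s * (y : ℂ) ^ j)
      (∑ j ∈ Finset.range J, s * (cuspA j (s+1) * (y:ℂ)^j)) y := by
    have : ∀ j ∈ Finset.range (J+1), HasDerivAt (fun y : ℝ => cuspA j s * (y : ℂ) ^ j)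
        (cuspA j s * (j * (y:ℂ)^(j-1))) y := by
      intro j _
      have := ((hasDerivAt_pow j (y:ℂ)).const_mul (cuspA j s)).comp_ofReal
      exact this
    refine (HasDerivAt.fun_sum this).congr_deriv (Eq.symm ?_)
    rw [Finset.sum_range_succ']
    simp only [Nat.cast_zero, zero_mul, mul_zero, add_zero]
    refine Finset.sum_congr rfl fun j _ => ?_
    have hj : ((j:ℂ)+1) ≠ 0 := by exact_mod_cast Nat.succ_ne_zero j
    simp only [cuspA, Nat.add_sub_cancel]
    push_cast
    field_simp
  refine (h1.sub h2).congr_deriv ?_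
  rw [← Finset.mul_sum, cuspR]; ring

lemma cuspR_bound (J : ℕ) : ∀ R : ℝ, ∃ C : ℝ, 0 ≤ C ∧ ∀ s : ℂ, ‖s‖ ≤ R → ∀ y : ℝ, 0 ≤ y → y ≤ 1/4 →
    ‖cuspR J s y‖ ≤ C * y ^ J := by
  induction J with
  | zero =>
    intro R
    refine ⟨(3/4 : ℝ) ^ (-R), by positivity, fun s hs y hy0 hy1 => ?_⟩
    have h1 : (0:ℝ) < 1 - y := by linarith
    simp only [cuspR, Finset.range_zero, Finset.sum_empty, sub_zero, pow_zero, mul_one]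
    rw [Complex.norm_cpow_eq_rpow_re_of_pos h1]
    have hre : -R ≤ (-s).re := by
      have := Complex.abs_re_le_norm s
      have := (abs_le.1 this).2
      simp only [Complex.neg_re]; linarith
    have hR : 0 ≤ R := (norm_nonneg s).trans hs
    calc (1 - y) ^ (-s).re ≤ (1-y) ^ (-R) :=
          Real.rpow_le_rpow_of_exponent_ge h1 (by linarith) hre
      _ ≤ (3/4 : ℝ) ^ (-R) :=
          Real.rpow_le_rpow_of_nonpos (by norm_num) (by linarith) (by linarith)
  | succ J ih =>
    intro R
    obtain ⟨C, hC, h⟩ := ih (R+1)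
    refine ⟨|R| * C, by positivity, fun s hs y hy0 hy1 => ?_⟩
    have hR : 0 ≤ R := (norm_nonneg s).trans hs
    have h0 : cuspR (J+1) s 0 = 0 := by
      simp [cuspR, Finset.sum_range_succ', cuspA]
    have key := norm_image_sub_le_of_norm_deriv_le_segment' (f := cuspR (J+1) s)
      (f' := fun x => s * cuspR J (s+1) x) (a := 0) (b := y) (C := |R| * C * y ^ J)
      (fun x hx => (cuspR_hasDerivAt J s (by linarith [hx.2])).hasDerivWithinAt) ?_ y ⟨hy0, le_rfl⟩
    · rw [h0, sub_zero, sub_zero] at key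
      calc _ ≤ _ := key
        _ = _ := by ring
    · intro x hx
      rw [norm_mul, abs_of_nonneg hR]
      have h3 : ‖s + 1‖ ≤ R + 1 := (norm_add_le _ _).trans (by simpa using hs)
      have := h (s+1) h3 x hx.1 (by linarith [hx.2])
      have hxy : x ^ J ≤ y ^ J := pow_le_pow_left₀ hx.1 hx.2.le J
      calc ‖s‖ * ‖cuspR J (s+1) x‖ ≤ R * (C * y ^ J) := by
            apply mul_le_mul hs (this.trans (by gcongr)) (norm_nonneg _) hR
        _ = _ := by ring

/-- `k+1` as a real number. -/
noncomputable def cuspN (k : ℕ) : ℝ := (k : ℝ) + 1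

lemma cuspN_pos (k : ℕ) : 0 < cuspN k := by unfold cuspN; positivity
lemma cuspN_one_le (k : ℕ) : 1 ≤ cuspN k := by
  unfold cuspN; linarith [(Nat.cast_nonneg k : (0:ℝ) ≤ k)]
lemma cuspN_ne (k : ℕ) : (cuspN k : ℂ) ≠ 0 := Complex.ofReal_ne_zero.2 (cuspN_pos k).ne'

lemma cuspN_summable {e : ℝ} (he : e < -1) : Summable (fun k => cuspN k ^ e) := by
  have h := (summable_nat_add_iff 1).2 (Real.summable_nat_rpow.2 he)
  refine h.congr fun k => ?_
  simp [cuspN]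

noncomputable def cuspT (δ p : ℝ) (f : ℝ → ℝ) (J : ℕ) (k : ℕ) (s : ℂ) : ℂ :=
  (cuspN k : ℂ) ^ ((p : ℂ) + δ - 1 - 2 * δ * s) * ∫ x in Set.Ioi (1:ℝ),
    (x : ℂ) ^ (-2 * s) * cuspR J s (1 / (4 * (cuspN k ^ δ * x) ^ 2)) * (f (cuspN k ^ (δ - 1) * x) : ℂ)

noncomputable def cuspI (δ p : ℝ) (f : ℝ → ℝ) (k : ℕ) (t : ℂ) : ℂ :=
  (cuspN k : ℂ) ^ ((p : ℂ) + δ - 1 - 2 * δ * t) * ∫ x in Set.Ioi (1:ℝ),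
    (x : ℂ) ^ (-2 * t) * (f (cuspN k ^ (δ - 1) * x) : ℂ)

noncomputable def cuspP (δ p : ℝ) (g : ℝ → ℝ) (k : ℕ) (t : ℂ) : ℂ :=
  (cuspN k : ℂ) ^ ((p : ℂ) + δ - 1 - 2 * δ * t) * ∫ x in Set.Ioc (0:ℝ) 1,
    (x : ℂ) ^ (-2 * t) * (g (cuspN k ^ (δ - 1) * x) : ℂ)

lemma cuspN_cpow_norm (k : ℕ) (z : ℂ) : ‖(cuspN k : ℂ) ^ z‖ = cuspN k ^ z.re :=
  Complex.norm_cpow_eq_rpow_re_of_pos (cuspN_pos k) z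

lemma cuspN_cpow_diff (k : ℕ) (p δ : ℝ) :
    Differentiable ℂ (fun s : ℂ => (cuspN k : ℂ) ^ ((p : ℂ) + δ - 1 - 2 * δ * s)) := by
  intro s
  refine DifferentiableAt.const_cpow ?_ (Or.inl (cuspN_ne k))
  fun_prop

lemma cusp_re1 (p δ : ℝ) (s : ℂ) : ((p : ℂ) + δ - 1 - 2 * δ * s).re = p + δ - 1 - 2 * δ * s.re := by
  simp

lemma cusp_y_mem {δ : ℝ} (hδ : 0 ≤ δ) (k : ℕ) {x : ℝ} (hx : 1 < x) :
    0 ≤ 1 / (4 * (cuspN k ^ δ * x) ^ 2) ∧ 1 / (4 * (cuspN k ^ δ * x) ^ 2) ≤ 1/4 := by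
  have h1 : 1 ≤ cuspN k ^ δ := Real.one_le_rpow (cuspN_one_le k) hδ
  have h2 : 1 ≤ cuspN k ^ δ * x := by nlinarith
  refine ⟨by positivity, ?_⟩
  apply one_div_le_one_div_of_le (by norm_num)
  nlinarith

/-- pointwise bound of the integrand of `cuspT` -/
lemma cuspT_pt_bound {δ : ℝ} (hδ : 0 ≤ δ) {f : ℝ → ℝ} {A : ℝ} (hf : ∀ u > 0, |f u| ≤ A * u)
    (J : ℕ) {C R : ℝ} (hC : 0 ≤ C)
    (hR : ∀ s : ℂ, ‖s‖ ≤ R → ∀ y : ℝ, 0 ≤ y → y ≤ 1/4 → ‖cuspR J s y‖ ≤ C * y ^ J)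
    (k : ℕ) {s : ℂ} (hs : ‖s‖ ≤ R) {σ : ℝ} (hσ : σ ≤ s.re) {x : ℝ} (hx : 1 < x) :
    ‖(x : ℂ) ^ (-2 * s) * cuspR J s (1 / (4 * (cuspN k ^ δ * x) ^ 2)) *
      (f (cuspN k ^ (δ - 1) * x) : ℂ)‖ ≤
      C * A * cuspN k ^ (δ - 1 - 2 * δ * J) * x ^ (1 - 2 * σ - 2 * J) := by
  have hx0 : 0 < x := by linarith
  have hN := cuspN_pos k
  obtain ⟨hy0, hy1⟩ := cusp_y_mem hδ k hx
  have h1 : ‖(x : ℂ) ^ (-2 * s)‖ ≤ x ^ (-2 * σ) := by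
    rw [Complex.norm_cpow_eq_rpow_re_of_pos hx0]
    apply Real.rpow_le_rpow_of_exponent_le hx.le
    simp; linarith
  have h2 := hR s hs _ hy0 hy1
  have h3 : (1 / (4 * (cuspN k ^ δ * x) ^ 2)) ^ J ≤ cuspN k ^ (-2 * δ * J) * x ^ (-2 * (J:ℝ)) := by
    have e1 : cuspN k ^ (-2 * δ * J) * x ^ (-2 * (J:ℝ)) = (1 / (cuspN k ^ δ * x) ^ 2) ^ J := by
      rw [show -2 * δ * J = δ * (-2 * J) by ring, Real.rpow_mul hN.le,
        ← Real.mul_rpow (by positivity) hx0.le,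
        show -2 * (J:ℝ) = -((2 * J : ℕ) : ℝ) by push_cast; ring, Real.rpow_neg (by positivity),
        Real.rpow_natCast, pow_mul, one_div, inv_pow]
    rw [e1]
    apply pow_le_pow_left₀ hy0
    apply one_div_le_one_div_of_le (by positivity)
    nlinarith [sq_nonneg (cuspN k ^ δ * x)]
  have h4 : ‖(f (cuspN k ^ (δ - 1) * x) : ℂ)‖ ≤ A * (cuspN k ^ (δ - 1) * x) := by
    rw [Complex.norm_real]; exact hf _ (by positivity)
  rw [norm_mul, norm_mul]
  calc _ ≤ x ^ (-2 * σ) * (C * (cuspN k ^ (-2 * δ * J) * x ^ (-2 * (J:ℝ)))) *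
        (A * (cuspN k ^ (δ - 1) * x)) := by
        gcongr
        exact h2.trans (by gcongr)
    _ = C * A * (cuspN k ^ (δ - 1) * cuspN k ^ (-2 * δ * J)) *
        (x ^ (-2 * σ) * x ^ (-2 * (J:ℝ)) * x) := by ring
    _ = _ := by
        rw [← Real.rpow_add hN, ← Real.rpow_add hx0, ← Real.rpow_add_one hx0.ne']
        ring_nf

lemma cuspT_meas {δ : ℝ} {f : ℝ → ℝ} (hf : Measurable f) (J k : ℕ) (s : ℂ) :
    Measurable (fun x : ℝ => (x : ℂ) ^ (-2 * s) * cuspR J s (1 / (4 * (cuspN k ^ δ * x) ^ 2)) *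
      (f (cuspN k ^ (δ - 1) * x) : ℂ)) := by
  have := (cuspR_measurable J s)
  fun_prop

lemma cuspI_meas {δ : ℝ} {f : ℝ → ℝ} (hf : Measurable f) (k : ℕ) (s : ℂ) :
    Measurable (fun x : ℝ => (x : ℂ) ^ (-2 * s) * (f (cuspN k ^ (δ - 1) * x) : ℂ)) := by
  fun_prop

/-- local neighbourhoods -/
lemma cusp_nhd {a : ℝ} {s₀ : ℂ} (h : a < s₀.re) :
    {s : ℂ | ‖s‖ ≤ ‖s₀‖ + 1 ∧ a ≤ s.re} ∈ 𝓝 s₀ := by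
  have h1 : {s : ℂ | ‖s‖ < ‖s₀‖ + 1} ∈ 𝓝 s₀ :=
    (isOpen_lt continuous_norm continuous_const).mem_nhds (by simp)
  have h2 : {s : ℂ | a < s.re} ∈ 𝓝 s₀ :=
    (isOpen_lt continuous_const Complex.continuous_re).mem_nhds h
  filter_upwards [h1, h2] with s hs1 hs2 using ⟨le_of_lt hs1, le_of_lt hs2⟩

lemma cuspT_integrable {δ : ℝ} (hδ : 0 ≤ δ) {f : ℝ → ℝ} (hfm : Measurable f) {A : ℝ}
    (hf : ∀ u > 0, |f u| ≤ A * u) (J k : ℕ) {s : ℂ} (hs : 1 - J < s.re) :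
    IntegrableOn (fun x : ℝ => (x : ℂ) ^ (-2 * s) *
      cuspR J s (1 / (4 * (cuspN k ^ δ * x) ^ 2)) * (f (cuspN k ^ (δ - 1) * x) : ℂ))
      (Set.Ioi 1) := by
  obtain ⟨C, hC, hR⟩ := cuspR_bound J ‖s‖
  have hi : IntegrableOn (fun x : ℝ => C * A * cuspN k ^ (δ - 1 - 2 * δ * J) *
      x ^ (1 - 2 * s.re - 2 * J)) (Set.Ioi 1) :=
    (integrableOn_Ioi_rpow_of_lt (by linarith) one_pos).const_mul _
  refine Integrable.mono' hi (cuspT_meas hfm J k s).aestronglyMeasurable ?_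
  filter_upwards [ae_restrict_mem measurableSet_Ioi] with x hx
  exact cuspT_pt_bound hδ hf J hC hR k le_rfl le_rfl hx

lemma cuspT_diffOn {δ : ℝ} (hδ : 0 ≤ δ) (p : ℝ) {f : ℝ → ℝ} (hfm : Measurable f) {A : ℝ}
    (hf : ∀ u > 0, |f u| ≤ A * u) (J k : ℕ) :
    DifferentiableOn ℂ (cuspT δ p f J k) {s | 1 - J < s.re} := by
  unfold cuspT
  refine (cuspN_cpow_diff k p δ).differentiableOn.mul ?_
  refine cusp_holo_integral (isOpen_lt continuous_const Complex.continuous_re)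
    (fun s _ => (cuspT_meas hfm J k s).aestronglyMeasurable) ?_ ?_
  · filter_upwards [ae_restrict_mem measurableSet_Ioi] with x hx
    have hx1 : (1:ℝ) < x := hx
    have hx0 : (x:ℂ) ≠ 0 := Complex.ofReal_ne_zero.2 (by linarith)
    refine Differentiable.differentiableOn ?_
    refine Differentiable.mul_const (Differentiable.mul ?_ ?_) _
    · intro s
      exact DifferentiableAt.const_cpow (by fun_prop) (Or.inl hx0)
    · exact cuspR_differentiable J (by linarith [(cusp_y_mem hδ k hx1).2])
  · intro s₀ hs₀
    have hs₀' : 1 - (J:ℝ) < s₀.re := hs₀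
    obtain ⟨C, hC, hR⟩ := cuspR_bound J (‖s₀‖ + 1)
    set σ := (s₀.re + (1 - J)) / 2 with hσ
    refine ⟨_, cusp_nhd (a := σ) (by rw [hσ]; linarith), fun x => C * A *
      cuspN k ^ (δ - 1 - 2 * δ * J) * x ^ (1 - 2 * σ - 2 * J), ?_, ?_⟩
    · exact (integrableOn_Ioi_rpow_of_lt (by rw [hσ]; linarith) one_pos).const_mul _
    · filter_upwards [ae_restrict_mem measurableSet_Ioi] with x hx s hs
      exact cuspT_pt_bound hδ hf J hC hR k hs.1 hs.2 hx

lemma cuspT_bound {δ : ℝ} (hδ : 0 < δ) {p : ℝ} (hp : p ≤ 1) {f : ℝ → ℝ} {A : ℝ}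
    (hf : ∀ u > 0, |f u| ≤ A * u) (J : ℕ) (s₀ : ℂ) (hs₀ : 1 - (J:ℝ) < s₀.re) :
    ∃ V ∈ 𝓝 s₀, ∃ u : ℕ → ℝ, Summable u ∧ ∀ k, ∀ s ∈ V, ‖cuspT δ p f J k s‖ ≤ u k := by
  have hA : 0 ≤ A := by
    have := hf 1 one_pos
    have := abs_nonneg (f 1)
    linarith
  obtain ⟨C, hC, hR⟩ := cuspR_bound J (‖s₀‖ + 1)
  set σ := (s₀.re + (1 - J)) / 2 with hσ
  have hσ1 : 1 - J < σ := by rw [hσ]; linarith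
  set c := ∫ x in Set.Ioi (1:ℝ), x ^ (1 - 2 * σ - 2 * J) with hc
  refine ⟨_, cusp_nhd (a := σ) (by rw [hσ]; linarith),
    fun k => (C * A * c) * cuspN k ^ (-1 - 2 * δ * (σ + J - 1)), ?_, ?_⟩
  · refine (cuspN_summable ?_).mul_left _
    have : 0 < δ * (σ + J - 1) := mul_pos hδ (by linarith)
    linarith
  · intro k s hs
    have hi : IntegrableOn (fun x : ℝ => C * A * cuspN k ^ (δ - 1 - 2 * δ * J) *
      x ^ (1 - 2 * σ - 2 * J)) (Set.Ioi 1) :=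
      (integrableOn_Ioi_rpow_of_lt (by linarith) one_pos).const_mul _
    have h1 := norm_integral_le_of_norm_le hi (f := fun x : ℝ => (x : ℂ) ^ (-2 * s) *
      cuspR J s (1 / (4 * (cuspN k ^ δ * x) ^ 2)) * (f (cuspN k ^ (δ - 1) * x) : ℂ)) (by
        filter_upwards [ae_restrict_mem measurableSet_Ioi] with x hx
        exact cuspT_pt_bound hδ.le hf J hC hR k hs.1 hs.2 hx)
    rw [integral_const_mul, ← hc] at h1
    have hc0 : 0 ≤ c := setIntegral_nonneg measurableSet_Ioi fun x hx => by
      have : (0:ℝ) < x := lt_trans one_pos hx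
      positivity
    unfold cuspT
    rw [norm_mul, cuspN_cpow_norm, cusp_re1]
    have hN := cuspN_pos k
    calc _ ≤ cuspN k ^ (p + δ - 1 - 2 * δ * s.re) *
          (C * A * cuspN k ^ (δ - 1 - 2 * δ * J) * c) := by gcongr
      _ = C * A * c * (cuspN k ^ (p + δ - 1 - 2 * δ * s.re) * cuspN k ^ (δ - 1 - 2 * δ * J)) := by
          ring
      _ = C * A * c * cuspN k ^ (p + δ - 1 - 2 * δ * s.re + (δ - 1 - 2 * δ * J)) := by
          rw [Real.rpow_add hN]
      _ ≤ _ := by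
          refine mul_le_mul_of_nonneg_left (Real.rpow_le_rpow_of_exponent_le (cuspN_one_le k) ?_)
            (by positivity)
          have := mul_le_mul_of_nonneg_left hs.2 hδ.le
          nlinarith

/-! ### The integrals `cuspI` -/

lemma cuspI_pt_bound {δ : ℝ} {f : ℝ → ℝ} {A : ℝ} (hf : ∀ u > 0, |f u| ≤ A * √u)
    (k : ℕ) {s : ℂ} {σ : ℝ} (hσ : σ ≤ s.re) {x : ℝ} (hx : 1 < x) :
    ‖(x : ℂ) ^ (-2 * s) * (f (cuspN k ^ (δ - 1) * x) : ℂ)‖ ≤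
      A * √(cuspN k ^ (δ - 1)) * x ^ (1/2 - 2 * σ) := by
  have hx0 : 0 < x := by linarith
  have hN := cuspN_pos k
  have h1 : ‖(x : ℂ) ^ (-2 * s)‖ ≤ x ^ (-2 * σ) := by
    rw [Complex.norm_cpow_eq_rpow_re_of_pos hx0]
    apply Real.rpow_le_rpow_of_exponent_le hx.le
    simp; linarith
  have h4 : ‖(f (cuspN k ^ (δ - 1) * x) : ℂ)‖ ≤ A * (√(cuspN k ^ (δ - 1)) * √x) := by
    rw [Complex.norm_real, ← Real.sqrt_mul (by positivity)]; exact hf _ (by positivity)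
  rw [norm_mul]
  calc _ ≤ x ^ (-2 * σ) * (A * (√(cuspN k ^ (δ - 1)) * √x)) := by gcongr
    _ = A * √(cuspN k ^ (δ - 1)) * (x ^ (-2 * σ) * √x) := by ring
    _ = _ := by
      rw [Real.sqrt_eq_rpow x, ← Real.rpow_add hx0]; ring_nf

lemma cuspI_integrable {δ : ℝ} {f : ℝ → ℝ} (hfm : Measurable f) {A : ℝ}
    (hf : ∀ u > 0, |f u| ≤ A * √u) (k : ℕ) {s : ℂ} (hs : 3/4 < s.re) :
    IntegrableOn (fun x : ℝ => (x : ℂ) ^ (-2 * s) * (f (cuspN k ^ (δ - 1) * x) : ℂ))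
      (Set.Ioi 1) := by
  have hi : IntegrableOn (fun x : ℝ => A * √(cuspN k ^ (δ - 1)) * x ^ (1/2 - 2 * s.re))
      (Set.Ioi 1) := (integrableOn_Ioi_rpow_of_lt (by linarith) one_pos).const_mul _
  refine Integrable.mono' hi (cuspI_meas hfm k s).aestronglyMeasurable ?_
  filter_upwards [ae_restrict_mem measurableSet_Ioi] with x hx
  exact cuspI_pt_bound hf k le_rfl hx

lemma cuspI_diffOn {δ : ℝ} (p : ℝ) {f : ℝ → ℝ} (hfm : Measurable f) {A : ℝ}
    (hf : ∀ u > 0, |f u| ≤ A * √u) (k : ℕ) :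
    DifferentiableOn ℂ (cuspI δ p f k) {s | 3/4 < s.re} := by
  unfold cuspI
  refine (cuspN_cpow_diff k p δ).differentiableOn.mul ?_
  refine cusp_holo_integral (isOpen_lt continuous_const Complex.continuous_re)
    (fun s _ => (cuspI_meas hfm k s).aestronglyMeasurable) ?_ ?_
  · filter_upwards [ae_restrict_mem measurableSet_Ioi] with x hx
    have hx1 : (1:ℝ) < x := hx
    have hx0 : (x:ℂ) ≠ 0 := Complex.ofReal_ne_zero.2 (by linarith)
    refine Differentiable.differentiableOn ?_
    refine Differentiable.mul_const ?_ _
    intro s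
    exact DifferentiableAt.const_cpow (by fun_prop) (Or.inl hx0)
  · intro s₀ hs₀
    have hs₀' : 3/4 < s₀.re := hs₀
    set σ := (s₀.re + 3/4) / 2 with hσ
    refine ⟨_, cusp_nhd (a := σ) (by rw [hσ]; linarith),
      fun x => A * √(cuspN k ^ (δ - 1)) * x ^ (1/2 - 2 * σ), ?_, ?_⟩
    · exact (integrableOn_Ioi_rpow_of_lt (by rw [hσ]; linarith) one_pos).const_mul _
    · filter_upwards [ae_restrict_mem measurableSet_Ioi] with x hx s hs
      exact cuspI_pt_bound hf k hs.2 hx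

/-! ### The integrals `cuspP` -/

lemma cusp_e_le {δ : ℝ} (hδ : δ ≤ 1) (k : ℕ) : cuspN k ^ (δ - 1) ≤ 1 :=
  Real.rpow_le_one_of_one_le_of_nonpos (cuspN_one_le k) (by linarith)

lemma cuspP_pt_bound {δ : ℝ} (hδ : δ ≤ 1) {g : ℝ → ℝ} {C : ℝ} {N : ℕ}
    (hg : ∀ u, 0 < u → u ≤ 1 → |g u| ≤ C * u ^ (N + 1))
    (k : ℕ) {s : ℂ} {σ : ℝ} (hσ : s.re ≤ σ) {x : ℝ} (hx : x ∈ Set.Ioc (0:ℝ) 1) :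
    ‖(x : ℂ) ^ (-2 * s) * (g (cuspN k ^ (δ - 1) * x) : ℂ)‖ ≤
      C * cuspN k ^ ((δ - 1) * (N + 1)) * x ^ ((N:ℝ) + 1 - 2 * σ) := by
  have hx0 : 0 < x := hx.1
  have hN := cuspN_pos k
  have h1 : ‖(x : ℂ) ^ (-2 * s)‖ ≤ x ^ (-2 * σ) := by
    rw [Complex.norm_cpow_eq_rpow_re_of_pos hx0]
    apply Real.rpow_le_rpow_of_exponent_ge hx0 hx.2
    simp; linarith
  have h4 : ‖(g (cuspN k ^ (δ - 1) * x) : ℂ)‖ ≤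
      C * (cuspN k ^ ((δ - 1) * (N + 1)) * x ^ ((N:ℝ) + 1)) := by
    rw [Complex.norm_real]
    refine (hg _ (by positivity) ?_).trans (le_of_eq ?_)
    · exact mul_le_one₀ (cusp_e_le hδ k) hx0.le hx.2
    · rw [mul_pow, Real.rpow_mul hN.le]
      norm_cast
  rw [norm_mul]
  calc _ ≤ x ^ (-2 * σ) * (C * (cuspN k ^ ((δ - 1) * (N + 1)) * x ^ ((N:ℝ) + 1))) := by gcongr
    _ = C * cuspN k ^ ((δ - 1) * (N + 1)) * (x ^ (-2 * σ) * x ^ ((N:ℝ) + 1)) := by ring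
    _ = _ := by
      rw [← Real.rpow_add hx0]; ring_nf

lemma cusp_Ioc_rpow {e : ℝ} (he : -1 < e) :
    IntegrableOn (fun x : ℝ => x ^ e) (Set.Ioc 0 1) := by
  have := intervalIntegral.intervalIntegrable_rpow' (a := 0) (b := 1) he
  rwa [intervalIntegrable_iff_integrableOn_Ioc_of_le zero_le_one] at this

lemma cuspP_integrable {δ : ℝ} (hδ : δ ≤ 1) {g : ℝ → ℝ} (hgm : Measurable g) {C : ℝ} {N : ℕ}
    (hg : ∀ u, 0 < u → u ≤ 1 → |g u| ≤ C * u ^ (N + 1)) (k : ℕ) {s : ℂ} (hs : s.re < N / 2 + 1) :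
    IntegrableOn (fun x : ℝ => (x : ℂ) ^ (-2 * s) * (g (cuspN k ^ (δ - 1) * x) : ℂ))
      (Set.Ioc 0 1) := by
  have hi : IntegrableOn (fun x : ℝ => C * cuspN k ^ ((δ - 1) * (N + 1)) *
      x ^ ((N:ℝ) + 1 - 2 * s.re)) (Set.Ioc 0 1) :=
    (cusp_Ioc_rpow (by linarith)).const_mul _
  refine Integrable.mono' hi (cuspI_meas hgm k s).aestronglyMeasurable ?_
  filter_upwards [ae_restrict_mem measurableSet_Ioc] with x hx
  exact cuspP_pt_bound hδ hg k le_rfl hx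

lemma cusp_nhd2 {a b : ℝ} {s₀ : ℂ} (h : a < s₀.re) (h' : s₀.re < b) :
    {s : ℂ | a ≤ s.re ∧ s.re ≤ b} ∈ 𝓝 s₀ := by
  have h1 : {s : ℂ | s.re < b} ∈ 𝓝 s₀ :=
    (isOpen_lt Complex.continuous_re continuous_const).mem_nhds h'
  have h2 : {s : ℂ | a < s.re} ∈ 𝓝 s₀ :=
    (isOpen_lt continuous_const Complex.continuous_re).mem_nhds h
  filter_upwards [h1, h2] with s hs1 hs2 using ⟨le_of_lt hs2, le_of_lt hs1⟩

lemma cuspP_diffOn {δ : ℝ} (hδ : δ ≤ 1) (p : ℝ) {g : ℝ → ℝ} (hgm : Measurable g) {C : ℝ} {N : ℕ}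
    (hg : ∀ u, 0 < u → u ≤ 1 → |g u| ≤ C * u ^ (N + 1)) (k : ℕ) :
    DifferentiableOn ℂ (cuspP δ p g k) {s | s.re < N / 2 + 1} := by
  unfold cuspP
  refine (cuspN_cpow_diff k p δ).differentiableOn.mul ?_
  refine cusp_holo_integral (isOpen_lt Complex.continuous_re continuous_const)
    (fun s _ => (cuspI_meas hgm k s).aestronglyMeasurable) ?_ ?_
  · filter_upwards [ae_restrict_mem measurableSet_Ioc] with x hx
    have hx0 : (x:ℂ) ≠ 0 := Complex.ofReal_ne_zero.2 hx.1.ne'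
    refine Differentiable.differentiableOn ?_
    refine Differentiable.mul_const ?_ _
    intro s
    exact DifferentiableAt.const_cpow (by fun_prop) (Or.inl hx0)
  · intro s₀ hs₀
    have hs₀' : s₀.re < N / 2 + 1 := hs₀
    set σ := (s₀.re + (N / 2 + 1)) / 2 with hσ
    refine ⟨_, cusp_nhd2 (a := s₀.re - 1) (b := σ) (by linarith) (by rw [hσ]; linarith),
      fun x => C * cuspN k ^ ((δ - 1) * (N + 1)) * x ^ ((N:ℝ) + 1 - 2 * σ), ?_, ?_⟩
    · exact (cusp_Ioc_rpow (by rw [hσ]; linarith)).const_mul _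
    · filter_upwards [ae_restrict_mem measurableSet_Ioc] with x hx s hs
      exact cuspP_pt_bound hδ hg k hs.2 hx

lemma cuspP_norm_le {δ : ℝ} (hδ0 : 0 ≤ δ) (hδ : δ ≤ 1) (p : ℝ) {g : ℝ → ℝ} {C : ℝ} {N : ℕ}
    (hg : ∀ u, 0 < u → u ≤ 1 → |g u| ≤ C * u ^ (N + 1)) (k : ℕ) {s : ℂ} {σ₀ σ₁ : ℝ}
    (h0 : σ₀ ≤ s.re) (h1 : s.re ≤ σ₁) (h2 : σ₁ < N / 2 + 1) :
    ‖cuspP δ p g k s‖ ≤ C * (∫ x in Set.Ioc (0:ℝ) 1, x ^ ((N:ℝ) + 1 - 2 * σ₁)) *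
      cuspN k ^ (p - 2 * δ * σ₀ - (1 - δ) * (N + 2)) := by
  have hC : 0 ≤ C := by
    have h := hg 1 one_pos le_rfl
    rw [one_pow, mul_one] at h
    exact (abs_nonneg _).trans h
  have hi : IntegrableOn (fun x : ℝ => C * cuspN k ^ ((δ - 1) * (N + 1)) *
      x ^ ((N:ℝ) + 1 - 2 * σ₁)) (Set.Ioc 0 1) :=
    (cusp_Ioc_rpow (by linarith)).const_mul _
  have hh := norm_integral_le_of_norm_le hi (f := fun x : ℝ => (x : ℂ) ^ (-2 * s) *
      (g (cuspN k ^ (δ - 1) * x) : ℂ)) (by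
        filter_upwards [ae_restrict_mem measurableSet_Ioc] with x hx
        exact cuspP_pt_bound hδ hg k h1 hx)
  rw [integral_const_mul] at hh
  set c := ∫ x in Set.Ioc (0:ℝ) 1, x ^ ((N:ℝ) + 1 - 2 * σ₁) with hc
  have hc0 : 0 ≤ c := setIntegral_nonneg measurableSet_Ioc fun x hx => by
    have : (0:ℝ) < x := hx.1
    positivity
  unfold cuspP
  rw [norm_mul, cuspN_cpow_norm, cusp_re1]
  have hN := cuspN_pos k
  calc _ ≤ cuspN k ^ (p + δ - 1 - 2 * δ * s.re) *
        (C * cuspN k ^ ((δ - 1) * (N + 1)) * c) := by gcongr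
    _ = C * c * (cuspN k ^ (p + δ - 1 - 2 * δ * s.re) * cuspN k ^ ((δ - 1) * (N + 1))) := by
        ring
    _ = C * c * cuspN k ^ (p + δ - 1 - 2 * δ * s.re + (δ - 1) * (N + 1)) := by
        rw [Real.rpow_add hN]
    _ ≤ _ := by
        refine mul_le_mul_of_nonneg_left (Real.rpow_le_rpow_of_exponent_le (cuspN_one_le k) ?_)
          (by positivity)
        have := mul_le_mul_of_nonneg_left h0 hδ0
        nlinarith

lemma cuspP_bound {δ : ℝ} (hδ0 : 0 < δ) (hδ : δ ≤ 1) (p : ℝ) {g : ℝ → ℝ} {C : ℝ} {N : ℕ}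
    (hg : ∀ u, 0 < u → u ≤ 1 → |g u| ≤ C * u ^ (N + 1)) (s₀ : ℂ)
    (h1 : s₀.re < N / 2 + 1) (h2 : p - 2 * δ * s₀.re - (1 - δ) * (N + 2) < -1) :
    ∃ V ∈ 𝓝 s₀, ∃ u : ℕ → ℝ, Summable u ∧ ∀ k, ∀ s ∈ V, ‖cuspP δ p g k s‖ ≤ u k := by
  set σ₁ := (s₀.re + (N / 2 + 1)) / 2 with hσ1
  set η := (-1 - (p - 2 * δ * s₀.re - (1 - δ) * (N + 2))) / (4 * δ) with hη
  have hη0 : 0 < η := by rw [hη]; apply div_pos <;> linarith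
  have hηe : δ * η * 4 = (-1 - (p - 2 * δ * s₀.re - (1 - δ) * (N + 2))) := by
    rw [hη]; field_simp
  refine ⟨_, cusp_nhd2 (a := s₀.re - η) (b := σ₁) (by linarith) (by rw [hσ1]; linarith),
    fun k => C * (∫ x in Set.Ioc (0:ℝ) 1, x ^ ((N:ℝ) + 1 - 2 * σ₁)) *
      cuspN k ^ (p - 2 * δ * (s₀.re - η) - (1 - δ) * (N + 2)), ?_, ?_⟩
  · refine (cuspN_summable ?_).mul_left _
    nlinarith
  · intro k s hs
    exact cuspP_norm_le hδ0.le hδ p hg k hs.1 hs.2 (by rw [hσ1]; linarith)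

/-- analytic data attached to one of the densities -/
structure CuspData (f : ℝ → ℝ) (M : ℂ → ℂ) (γ : ℕ → ℝ) : Prop where
  meas : Measurable f
  bd : ∃ A, (∀ u > 0, |f u| ≤ A * u) ∧ ∀ u > 0, |f u| ≤ A * √u
  mero : ∀ t, MeromorphicAt M t
  mellin : ∀ t : ℂ, 3/4 < t.re → t.re < 1 → ∫ u in Set.Ioi (0:ℝ), (u:ℂ) ^ (-2 * t) * (f u : ℂ) = M t
  an : ∀ t : ℂ, 3/4 < t.re → (∀ m : ℕ, t ≠ m + 1) → DifferentiableAt ℂ M t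
  taylor : ∀ N : ℕ, ∃ C, ∀ u, 0 < u → u ≤ 1 →
    |f u - ∑ m ∈ Finset.range N, γ m * u ^ (m + 1)| ≤ C * u ^ (N + 1)

/-- Taylor remainder of the density -/
noncomputable def cuspG (f : ℝ → ℝ) (γ : ℕ → ℝ) (N : ℕ) (u : ℝ) : ℝ :=
  f u - ∑ m ∈ Finset.range N, γ m * u ^ (m + 1)

lemma cuspG_meas {f : ℝ → ℝ} (hf : Measurable f) (γ : ℕ → ℝ) (N : ℕ) : Measurable (cuspG f γ N) := by
  unfold cuspG
  fun_prop

/-! ### Expansion of `cuspT 0` -/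

lemma cuspT_expand {δ : ℝ} (hδ : 0 ≤ δ) (p : ℝ) {f : ℝ → ℝ} (hfm : Measurable f) {A : ℝ}
    (hf : ∀ u > 0, |f u| ≤ A * u) (hf2 : ∀ u > 0, |f u| ≤ A * √u) (J k : ℕ) {s : ℂ} (hs : 1 < s.re) :
    cuspT δ p f 0 k s = (∑ j ∈ Finset.range J, cuspA j s * (1/4) ^ j * cuspI δ p f k (s + j)) +
      cuspT δ p f J k s := by
  have hN := cuspN_pos k
  have e1 : ∀ x ∈ Set.Ioi (1:ℝ), (x : ℂ) ^ (-2 * s) * cuspR 0 s (1 / (4 * (cuspN k ^ δ * x) ^ 2)) *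
      (f (cuspN k ^ (δ - 1) * x) : ℂ) = (∑ j ∈ Finset.range J, (cuspA j s * (1/4) ^ j *
        (cuspN k : ℂ) ^ (-2 * δ * j : ℂ)) * ((x : ℂ) ^ (-2 * (s + j)) * (f (cuspN k ^ (δ - 1) * x) : ℂ))) +
      (x : ℂ) ^ (-2 * s) * cuspR J s (1 / (4 * (cuspN k ^ δ * x) ^ 2)) *
      (f (cuspN k ^ (δ - 1) * x) : ℂ) := by
    intro x hx
    have hx0 : 0 < x := lt_trans one_pos hx
    have hxc : (x:ℂ) ≠ 0 := Complex.ofReal_ne_zero.2 hx0.ne'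
    have e2 : ∀ j : ℕ, ((1 / (4 * (cuspN k ^ δ * x) ^ 2) : ℝ) : ℂ) ^ j =
        (1/4) ^ j * (cuspN k : ℂ) ^ (-2 * δ * j : ℂ) * (x:ℂ) ^ (-2 * (j:ℂ)) := by
      intro j
      have a1 : (cuspN k : ℂ) ^ (-2 * δ * j : ℂ) = ((((cuspN k ^ δ)^2)⁻¹ ^ j : ℝ) : ℂ) := by
        rw [show (-2 * δ * j : ℂ) = ((-(2 * j * δ) : ℝ) : ℂ) by push_cast; ring,
          ← Complex.ofReal_cpow hN.le]
        congr 1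
        rw [Real.rpow_neg hN.le, inv_pow, ← pow_mul, ← Real.rpow_natCast, ← Real.rpow_mul hN.le]
        push_cast; ring_nf
      have a2 : (x : ℂ) ^ (-2 * (j:ℂ)) = ((((x)^2)⁻¹ ^ j : ℝ) : ℂ) := by
        rw [show (-2 * (j:ℂ)) = -((2 * j : ℕ) : ℂ) by push_cast; ring, Complex.cpow_neg,
          Complex.cpow_natCast]
        push_cast
        rw [inv_pow, pow_mul]
      rw [a1, a2]
      push_cast
      rw [← mul_pow, ← mul_pow]
      congr 1
      rw [mul_pow]
      field_simp
    have e3 : cuspR 0 s (1 / (4 * (cuspN k ^ δ * x) ^ 2)) =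
        (∑ j ∈ Finset.range J, cuspA j s * ((1/4) ^ j * (cuspN k : ℂ) ^ (-2 * δ * j : ℂ) *
          (x:ℂ) ^ (-2 * (j:ℂ)))) + cuspR J s (1 / (4 * (cuspN k ^ δ * x) ^ 2)) := by
      simp only [cuspR, Finset.range_zero, Finset.sum_empty, e2]
      ring
    rw [e3, mul_add, add_mul, Finset.mul_sum, Finset.sum_mul]
    congr 1
    refine Finset.sum_congr rfl fun j _ => ?_
    rw [mul_add, Complex.cpow_add _ _ hxc]
    ring
  have hintg : ∀ j ∈ Finset.range J, Integrable (fun x : ℝ => (cuspA j s * (1/4) ^ j *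
        (cuspN k : ℂ) ^ (-2 * δ * j : ℂ)) * ((x : ℂ) ^ (-2 * (s + j)) *
        (f (cuspN k ^ (δ - 1) * x) : ℂ))) (volume.restrict (Set.Ioi 1)) := fun j _ =>
    (cuspI_integrable hfm hf2 k (by
      simp; linarith [(Nat.cast_nonneg j : (0:ℝ) ≤ j)])).const_mul _
  have hJ := cuspT_integrable hδ hfm hf J k (s := s)
    (by linarith [(Nat.cast_nonneg J : (0:ℝ) ≤ J)])
  unfold cuspT cuspI
  rw [setIntegral_congr_fun measurableSet_Ioi e1, integral_add (integrable_finsetSum _ hintg) hJ,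
    integral_finsetSum _ hintg, mul_add, Finset.mul_sum]
  congr 1
  refine Finset.sum_congr rfl fun j _ => ?_
  rw [integral_const_mul, show ((p : ℂ) + δ - 1 - 2 * δ * (s + j)) =
    ((p : ℂ) + δ - 1 - 2 * δ * s) + (-2 * δ * j) by ring, Complex.cpow_add _ _ (cuspN_ne k)]
  ring

/-! ### The identity for `cuspI` -/

lemma cusp_Ioc_cpow {e : ℂ} (he : -1 < e.re) : ∫ x in Set.Ioc (0:ℝ) 1, (x:ℂ) ^ e = 1 / (e + 1) := by
  rw [← intervalIntegral.integral_of_le zero_le_one, integral_cpow (Or.inl he)]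
  have : e + 1 ≠ 0 := by
    intro h
    have := congrArg Complex.re h
    simp at this
    linarith
  simp [Complex.zero_cpow this]

noncomputable def cuspK (δ p : ℝ) (f : ℝ → ℝ) (M : ℂ → ℂ) (γ : ℕ → ℝ) (N k : ℕ) (t : ℂ) : ℂ :=
  (cuspN k : ℂ) ^ ((p:ℂ) - 2 * t) * M t - (∑ m ∈ Finset.range N, (γ m : ℂ) *
    (cuspN k : ℂ) ^ ((p:ℂ) - 2 * δ * t - (1 - δ) * (m + 2)) / (m + 2 - 2 * t)) -
    cuspP δ p (cuspG f γ N) k t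

lemma cuspN_rpow_cpow (k : ℕ) (e : ℝ) (z : ℂ) :
    ((cuspN k ^ e : ℝ) : ℂ) ^ z = (cuspN k : ℂ) ^ (e * z) := by
  have hN := cuspN_pos k
  rw [Complex.cpow_def_of_ne_zero (Complex.ofReal_ne_zero.2 (by positivity)),
    Complex.cpow_def_of_ne_zero (cuspN_ne k), ← Complex.ofReal_log (by positivity),
    ← Complex.ofReal_log hN.le, Real.log_rpow hN]
  push_cast
  ring_nf

lemma cuspI_direct {δ : ℝ} (hδ : δ ≤ 1) (p : ℝ) {f : ℝ → ℝ} {M : ℂ → ℂ} {γ : ℕ → ℝ}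
    (h : CuspData f M γ) (N k : ℕ) {t : ℂ} (ht : 3/4 < t.re) (ht1 : t.re < 1) :
    cuspI δ p f k t = cuspK δ p f M γ N k t := by
  obtain ⟨A, hA1, hA2⟩ := h.bd
  obtain ⟨C, hC⟩ := h.taylor N
  have hN := cuspN_pos k
  set ε := cuspN k ^ (δ - 1) with hε
  have hε0 : 0 < ε := by positivity
  have hεc : (ε:ℂ) ≠ 0 := Complex.ofReal_ne_zero.2 hε0.ne'
  have hI1 := cuspI_integrable (δ := δ) h.meas hA2 k ht
  have hf0 : ∀ u, 0 < u → u ≤ 1 → |f u| ≤ A * u ^ (0 + 1) := by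
    intro u hu _; simpa using hA1 u hu
  have hI0 := cuspP_integrable (δ := δ) hδ h.meas hf0 k (s := t) (by simp; linarith)
  have hP := cuspP_integrable (δ := δ) hδ (cuspG_meas h.meas γ N) hC k (s := t)
    (by linarith [(Nat.cast_nonneg N : (0:ℝ) ≤ N)])
  -- scaling
  have hscale : ∫ x in Set.Ioi (0:ℝ), (x:ℂ) ^ (-2 * t) * (f (ε * x) : ℂ) =
      (ε:ℂ) ^ (2 * t - 1) * M t := by
    rw [← h.mellin t ht ht1]
    have e1 : ∀ x ∈ Set.Ioi (0:ℝ), (x:ℂ) ^ (-2 * t) * (f (ε * x) : ℂ) = (ε:ℂ) ^ (2 * t) *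
        ((fun u : ℝ => (u:ℂ) ^ (-2 * t) * (f u : ℂ)) (ε * x)) := by
      intro x hx
      have hx0 : 0 < x := hx
      simp only
      rw [Complex.ofReal_mul, Complex.mul_cpow_ofReal_nonneg hε0.le hx0.le,
        ← mul_assoc, ← mul_assoc, ← Complex.cpow_add _ _ hεc]
      simp
    rw [setIntegral_congr_fun measurableSet_Ioi e1, integral_const_mul,
      integral_comp_mul_left_Ioi (fun u : ℝ => (u:ℂ) ^ (-2 * t) * (f u : ℂ)) 0 hε0, mul_zero, Complex.cpow_sub _ _ hεc, Complex.cpow_one,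
      Complex.real_smul]
    push_cast
    ring
  -- splitting
  have hsplit : ∫ x in Set.Ioi (0:ℝ), (x:ℂ) ^ (-2 * t) * (f (ε * x) : ℂ) =
      (∫ x in Set.Ioc (0:ℝ) 1, (x:ℂ) ^ (-2 * t) * (f (ε * x) : ℂ)) +
      ∫ x in Set.Ioi (1:ℝ), (x:ℂ) ^ (-2 * t) * (f (ε * x) : ℂ) := by
    rw [← setIntegral_union (Set.Ioc_disjoint_Ioi le_rfl) measurableSet_Ioi hI0 hI1,
      Set.Ioc_union_Ioi_eq_Ioi zero_le_one]
  -- the part near zero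
  have hre : ∀ m : ℕ, -1 < (-2 * t + (m + 1)).re := by
    intro m
    simp; linarith [(Nat.cast_nonneg m : (0:ℝ) ≤ m)]
  have hmi : ∀ m ∈ Finset.range N, Integrable (fun x : ℝ => ((γ m : ℂ) * (ε:ℂ) ^ (m + 1)) *
      (x:ℂ) ^ (-2 * t + (m + 1))) (volume.restrict (Set.Ioc 0 1)) := by
    intro m _
    refine Integrable.const_mul ?_ _
    have := intervalIntegral.intervalIntegrable_cpow' (a := 0) (b := 1) (hre m)
    rwa [intervalIntegrable_iff_integrableOn_Ioc_of_le zero_le_one] at this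
  have hnear : ∫ x in Set.Ioc (0:ℝ) 1, (x:ℂ) ^ (-2 * t) * (f (ε * x) : ℂ) =
      (∑ m ∈ Finset.range N, ((γ m : ℂ) * (ε:ℂ) ^ (m + 1)) / (m + 2 - 2 * t)) +
      ∫ x in Set.Ioc (0:ℝ) 1, (x:ℂ) ^ (-2 * t) * (cuspG f γ N (ε * x) : ℂ) := by
    have e1 : ∀ x ∈ Set.Ioc (0:ℝ) 1, (x:ℂ) ^ (-2 * t) * (f (ε * x) : ℂ) =
        (∑ m ∈ Finset.range N, ((γ m : ℂ) * (ε:ℂ) ^ (m + 1)) * (x:ℂ) ^ (-2 * t + (m + 1))) +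
        (x:ℂ) ^ (-2 * t) * (cuspG f γ N (ε * x) : ℂ) := by
      intro x hx
      have hxc : (x:ℂ) ≠ 0 := Complex.ofReal_ne_zero.2 hx.1.ne'
      unfold cuspG
      push_cast
      rw [mul_sub, Finset.mul_sum]
      have : ∀ m ∈ Finset.range N, ((γ m : ℂ) * (ε:ℂ) ^ (m + 1)) * (x:ℂ) ^ (-2 * t + (m + 1)) =
          (x:ℂ) ^ (-2 * t) * ((γ m : ℂ) * ((ε:ℂ) * x) ^ (m + 1)) := by
        intro m _
        rw [Complex.cpow_add _ _ hxc, mul_pow,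
          show ((m:ℂ) + 1) = ((m + 1 : ℕ) : ℂ) by push_cast; ring, Complex.cpow_natCast]
        ring
      rw [Finset.sum_congr rfl this]
      ring
    rw [setIntegral_congr_fun measurableSet_Ioc e1, integral_add (integrable_finsetSum _ hmi) hP,
      integral_finsetSum _ hmi]
    congr 1
    refine Finset.sum_congr rfl fun m _ => ?_
    rw [integral_const_mul, cusp_Ioc_cpow (hre m)]
    rw [mul_one_div]
    congr 1
    ring
  have hfin : ∫ x in Set.Ioi (1:ℝ), (x:ℂ) ^ (-2 * t) * (f (ε * x) : ℂ) =
      (ε:ℂ) ^ (2 * t - 1) * M t - (∑ m ∈ Finset.range N, ((γ m : ℂ) * (ε:ℂ) ^ (m + 1)) /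
      (m + 2 - 2 * t)) - ∫ x in Set.Ioc (0:ℝ) 1, (x:ℂ) ^ (-2 * t) * (cuspG f γ N (ε * x) : ℂ) := by
    rw [← hscale, hsplit, hnear]; ring
  unfold cuspI cuspK cuspP
  rw [← hε, hfin, mul_sub, mul_sub]
  congr 2
  · rw [← mul_assoc, hε, cuspN_rpow_cpow, ← Complex.cpow_add _ _ (cuspN_ne k)]
    congr 2
    push_cast; ring
  · rw [Finset.mul_sum]
    refine Finset.sum_congr rfl fun m _ => ?_
    have : (ε:ℂ) ^ (m + 1) = (cuspN k : ℂ) ^ ((δ - 1) * (m + 1) : ℂ) := by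
      rw [← Complex.cpow_natCast, hε, cuspN_rpow_cpow]
      push_cast; ring_nf
    rw [this, show ((p:ℂ) - 2 * δ * t - (1 - δ) * (m + 2)) = ((p : ℂ) + δ - 1 - 2 * δ * t) +
      (δ - 1) * (m + 1) by ring, Complex.cpow_add _ _ (cuspN_ne k)]
    ring

lemma cuspN_cpow_diff' (k : ℕ) (a b : ℂ) :
    Differentiable ℂ (fun s : ℂ => (cuspN k : ℂ) ^ (a - b * s)) := by
  intro s
  exact DifferentiableAt.const_cpow (by fun_prop) (Or.inl (cuspN_ne k))

lemma cuspP_diffOn' {δ : ℝ} (hδ : δ ≤ 1) (p : ℝ) {f : ℝ → ℝ} {M : ℂ → ℂ} {γ : ℕ → ℝ}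
    (h : CuspData f M γ) (N k : ℕ) :
    DifferentiableOn ℂ (cuspP δ p (cuspG f γ N) k) {s | s.re < N / 2 + 1} := by
  obtain ⟨C, hC⟩ := h.taylor N
  exact cuspP_diffOn hδ p (cuspG_meas h.meas γ N) hC k

lemma cusp_strip_open (b : ℝ) : IsOpen {s : ℂ | s.re < b} :=
  isOpen_lt Complex.continuous_re continuous_const
lemma cusp_strip_open' (b : ℝ) : IsOpen {s : ℂ | b < s.re} :=
  isOpen_lt continuous_const Complex.continuous_re

lemma cuspK_mero {δ : ℝ} (hδ : δ ≤ 1) (p : ℝ) {f : ℝ → ℝ} {M : ℂ → ℂ} {γ : ℕ → ℝ}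
    (h : CuspData f M γ) (N k : ℕ) {t : ℂ} (ht : t.re < N / 2 + 1) :
    MeromorphicAt (cuspK δ p f M γ N k) t := by
  unfold cuspK
  refine MeromorphicAt.sub (MeromorphicAt.sub (MeromorphicAt.mul ?_ (h.mero t)) ?_) ?_
  · exact ((cuspN_cpow_diff' k p 2).analyticAt t).meromorphicAt
  · refine MeromorphicAt.fun_sum fun m _ => ?_
    refine MeromorphicAt.div (MeromorphicAt.mul (MeromorphicAt.const _ _) ?_) ?_
    · have : (fun s : ℂ => (cuspN k : ℂ) ^ ((p:ℂ) - 2 * δ * s - (1 - δ) * (m + 2))) =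
        fun s : ℂ => (cuspN k : ℂ) ^ (((p:ℂ) - (1 - δ) * (m + 2)) - (2 * δ) * s) := by
        ext s; ring_nf
      rw [this]
      exact ((cuspN_cpow_diff' k _ _).analyticAt t).meromorphicAt
    · exact AnalyticAt.meromorphicAt (by fun_prop)
  · exact ((cuspP_diffOn' hδ p h N k).analyticAt ((cusp_strip_open _).mem_nhds ht)).meromorphicAt

lemma cuspK_cont {δ : ℝ} (hδ : δ ≤ 1) (p : ℝ) {f : ℝ → ℝ} {M : ℂ → ℂ} {γ : ℕ → ℝ}
    (h : CuspData f M γ) (N k : ℕ) {t : ℂ} (ht0 : 3/4 < t.re) (ht : t.re < N / 2 + 1)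
    (hp : ∀ m : ℕ, t ≠ m + 1) (hp2 : ∀ m : ℕ, (m:ℂ) + 2 - 2 * t ≠ 0) :
    ContinuousAt (cuspK δ p f M γ N k) t := by
  have hc : ∀ z : ℂ → ℂ, ContinuousAt z t → ContinuousAt (fun s => (cuspN k : ℂ) ^ (z s)) t :=
    fun z hz => hz.const_cpow (Or.inl (cuspN_ne k))
  unfold cuspK
  refine ContinuousAt.sub (ContinuousAt.sub (ContinuousAt.mul ?_ ?_) ?_) ?_
  · exact hc _ (by fun_prop)
  · exact (h.an t ht0 hp).continuousAt
  · refine tendsto_finsetSum _ fun m _ => ?_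
    refine ContinuousAt.div (ContinuousAt.mul continuousAt_const (hc _ (by fun_prop))) (by fun_prop) (hp2 m)
  · exact ((cuspP_diffOn' hδ p h N k).differentiableAt ((cusp_strip_open _).mem_nhds ht)).continuousAt

lemma cuspI_eq {δ : ℝ} (hδ : δ ≤ 1) (p : ℝ) {f : ℝ → ℝ} {M : ℂ → ℂ} {γ : ℕ → ℝ}
    (h : CuspData f M γ) (N k : ℕ) {t : ℂ} (ht0 : 3/4 < t.re) (ht : t.re < N / 2 + 1)
    (hp : ∀ m : ℕ, t ≠ m + 1) (hp2 : ∀ m : ℕ, (m:ℂ) + 2 - 2 * t ≠ 0) :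
    cuspI δ p f k t = cuspK δ p f M γ N k t := by
  obtain ⟨A, hA1, hA2⟩ := h.bd
  have hd := cuspI_diffOn (δ := δ) p h.meas hA2 k
  have key : cuspI δ p f k =ᶠ[𝓝[≠] t] cuspK δ p f M γ N k := by
    refine cusp_mero_identity (U := {s | 3/4 < s.re} ∩ {s | s.re < N / 2 + 1})
      (V := {s | 3/4 < s.re} ∩ {s | s.re < 1}) ?_ ?_ ?_ ?_ ?_ ?_ ?_ ⟨ht0, ht⟩
    · exact ((convex_halfSpace_re_gt _).inter (convex_halfSpace_re_lt _)).isPreconnected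
    · exact fun z hz => (hd.analyticAt ((cusp_strip_open' _).mem_nhds hz.1)).meromorphicAt
    · exact fun z hz => cuspK_mero hδ p h N k hz.2
    · exact (cusp_strip_open' _).inter (cusp_strip_open _)
    · intro z hz
      have h2 : z.re < 1 := hz.2
      refine ⟨hz.1, ?_⟩
      show z.re < N / 2 + 1
      linarith [(Nat.cast_nonneg N : (0:ℝ) ≤ N)]
    · exact ⟨((7/8 : ℝ) : ℂ), by simp; norm_num, by simp; norm_num⟩
    · exact fun z hz => cuspI_direct hδ p h N k hz.1 hz.2
  have c1 : ContinuousAt (cuspI δ p f k) t :=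
    (hd.differentiableAt ((cusp_strip_open' _).mem_nhds ht0)).continuousAt
  have c2 := cuspK_cont hδ p h N k ht0 ht hp hp2
  exact (c1.eventuallyEq_nhds_iff_eventuallyEq_nhdsNE c2).1 key |>.eq_of_nhds

lemma cusp_zeta_hasSum {z : ℂ} (hz : 1 < z.re) :
    HasSum (fun k => (cuspN k : ℂ) ^ (-z)) (riemannZeta z) := by
  have hs : Summable (fun k => (cuspN k : ℂ) ^ (-z)) := by
    refine Summable.of_norm ?_
    simp_rw [cuspN_cpow_norm]
    exact cuspN_summable (by simp; linarith)
  have := hs.hasSum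
  rw [zeta_eq_tsum_one_div_nat_add_one_cpow hz]
  convert this using 3 with k
  rw [Complex.cpow_neg, one_div]
  simp [cuspN]

lemma cusp_zeta_mero (z : ℂ) : MeromorphicAt riemannZeta z := by
  by_cases h : z = 1
  · have : MeromorphicAt (fun s : ℂ => (s - 1)⁻¹ * riemannZeta₁ s) z := by
      refine MeromorphicAt.mul (MeromorphicAt.inv ?_) ?_
      · exact AnalyticAt.meromorphicAt (by fun_prop)
      · exact (differentiable_riemannZeta₁.analyticAt z).meromorphicAt
    refine this.congr ?_
    filter_upwards [self_mem_nhdsWithin] with s hs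
    rw [riemannZeta_eq_inv_sub_mul]
    subst h
    exact hs
  · have hd : DifferentiableOn ℂ riemannZeta {1}ᶜ := fun s hs =>
      (differentiableAt_riemannZeta hs).differentiableWithinAt
    exact (hd.analyticAt (isOpen_compl_singleton.mem_nhds h)).meromorphicAt

lemma cusp_zeta_mero_aff (a b z : ℂ) : MeromorphicAt (fun s => riemannZeta (a * s + b)) z := by
  exact (cusp_zeta_mero _).comp_analyticAt (f := riemannZeta) (g := fun s => a * s + b) (by fun_prop)

/-- meromorphic continuation of `∑' k, cuspI δ p f k t`. -/
noncomputable def cuspGf (δ p : ℝ) (f : ℝ → ℝ) (M : ℂ → ℂ) (γ : ℕ → ℝ) (N : ℕ) (t : ℂ) : ℂ :=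
  riemannZeta (2 * t + -p) * M t - (∑ m ∈ Finset.range N, (γ m : ℂ) *
    riemannZeta (2 * δ * t + (-p + (1 - δ) * (m + 2))) / (m + 2 - 2 * t)) -
    ∑' k, cuspP δ p (cuspG f γ N) k t

lemma cuspP_dom_open (δ p : ℝ) (N : ℕ) :
    IsOpen {t : ℂ | t.re < N / 2 + 1 ∧ p - 2 * δ * t.re - (1 - δ) * (N + 2) < -1} := by
  have h2 : IsOpen {t : ℂ | p - 2 * δ * t.re - (1 - δ) * (N + 2) < -1} := by
    refine isOpen_lt ?_ continuous_const
    have := Complex.continuous_re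
    fun_prop
  exact (cusp_strip_open (N / 2 + 1)).inter h2

lemma cuspP_sum_diff {δ : ℝ} (hδ0 : 0 < δ) (hδ : δ ≤ 1) (p : ℝ) {f : ℝ → ℝ} {M : ℂ → ℂ} {γ : ℕ → ℝ}
    (h : CuspData f M γ) (N : ℕ) :
    DifferentiableOn ℂ (fun t => ∑' k, cuspP δ p (cuspG f γ N) k t)
      {t | t.re < N / 2 + 1 ∧ p - 2 * δ * t.re - (1 - δ) * (N + 2) < -1} := by
  obtain ⟨C, hC⟩ := h.taylor N
  exact cusp_holo_tsum (cuspP_dom_open δ p N)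
    (fun k => (cuspP_diffOn' hδ p h N k).mono fun t ht => ht.1)
    fun s₀ hs₀ => cuspP_bound hδ0 hδ p hC s₀ hs₀.1 hs₀.2

lemma cuspGf_mero {δ : ℝ} (hδ0 : 0 < δ) (hδ : δ ≤ 1) (p : ℝ) {f : ℝ → ℝ} {M : ℂ → ℂ} {γ : ℕ → ℝ}
    (h : CuspData f M γ) (N : ℕ) {t : ℂ} (ht : t.re < N / 2 + 1)
    (ht2 : p - 2 * δ * t.re - (1 - δ) * (N + 2) < -1) : MeromorphicAt (cuspGf δ p f M γ N) t := by
  unfold cuspGf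
  refine MeromorphicAt.sub (MeromorphicAt.sub (MeromorphicAt.mul ?_ (h.mero t)) ?_) ?_
  · exact cusp_zeta_mero_aff _ _ _
  · refine MeromorphicAt.fun_sum fun m _ => ?_
    refine MeromorphicAt.div (MeromorphicAt.mul (MeromorphicAt.const _ _) ?_) ?_
    · exact cusp_zeta_mero_aff _ _ _
    · exact AnalyticAt.meromorphicAt (by fun_prop)
  · exact ((cuspP_sum_diff hδ0 hδ p h N).analyticAt
      ((cuspP_dom_open δ p N).mem_nhds ⟨ht, ht2⟩)).meromorphicAt

lemma cuspI_hasSum {δ : ℝ} (hδ0 : 0 < δ) (hδ : δ ≤ 1) {p : ℝ} (hp1 : p ≤ 1) {f : ℝ → ℝ} {M : ℂ → ℂ}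
    {γ : ℕ → ℝ} (h : CuspData f M γ) (N : ℕ) {t : ℂ} (ht1 : 1 < t.re) (ht : t.re < N / 2 + 1)
    (hp : ∀ m : ℕ, t ≠ m + 1) (hp2 : ∀ m : ℕ, (m:ℂ) + 2 - 2 * t ≠ 0) :
    HasSum (fun k => cuspI δ p f k t) (cuspGf δ p f M γ N t) := by
  have e : (fun k => cuspI δ p f k t) = fun k => cuspK δ p f M γ N k t := by
    ext k; exact cuspI_eq hδ p h N k (by linarith) ht hp hp2
  have hδt : δ < δ * t.re := by nlinarith
  have hm : ∀ m : ℕ, 1 < 2 * δ * t.re - p + (1 - δ) * (m + 2) := by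
    intro m
    have : 0 ≤ (1 - δ) * m := mul_nonneg (by linarith) (Nat.cast_nonneg m)
    nlinarith
  obtain ⟨C, hC⟩ := h.taylor N
  have h1 : HasSum (fun k => (cuspN k : ℂ) ^ ((p:ℂ) - 2 * t)) (riemannZeta (2 * t + -p)) := by
    have := cusp_zeta_hasSum (z := 2 * t + -p) (by simp; linarith)
    rwa [show -(2 * t + -(p:ℂ)) = (p:ℂ) - 2 * t by ring] at this
  have h2 : ∀ m : ℕ, HasSum (fun k => (cuspN k : ℂ) ^ ((p:ℂ) - 2 * δ * t - (1 - δ) * (m + 2)))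
      (riemannZeta (2 * δ * t + (-p + (1 - δ) * (m + 2)))) := by
    intro m
    have := cusp_zeta_hasSum (z := 2 * δ * t + (-p + (1 - δ) * (m + 2))) (by
      have := hm m
      simp
      linarith)
    rwa [show -(2 * δ * t + (-(p:ℂ) + (1 - δ) * (m + 2))) =
      (p:ℂ) - 2 * δ * t - (1 - δ) * (m + 2) by ring] at this
  have h3 : HasSum (fun k => cuspP δ p (cuspG f γ N) k t) (∑' k, cuspP δ p (cuspG f γ N) k t) := by
    obtain ⟨V, hV, u, hu, hle⟩ := cuspP_bound hδ0 hδ p hC t ht (by linarith [hm N])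
    exact (Summable.of_norm_bounded hu fun k => hle k t (mem_of_mem_nhds hV)).hasSum
  have h4 : HasSum (fun k => ∑ m ∈ Finset.range N, (γ m : ℂ) *
      (cuspN k : ℂ) ^ ((p:ℂ) - 2 * δ * t - (1 - δ) * (m + 2)) / (m + 2 - 2 * t))
      (∑ m ∈ Finset.range N, (γ m : ℂ) *
        riemannZeta (2 * δ * t + (-p + (1 - δ) * (m + 2))) / (m + 2 - 2 * t)) := by
    refine hasSum_sum fun m _ => ?_
    exact HasSum.div_const (HasSum.mul_left (γ m : ℂ) (h2 m)) ((m:ℂ) + 2 - 2 * t)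
  rw [e]
  exact ((h1.mul_right (M t)).sub h4).sub h3

/-- meromorphic continuation of `∑' k, cuspT δ p f 0 k s`. -/
noncomputable def cuspS (δ p : ℝ) (f : ℝ → ℝ) (M : ℂ → ℂ) (γ : ℕ → ℝ) (J : ℕ) (s : ℂ) : ℂ :=
  (∑ j ∈ Finset.range J, cuspA j s * (1/4) ^ j * cuspGf δ p f M γ (2 * J) (s + j)) +
    ∑' k, cuspT δ p f J k s

lemma cuspT_sum_diff {δ : ℝ} (hδ0 : 0 < δ) {p : ℝ} (hp1 : p ≤ 1) {f : ℝ → ℝ} {M : ℂ → ℂ} {γ : ℕ → ℝ}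
    (h : CuspData f M γ) (J : ℕ) :
    DifferentiableOn ℂ (fun s => ∑' k, cuspT δ p f J k s) {s | 1 - (J:ℝ) < s.re} := by
  obtain ⟨A, hA1, hA2⟩ := h.bd
  exact cusp_holo_tsum (cusp_strip_open' _) (fun k => cuspT_diffOn hδ0.le p h.meas hA1 J k)
    fun s₀ hs₀ => cuspT_bound hδ0 hp1 hA1 J s₀ hs₀

lemma cuspS_mero {δ : ℝ} (hδ0 : 0 < δ) (hδ : δ < 1/2) {p : ℝ} (hp1 : p ≤ 1) {f : ℝ → ℝ} {M : ℂ → ℂ}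
    {γ : ℕ → ℝ} (h : CuspData f M γ) (J : ℕ) {s : ℂ} (hs : 1 - (J:ℝ) < s.re) (hs2 : s.re < 2) :
    MeromorphicAt (cuspS δ p f M γ J) s := by
  unfold cuspS
  refine MeromorphicAt.add (MeromorphicAt.fun_sum fun j hj => ?_) ?_
  · refine MeromorphicAt.mul (MeromorphicAt.mul ?_ (MeromorphicAt.const _ _)) ?_
    · exact ((cuspA_differentiable j).analyticAt s).meromorphicAt
    · have hj' : (j:ℝ) + 1 ≤ J := by exact_mod_cast Finset.mem_range.1 hj
      have hj0 : (0:ℝ) ≤ j := Nat.cast_nonneg j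
      refine MeromorphicAt.comp_analyticAt (f := cuspGf δ p f M γ (2 * J)) (g := fun s => s + (j:ℂ))
        (cuspGf_mero hδ0 (by linarith) p h (2 * J) ?_ ?_) (by fun_prop)
      · simp; linarith
      · have h1 : 0 < (s + (j:ℂ)).re - (1 - J) := by simp; linarith
        have h2 := mul_pos hδ0 h1
        have h3 : 0 < (1 - 2 * δ) * J := mul_pos (by linarith) (by linarith)
        push_cast
        nlinarith
  · exact ((cuspT_sum_diff hδ0 hp1 h J).analyticAt ((cusp_strip_open' _).mem_nhds hs)).meromorphicAt

lemma cuspS_eq {δ : ℝ} (hδ0 : 0 < δ) (hδ : δ < 1/2) {p : ℝ} (hp1 : p ≤ 1) {f : ℝ → ℝ} {M : ℂ → ℂ}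
    {γ : ℕ → ℝ} (h : CuspData f M γ) (J : ℕ) {s : ℂ} (hs : 1 < s.re) (hs2 : s.re < 3/2) :
    cuspS δ p f M γ J s = ∑' k, cuspT δ p f 0 k s := by
  obtain ⟨A, hA1, hA2⟩ := h.bd
  have e : (fun k => cuspT δ p f 0 k s) = fun k => (∑ j ∈ Finset.range J, cuspA j s * (1/4) ^ j *
      cuspI δ p f k (s + j)) + cuspT δ p f J k s := by
    ext k; exact cuspT_expand hδ0.le p h.meas hA1 hA2 J k hs
  rw [e]
  symm
  refine HasSum.tsum_eq (HasSum.add (hasSum_sum fun j hj => HasSum.mul_left _ ?_) ?_)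
  · have hj' : (j:ℝ) + 1 ≤ J := by exact_mod_cast Finset.mem_range.1 hj
    have hj0 : (0:ℝ) ≤ j := Nat.cast_nonneg j
    refine cuspI_hasSum hδ0 (by linarith) hp1 h (2 * J) (by simp; linarith) (by simp; linarith) ?_ ?_
    · intro m hm
      have := congrArg Complex.re hm
      simp at this
      have h1 : (j:ℝ) < m := by linarith
      have h2 : (m:ℝ) < j + 1 := by linarith
      norm_cast at h1 h2
      omega
    · intro m hm
      have := congrArg Complex.re hm
      simp at this
      have h1 : (2 * j:ℝ) < m := by linarith
      have h2 : (m:ℝ) < 2 * j + 1 := by linarith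
      norm_cast at h1 h2
      omega
  · obtain ⟨V, hV, u, hu, hle⟩ := cuspT_bound hδ0 hp1 hA1 J s
      (by linarith [(Nat.cast_nonneg J : (0:ℝ) ≤ J)])
    exact (Summable.of_norm_bounded hu fun k => hle k s (mem_of_mem_nhds hV)).hasSum

/-! ### The beta integral on the half line -/

lemma cusp_beta_aux (a c : ℂ) {v : ℝ} (hv : 0 < v) :
    |2 * v / (1 + v ^ 2) ^ 2| • (((v ^ 2 / (1 + v ^ 2) : ℝ) : ℂ) ^ (a - 1) *
      (1 - ((v ^ 2 / (1 + v ^ 2) : ℝ) : ℂ)) ^ (c - 1)) =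
    2 * ((v:ℂ) ^ (2 * a - 1) * ((1 + v ^ 2 : ℝ) : ℂ) ^ (-(a + c))) := by
  have h1 : 0 < 1 + v ^ 2 := by positivity
  have hv0 : (v:ℂ) ≠ 0 := Complex.ofReal_ne_zero.2 hv.ne'
  have h1c : ((1 + v ^ 2 : ℝ) : ℂ) ≠ 0 := Complex.ofReal_ne_zero.2 h1.ne'
  rw [abs_of_pos (by positivity)]
  have e1 : (1 - ((v ^ 2 / (1 + v ^ 2) : ℝ) : ℂ)) = (((1 + v ^ 2)⁻¹ : ℝ) : ℂ) := by
    rw [← Complex.ofReal_one, ← Complex.ofReal_sub]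
    congr 1
    field_simp
    ring
  have e2 : ((v ^ 2 / (1 + v ^ 2) : ℝ) : ℂ) ^ (a - 1) =
      (v:ℂ) ^ (2 * (a - 1)) * ((1 + v ^ 2 : ℝ) : ℂ) ^ (-(a - 1)) := by
    rw [div_eq_mul_inv, Complex.ofReal_mul, Complex.mul_cpow_ofReal_nonneg (by positivity)
      (by positivity), Complex.ofReal_inv, Complex.inv_cpow _ _ (by
        rw [Complex.arg_ofReal_of_nonneg h1.le]; exact Real.pi_pos.ne), Complex.cpow_neg]
    congr 1
    rw [pow_two, Complex.ofReal_mul, Complex.mul_cpow_ofReal_nonneg hv.le hv.le,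
      ← Complex.cpow_add _ _ hv0]
    ring_nf
  have e3 : (((1 + v ^ 2)⁻¹ : ℝ) : ℂ) ^ (c - 1) = ((1 + v ^ 2 : ℝ) : ℂ) ^ (-(c - 1)) := by
    rw [Complex.ofReal_inv, Complex.inv_cpow _ _ (by
        rw [Complex.arg_ofReal_of_nonneg h1.le]; exact Real.pi_pos.ne), Complex.cpow_neg]
  rw [e1, e2, e3, Complex.real_smul]
  have e4 : ((2 * v / (1 + v ^ 2) ^ 2 : ℝ) : ℂ) = 2 * ((v:ℂ) ^ (1:ℂ) *
      ((1 + v ^ 2 : ℝ) : ℂ) ^ (-2 : ℂ)) := by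
    rw [Complex.cpow_one, Complex.cpow_neg, show (2:ℂ) = ((2:ℕ):ℂ) by norm_num, Complex.cpow_natCast]
    push_cast
    rw [div_eq_mul_inv]
    ring
  rw [e4]
  rw [show 2 * a - 1 = 2 * (a - 1) + 1 by ring, show -(a + c) = -2 + (-(a-1) + -(c-1)) by ring,
    Complex.cpow_add _ _ hv0, Complex.cpow_add _ _ h1c, Complex.cpow_add _ _ h1c]
  ring

lemma cusp_beta_deriv (v : ℝ) :
    HasDerivAt (fun v : ℝ => v ^ 2 / (1 + v ^ 2)) (2 * v / (1 + v ^ 2) ^ 2) v := by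
  have h1 : 1 + v ^ 2 ≠ 0 := by positivity
  have := ((hasDerivAt_id v).pow 2).div (((hasDerivAt_id v).pow 2).const_add 1) h1
  refine this.congr_deriv ?_
  simp
  ring

lemma cusp_beta_image : (fun v : ℝ => v ^ 2 / (1 + v ^ 2)) '' Set.Ioi 0 = Set.Ioo 0 1 := by
  ext x
  constructor
  · rintro ⟨v, hv, rfl⟩
    have hv : (0:ℝ) < v := hv
    refine ⟨by positivity, ?_⟩
    rw [div_lt_one (by positivity)]
    linarith
  · rintro ⟨h0, h1⟩
    have h2 : 0 < x / (1 - x) := div_pos h0 (by linarith)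
    refine ⟨√(x / (1 - x)), Real.sqrt_pos.2 h2, ?_⟩
    have h3 : 1 - x ≠ 0 := by linarith
    simp only [Real.sq_sqrt h2.le]
    field_simp
    ring

lemma cusp_beta_inj : Set.InjOn (fun v : ℝ => v ^ 2 / (1 + v ^ 2)) (Set.Ioi 0) := by
  intro v hv w hw h
  have hv : (0:ℝ) < v := hv
  have hw : (0:ℝ) < w := hw
  simp only at h
  rw [div_eq_div_iff (by positivity) (by positivity)] at h
  have : v ^ 2 = w ^ 2 := by linarith
  exact (pow_left_inj₀ hv.le hw.le two_ne_zero).1 this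

lemma cusp_beta_integral {a c : ℂ} (ha : 0 < a.re) (hc : 0 < c.re) :
    IntegrableOn (fun v : ℝ => (v:ℂ) ^ (2 * a - 1) * ((1 + v ^ 2 : ℝ) : ℂ) ^ (-(a + c)))
      (Set.Ioi 0) ∧
    ∫ v in Set.Ioi (0:ℝ), (v:ℂ) ^ (2 * a - 1) * ((1 + v ^ 2 : ℝ) : ℂ) ^ (-(a + c)) =
      1/2 * (Complex.Gamma a * Complex.Gamma c / Complex.Gamma (a + c)) := by
  have hd : ∀ v ∈ Set.Ioi (0:ℝ), HasDerivWithinAt (fun v : ℝ => v ^ 2 / (1 + v ^ 2))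
      (2 * v / (1 + v ^ 2) ^ 2) (Set.Ioi 0) v := fun v _ => (cusp_beta_deriv v).hasDerivWithinAt
  have hintg := Complex.betaIntegral_convergent ha hc
  rw [intervalIntegrable_iff_integrableOn_Ioo_of_le zero_le_one, ← cusp_beta_image] at hintg
  have hint2 := (integrableOn_image_iff_integrableOn_abs_deriv_smul measurableSet_Ioi hd
    cusp_beta_inj _).1 hintg
  have hint3 : IntegrableOn (fun v : ℝ => 2 * ((v:ℂ) ^ (2 * a - 1) *
      ((1 + v ^ 2 : ℝ) : ℂ) ^ (-(a + c)))) (Set.Ioi 0) :=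
    hint2.congr_fun (fun v hv => cusp_beta_aux a c hv) measurableSet_Ioi
  have heq := integral_image_eq_integral_abs_deriv_smul measurableSet_Ioi hd cusp_beta_inj
    (fun x : ℝ => (x:ℂ) ^ (a - 1) * (1 - (x:ℂ)) ^ (c - 1))
  rw [cusp_beta_image, setIntegral_congr_fun measurableSet_Ioi
    (fun v hv => cusp_beta_aux a c hv), integral_const_mul] at heq
  have hB := Complex.betaIntegral_eq_Gamma_mul_div a c ha hc
  rw [Complex.betaIntegral, intervalIntegral.integral_of_le zero_le_one,
    integral_Ioc_eq_integral_Ioo, heq] at hB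
  refine ⟨?_, ?_⟩
  · have := hint3.const_mul (1/2 : ℂ)
    refine this.congr (ae_of_all _ fun v => ?_)
    simp only
    ring
  · rw [← hB]; ring

noncomputable def cuspPhi0 (v : ℝ) : ℝ := v / (1 + v ^ 2)
noncomputable def cuspPhi1 (v : ℝ) : ℝ := Real.arsinh v
noncomputable def cuspPhi2 (v : ℝ) : ℝ :=
  (v * (1 + v ^ 2) ^ (-(3:ℝ) / 2) / 24) * (13 - 15 * v ^ 2 * (1 + v ^ 2)⁻¹)

noncomputable def cuspM0 (t : ℂ) : ℂ := 1/2 * (Complex.Gamma (1 - t) * Complex.Gamma t)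
noncomputable def cuspM1 (t : ℂ) : ℂ :=
  1/2 * (Complex.Gamma (1 - t) * Complex.Gamma (t - 1/2) / Complex.Gamma (1/2)) / (2 * t - 1)
noncomputable def cuspM2 (t : ℂ) : ℂ :=
  Complex.Gamma (1 - t) * Complex.Gamma (t + 1/2) * (10 * t + 3) / (24 * Complex.Gamma (1/2))

/-- Taylor coefficients at zero -/
noncomputable def cuspC (φ : ℝ → ℝ) (m : ℕ) : ℝ :=
  (((m + 1).factorial : ℝ))⁻¹ * iteratedDerivWithin (m + 1) φ (Set.Icc 0 1) 0

lemma cusp_taylor {φ : ℝ → ℝ} (hφ : ∀ n : ℕ, ContDiff ℝ n φ) (h0 : φ 0 = 0) (N : ℕ) :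
    ∃ C, ∀ u, 0 < u → u ≤ 1 →
    |φ u - ∑ m ∈ Finset.range N, cuspC φ m * u ^ (m + 1)| ≤ C * u ^ (N + 1) := by
  obtain ⟨C, hC⟩ := exists_taylor_mean_remainder_bound (f := φ) (a := 0) (b := 1) (n := N)
    zero_le_one (by exact_mod_cast (hφ (N + 1)).contDiffOn)
  refine ⟨C, fun u hu hu1 => ?_⟩
  have := hC u ⟨hu.le, hu1⟩
  rw [taylor_within_apply, Finset.sum_range_succ'] at this
  simp only [sub_zero, iteratedDerivWithin_zero, h0, add_zero, smul_eq_mul, mul_zero,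
    Real.norm_eq_abs] at this
  have e : ∑ m ∈ Finset.range N, cuspC φ m * u ^ (m + 1) = ∑ m ∈ Finset.range N,
      ((((m + 1).factorial : ℝ))⁻¹ * u ^ (m + 1)) * iteratedDerivWithin (m + 1) φ (Set.Icc 0 1) 0 :=
    Finset.sum_congr rfl fun m _ => by unfold cuspC; ring
  rw [e]
  exact this

lemma cusp_taylor_global {φ : ℝ → ℝ} {A : ℝ} (hA : ∀ u > 0, |φ u| ≤ A * u) {c : ℕ → ℝ} {N : ℕ}
    (h : ∃ C, ∀ u, 0 < u → u ≤ 1 →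
      |φ u - ∑ m ∈ Finset.range N, c m * u ^ (m + 1)| ≤ C * u ^ (N + 1)) :
    ∃ C, ∀ u, 0 < u → |φ u - ∑ m ∈ Finset.range N, c m * u ^ (m + 1)| ≤ C * u ^ (N + 1) := by
  obtain ⟨C, hC⟩ := h
  have hA0 : 0 ≤ A := by
    have h1 := hA 1 one_pos
    rw [mul_one] at h1
    exact (abs_nonneg _).trans h1
  refine ⟨max C (A + ∑ m ∈ Finset.range N, |c m|), fun u hu => ?_⟩
  by_cases hu1 : u ≤ 1
  · exact (hC u hu hu1).trans (mul_le_mul_of_nonneg_right (le_max_left _ _) (by positivity))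
  · have hu1 : 1 ≤ u := (not_le.1 hu1).le
    refine le_trans ?_ (mul_le_mul_of_nonneg_right (le_max_right _ _) (by positivity))
    refine (abs_sub _ _).trans ?_
    rw [add_mul, Finset.sum_mul]
    refine add_le_add ?_ ?_
    · refine (hA u hu).trans ?_
      refine mul_le_mul_of_nonneg_left ?_ hA0
      exact le_self_pow₀ hu1 (by omega)
    · refine (Finset.abs_sum_le_sum_abs _ _).trans (Finset.sum_le_sum fun m hm => ?_)
      rw [abs_mul, abs_of_pos (pow_pos hu _)]
      refine mul_le_mul_of_nonneg_left ?_ (abs_nonneg _)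
      exact pow_le_pow_right₀ hu1 (by have := Finset.mem_range.1 hm; omega)

lemma cusp_mellin_integrable {f : ℝ → ℝ} (hfm : Measurable f) {A : ℝ} (hA1 : ∀ u > 0, |f u| ≤ A * u)
    (hA2 : ∀ u > 0, |f u| ≤ A * √u) {t : ℂ} (ht : 3/4 < t.re) (ht1 : t.re < 1) :
    IntegrableOn (fun u : ℝ => (u:ℂ) ^ (-2 * t) * (f u : ℂ)) (Set.Ioi 0) := by
  have hI1 := cuspI_integrable (δ := 1) hfm hA2 0 ht
  have hf0 : ∀ u, 0 < u → u ≤ 1 → |f u| ≤ A * u ^ (0 + 1) := by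
    intro u hu _; simpa using hA1 u hu
  have hI0 := cuspP_integrable (δ := 1) le_rfl hfm hf0 0 (s := t) (by simp; linarith)
  have := hI0.union hI1
  rw [Set.Ioc_union_Ioi_eq_Ioi zero_le_one] at this
  simpa using this

/-! ### bounds -/
lemma cuspPhi0_bd1 (u : ℝ) (hu : 0 < u) : |cuspPhi0 u| ≤ 1 * u := by
  unfold cuspPhi0
  rw [abs_of_pos (by positivity), one_mul]
  exact div_le_self hu.le (by nlinarith)

lemma cuspPhi0_bd2 (u : ℝ) (hu : 0 < u) : |cuspPhi0 u| ≤ 1 * √u := by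
  unfold cuspPhi0
  rw [abs_of_pos (by positivity), one_mul, div_le_iff₀ (by positivity)]
  have h := Real.mul_self_sqrt hu.le
  have hs := Real.sqrt_nonneg u
  have : √u ≤ 1 + u ^ 2 := by
    nlinarith [sq_nonneg (√u - 1), sq_nonneg (u - 1)]
  nlinarith

lemma cuspPhi2_bd (u : ℝ) (hu : 0 < u) : |cuspPhi2 u| ≤ 2 * |cuspPhi0 u| := by
  unfold cuspPhi2 cuspPhi0
  rw [abs_mul]
  have h1 : |13 - 15 * u ^ 2 * (1 + u ^ 2)⁻¹| ≤ 28 := by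
    have e : u ^ 2 * (1 + u ^ 2)⁻¹ ≤ 1 := by
      rw [← div_eq_mul_inv, div_le_one (by positivity)]; linarith
    have e0 : 0 ≤ u ^ 2 * (1 + u ^ 2)⁻¹ := by positivity
    rw [abs_le]; constructor <;> nlinarith
  have h2 : (1 + u ^ 2) ^ (-(3:ℝ) / 2) ≤ (1 + u ^ 2)⁻¹ := by
    rw [← Real.rpow_neg_one]
    exact Real.rpow_le_rpow_of_exponent_le (by nlinarith) (by norm_num)
  rw [abs_of_pos (by positivity : 0 < u * (1 + u ^ 2) ^ (-(3:ℝ) / 2) / 24),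
    abs_of_pos (by positivity : 0 < u / (1 + u ^ 2))]
  calc _ ≤ u * (1 + u ^ 2)⁻¹ / 24 * 28 := by gcongr
    _ ≤ _ := by
      rw [div_eq_mul_inv u]
      have : 0 < u * (1 + u ^ 2)⁻¹ := by positivity
      linarith

lemma cuspPhi1_bd1 (u : ℝ) (hu : 0 < u) : |cuspPhi1 u| ≤ 2 * u := by
  unfold cuspPhi1
  have h := Real.arsinh_pos_iff.2 hu
  rw [abs_of_pos h]
  have := Real.self_le_sinh_iff.2 h.le
  rw [Real.sinh_arsinh] at this
  linarith

lemma cuspPhi1_bd2 (u : ℝ) (hu : 0 < u) : |cuspPhi1 u| ≤ 2 * √u := by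
  unfold cuspPhi1
  have h := Real.arsinh_pos_iff.2 hu
  rw [abs_of_pos h]
  set y := Real.arsinh u with hy
  have h1 := Real.quadratic_le_exp_of_nonneg h.le
  have h2 : Real.exp (-y) ≤ 1 := Real.exp_le_one_iff.2 (by linarith)
  have h3 : u = (Real.exp y - Real.exp (-y)) / 2 := by
    rw [← Real.sinh_eq, hy, Real.sinh_arsinh]
  have h4 : (y/2) ^ 2 ≤ u := by nlinarith
  have := Real.le_sqrt_of_sq_le h4
  linarith

/-! ### Mellin transforms -/

lemma cusp_mul_cpow {v : ℝ} (hv : 0 < v) (t : ℂ) :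
    (v:ℂ) ^ (-2 * t) * v = (v:ℂ) ^ (2 * (1 - t) - 1) := by
  have hv0 : (v:ℂ) ≠ 0 := Complex.ofReal_ne_zero.2 hv.ne'
  rw [show 2 * (1 - t) - 1 = -2 * t + 1 by ring, Complex.cpow_add _ _ hv0, Complex.cpow_one]

lemma cuspM0_mellin {t : ℂ} (ht : 3/4 < t.re) (ht1 : t.re < 1) :
    ∫ u in Set.Ioi (0:ℝ), (u:ℂ) ^ (-2 * t) * (cuspPhi0 u : ℂ) = cuspM0 t := by
  have := (cusp_beta_integral (a := 1 - t) (c := t) (by simp; linarith) (by linarith)).2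
  rw [show 1 - t + t = (1:ℂ) by ring, Complex.Gamma_one, div_one] at this
  rw [cuspM0, ← this]
  refine setIntegral_congr_fun measurableSet_Ioi fun v hv => ?_
  rw [← cusp_mul_cpow hv, cuspPhi0, Complex.cpow_neg_one]
  push_cast
  rw [div_eq_mul_inv]; ring

lemma cuspM2_mellin {t : ℂ} (ht : 3/4 < t.re) (ht1 : t.re < 1) :
    ∫ u in Set.Ioi (0:ℝ), (u:ℂ) ^ (-2 * t) * (cuspPhi2 u : ℂ) = cuspM2 t := by
  have h1 := cusp_beta_integral (a := 1 - t) (c := t + 1/2) (by simp; linarith)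
    (by simp; linarith)
  have h2 := cusp_beta_integral (a := 1 - t) (c := t + 1/2 + 1) (by simp; linarith)
    (by simp; linarith)
  have hne : t + 1/2 ≠ 0 := by
    intro h
    have := congrArg Complex.re h
    simp at this
    linarith
  rw [show 1 - t + (t + 1/2) = (1/2:ℂ) + 1 by ring] at h1
  rw [show 1 - t + (t + 1/2 + 1) = (1/2:ℂ) + 1 + 1 by ring, Complex.Gamma_add_one _ hne] at h2
  rw [Complex.Gamma_add_one (1/2) (by norm_num)] at h1
  rw [Complex.Gamma_add_one (1/2 + 1) (by norm_num), Complex.Gamma_add_one (1/2) (by norm_num)] at h2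
  have e : ∀ v ∈ Set.Ioi (0:ℝ), (v:ℂ) ^ (-2 * t) * (cuspPhi2 v : ℂ) =
      (-2/24) * ((v:ℂ) ^ (2 * (1 - t) - 1) * ((1 + v ^ 2 : ℝ) : ℂ) ^ (-((1/2:ℂ) + 1))) +
      (15/24) * ((v:ℂ) ^ (2 * (1 - t) - 1) * ((1 + v ^ 2 : ℝ) : ℂ) ^ (-((1/2:ℂ) + 1 + 1))) := by
    intro v hv
    have hp : 0 < 1 + v ^ 2 := by positivity
    have hc : ((1 + v ^ 2 : ℝ) : ℂ) ≠ 0 := Complex.ofReal_ne_zero.2 hp.ne'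
    rw [← cusp_mul_cpow hv, show -((1/2:ℂ) + 1 + 1) = -((1/2:ℂ) + 1) + -1 by ring,
      Complex.cpow_add _ _ hc, Complex.cpow_neg_one]
    have e1 : ((1 + v ^ 2 : ℝ) : ℂ) ^ (-((1/2:ℂ) + 1)) =
        (((1 + v ^ 2) ^ (-(3:ℝ) / 2) : ℝ) : ℂ) := by
      rw [show -((1/2:ℂ) + 1) = ((-(3:ℝ)/2 : ℝ) : ℂ) by push_cast; norm_num,
        Complex.ofReal_cpow hp.le]
    rw [e1, cuspPhi2]
    have e2 : (13 - 15 * v ^ 2 * (1 + v ^ 2)⁻¹) = -2 + 15 * (1 + v ^ 2)⁻¹ := by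
      field_simp; ring
    rw [e2]
    push_cast
    ring
  rw [setIntegral_congr_fun measurableSet_Ioi e, integral_add (h1.1.const_mul _) (h2.1.const_mul _),
    integral_const_mul, integral_const_mul, h1.2, h2.2, cuspM2]
  have hG : Complex.Gamma (1/2) ≠ 0 := Complex.Gamma_ne_zero_of_re_pos (by norm_num)
  generalize Complex.Gamma (1/2) = G at *
  field_simp
  ring

lemma cusp_tendsto_norm {l : Filter ℝ} {e : ℝ} {F : ℝ → ℂ} {A : ℝ} (hl : ∀ᶠ v in l, ‖F v‖ ≤ A * v ^ e)
    (ht : Tendsto (fun v : ℝ => v ^ e) l (𝓝 0)) : Tendsto F l (𝓝 0) := by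
  refine squeeze_zero_norm' hl ?_
  simpa using ht.const_mul A

lemma cuspM1_mellin {t : ℂ} (ht : 3/4 < t.re) (ht1 : t.re < 1) :
    ∫ u in Set.Ioi (0:ℝ), (u:ℂ) ^ (-2 * t) * (cuspPhi1 u : ℂ) = cuspM1 t := by
  have hb := cusp_beta_integral (a := 1 - t) (c := t - 1/2) (by simp; linarith)
    (by simp; linarith)
  rw [show 1 - t + (t - 1/2) = (1/2:ℂ) by ring] at hb
  have hne : -2 * t + 1 ≠ 0 := by
    intro h
    have := congrArg Complex.re h
    simp at this
    linarith
  have hne2 : 2 * t - 1 ≠ 0 := by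
    intro h; apply hne; linear_combination -h
  have hintg := cusp_mellin_integrable (f := cuspPhi1) (by unfold cuspPhi1; exact Real.continuous_arsinh.measurable)
    cuspPhi1_bd1 cuspPhi1_bd2 ht ht1
  have e1 : ∀ v ∈ Set.Ioi (0:ℝ), ((v:ℂ) ^ (2 * (1 - t) - 1) * ((1 + v ^ 2 : ℝ) : ℂ) ^ (-(1/2:ℂ))) /
      (-2 * t + 1) = (v:ℂ) ^ (-2 * t + 1) / (-2 * t + 1) * (((√(1 + v ^ 2))⁻¹ : ℝ) : ℂ) := by
    intro v hv
    have hp : 0 < 1 + v ^ 2 := by positivity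
    rw [show 2 * (1 - t) - 1 = -2 * t + 1 by ring, Real.sqrt_eq_rpow, ← Real.rpow_neg hp.le,
      Complex.ofReal_cpow hp.le]
    push_cast
    ring
  have hnorm : ∀ v : ℝ, 0 < v → ‖(v:ℂ) ^ (-2 * t + 1) / (-2 * t + 1) * (cuspPhi1 v : ℂ)‖ =
      ‖(-2 * t + 1)‖⁻¹ * (v ^ (1 - 2 * t.re) * |cuspPhi1 v|) := by
    intro v hv
    rw [norm_mul, norm_div, Complex.norm_cpow_eq_rpow_re_of_pos hv, Complex.norm_real,
      Real.norm_eq_abs]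
    rw [show (-2 * t + 1).re = 1 - 2 * t.re by simp; ring]
    ring
  have hparts := integral_Ioi_mul_deriv_eq_deriv_mul (A := ℂ) (a := 0)
    (u := fun v : ℝ => (cuspPhi1 v : ℂ)) (u' := fun v : ℝ => (((√(1 + v ^ 2))⁻¹ : ℝ) : ℂ))
    (v := fun v : ℝ => (v:ℂ) ^ (-2 * t + 1) / (-2 * t + 1)) (v' := fun v : ℝ => (v:ℂ) ^ (-2 * t))
    (a' := 0) (b' := 0) ?_ ?_ ?_ ?_ ?_ ?_
  · have e2 : ∫ u in Set.Ioi (0:ℝ), (u:ℂ) ^ (-2 * t) * (cuspPhi1 u : ℂ) =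
        ∫ u in Set.Ioi (0:ℝ), (cuspPhi1 u : ℂ) * (u:ℂ) ^ (-2 * t) := by
      congr 1; ext u; ring
    have e3 : ∫ v in Set.Ioi (0:ℝ), (((√(1 + v ^ 2))⁻¹ : ℝ) : ℂ) * ((v:ℂ) ^ (-2 * t + 1) /
        (-2 * t + 1)) = ∫ v in Set.Ioi (0:ℝ), ((v:ℂ) ^ (2 * (1 - t) - 1) *
          ((1 + v ^ 2 : ℝ) : ℂ) ^ (-(1/2:ℂ))) / (-2 * t + 1) := by
      refine setIntegral_congr_fun measurableSet_Ioi fun v hv => ?_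
      rw [e1 v hv]; ring
    rw [e2, hparts, e3, integral_div, hb.2, cuspM1]
    rw [show -2 * t + 1 = -(2 * t - 1) by ring, div_neg]
    ring
  · intro v _
    exact (Real.hasDerivAt_arsinh v).ofReal_comp
  · intro v hv
    refine ((hasDerivAt_ofReal_cpow_const (r := -2 * t + 1) (ne_of_gt hv) hne).div_const
      (-2 * t + 1)).congr_deriv ?_
    rw [show -2 * t + 1 - 1 = -2 * t by ring]
    exact mul_div_cancel_left₀ _ hne
  · refine hintg.congr (ae_of_all _ fun v => ?_)
    simp only [Pi.mul_apply]
    ring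
  · refine IntegrableOn.congr_fun (hb.1.div_const (-2 * t + 1)) (fun v hv => ?_) measurableSet_Ioi
    simp only [Pi.mul_apply]
    rw [e1 v hv]; ring
  · refine cusp_tendsto_norm (e := 2 - 2 * t.re) (A := ‖(-2 * t + 1)‖⁻¹ * 2) ?_ ?_
    · filter_upwards [self_mem_nhdsWithin] with v hv
      have hv : (0:ℝ) < v := hv
      simp only [Pi.mul_apply]
      rw [mul_comm, hnorm v hv, mul_assoc]
      refine mul_le_mul_of_nonneg_left ?_ (by positivity)
      calc _ ≤ v ^ (1 - 2 * t.re) * (2 * v) := 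
          mul_le_mul_of_nonneg_left (cuspPhi1_bd1 v hv) (by positivity)
        _ = 2 * (v ^ (1 - 2 * t.re) * v) := by ring
        _ = _ := by rw [← Real.rpow_add_one hv.ne']; ring_nf
    · have h0 : 0 < 2 - 2 * t.re := by linarith
      have : ContinuousAt (fun v : ℝ => v ^ (2 - 2 * t.re)) 0 :=
        Real.continuousAt_rpow_const _ _ (Or.inr h0.le)
      have := this.tendsto
      rw [Real.zero_rpow h0.ne'] at this
      exact this.mono_left nhdsWithin_le_nhds
  · refine cusp_tendsto_norm (e := -(2 * t.re - 3/2)) (A := ‖(-2 * t + 1)‖⁻¹ * 2) ?_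
      (tendsto_rpow_neg_atTop (by linarith))
    filter_upwards [eventually_gt_atTop 0] with v hv
    simp only [Pi.mul_apply]
    rw [mul_comm, hnorm v hv, mul_assoc]
    refine mul_le_mul_of_nonneg_left ?_ (by positivity)
    calc _ ≤ v ^ (1 - 2 * t.re) * (2 * √v) := 
          mul_le_mul_of_nonneg_left (cuspPhi1_bd2 v hv) (by positivity)
      _ = 2 * (v ^ (1 - 2 * t.re) * √v) := by ring
      _ = _ := by rw [Real.sqrt_eq_rpow, ← Real.rpow_add hv]; ring_nf

lemma cuspPhi0_smooth (n : ℕ) : ContDiff ℝ n cuspPhi0 := by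
  unfold cuspPhi0
  exact contDiff_id.div (by fun_prop) (fun v => by positivity)

lemma cuspPhi1_smooth (n : ℕ) : ContDiff ℝ n cuspPhi1 := by
  unfold cuspPhi1
  exact contDiff_id.arsinh

lemma cuspPhi2_smooth (n : ℕ) : ContDiff ℝ n cuspPhi2 := by
  unfold cuspPhi2
  have h1 : ContDiff ℝ n (fun v : ℝ => 1 + v ^ 2) := by fun_prop
  have h2 : ContDiff ℝ n (fun v : ℝ => (1 + v ^ 2) ^ (-(3:ℝ) / 2)) :=
    h1.rpow_const_of_ne (fun v => by positivity)
  have h3 : ContDiff ℝ n (fun v : ℝ => (1 + v ^ 2)⁻¹) := h1.inv (fun v => by positivity)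
  fun_prop

lemma cuspGamma_mero (a b z : ℂ) : MeromorphicAt (fun t => Complex.Gamma (a * t + b)) z := by
  have h : AnalyticAt ℂ (fun t : ℂ => a * t + b) z := by fun_prop
  exact MeromorphicAt.comp_analyticAt (f := Complex.Gamma) (g := fun t : ℂ => a * t + b)
    (Meromorphic.Gamma (a * z + b)) h

lemma cuspM0_mero (z : ℂ) : MeromorphicAt cuspM0 z := by
  have h1 := cuspGamma_mero (-1) 1 z
  have h2 := cuspGamma_mero 1 0 z
  have := (MeromorphicAt.const (1/2:ℂ) z).mul (h1.mul h2)
  refine this.congr (Eventually.of_forall fun t => ?_)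
  simp only [cuspM0, Pi.mul_apply]
  rw [show -1 * t + 1 = 1 - t by ring, show 1 * t + 0 = t by ring]

lemma cuspM1_mero (z : ℂ) : MeromorphicAt cuspM1 z := by
  have h1 := cuspGamma_mero (-1) 1 z
  have h2 := cuspGamma_mero 1 (-1/2) z
  have h3 : MeromorphicAt (fun t : ℂ => 2 * t - 1) z := AnalyticAt.meromorphicAt (by fun_prop)
  have := ((MeromorphicAt.const (1/2:ℂ) z).mul ((h1.mul h2).div
    (MeromorphicAt.const (Complex.Gamma (1/2)) z))).div h3
  refine this.congr (Eventually.of_forall fun t => ?_)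
  simp only [cuspM1, Pi.mul_apply, Pi.div_apply]
  rw [show -1 * t + 1 = 1 - t by ring, show 1 * t + -1/2 = t - 1/2 by ring]

lemma cuspM2_mero (z : ℂ) : MeromorphicAt cuspM2 z := by
  have h1 := cuspGamma_mero (-1) 1 z
  have h2 := cuspGamma_mero 1 (1/2) z
  have h3 : MeromorphicAt (fun t : ℂ => (10 * t + 3) / (24 * Complex.Gamma (1/2))) z :=
    AnalyticAt.meromorphicAt (by fun_prop)
  have := ((h1.mul h2).mul h3)
  refine this.congr (Eventually.of_forall fun t => ?_)
  simp only [cuspM2, Pi.mul_apply]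
  rw [show -1 * t + 1 = 1 - t by ring, show 1 * t + 1/2 = t + 1/2 by ring, mul_div_assoc]

lemma cuspGamma_diff {g : ℂ → ℂ} {t : ℂ} (hg : DifferentiableAt ℂ g t) (h : ∀ m : ℕ, g t ≠ -m) :
    DifferentiableAt ℂ (fun t => Complex.Gamma (g t)) t :=
  (Complex.differentiableAt_Gamma _ h).comp t hg

lemma cuspGamma_diff' {g : ℂ → ℂ} {t : ℂ} (hg : DifferentiableAt ℂ g t) (h : 0 < (g t).re) :
    DifferentiableAt ℂ (fun t => Complex.Gamma (g t)) t := by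
  refine cuspGamma_diff hg fun m hm => ?_
  rw [hm] at h
  simp at h
  have : (0:ℝ) ≤ m := Nat.cast_nonneg m
  linarith

lemma cuspGamma_diff1 {t : ℂ} (h : ∀ m : ℕ, t ≠ m + 1) :
    DifferentiableAt ℂ (fun t => Complex.Gamma (1 - t)) t := by
  refine cuspGamma_diff (by fun_prop) fun m hm => h m ?_
  linear_combination -hm

lemma cusp_ne_of_re {z : ℂ} (h : z.re ≠ 0) : z ≠ 0 := fun h0 => h (by rw [h0]; rfl)

lemma cuspData0 : CuspData cuspPhi0 cuspM0 (cuspC cuspPhi0) where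
  meas := (cuspPhi0_smooth 0).continuous.measurable
  bd := ⟨1, cuspPhi0_bd1, cuspPhi0_bd2⟩
  mero := cuspM0_mero
  mellin := fun t h h' => cuspM0_mellin h h'
  an := by
    intro t h h'
    unfold cuspM0
    have h1 := cuspGamma_diff1 h'
    have h2 := cuspGamma_diff' (g := fun t => t) (t := t) (by fun_prop) (by linarith)
    fun_prop
  taylor := cusp_taylor cuspPhi0_smooth (by simp [cuspPhi0])

lemma cuspData1 : CuspData cuspPhi1 cuspM1 (cuspC cuspPhi1) where
  meas := (cuspPhi1_smooth 0).continuous.measurable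
  bd := ⟨2, cuspPhi1_bd1, cuspPhi1_bd2⟩
  mero := cuspM1_mero
  mellin := fun t h h' => cuspM1_mellin h h'
  an := by
    intro t h h'
    unfold cuspM1
    have h1 := cuspGamma_diff1 h'
    have h2 := cuspGamma_diff' (g := fun t => t - 1/2) (t := t) (by fun_prop)
      (by simp; linarith)
    have h3 : 2 * t - 1 ≠ 0 := cusp_ne_of_re (by simp; linarith)
    fun_prop (disch := assumption)
  taylor := cusp_taylor cuspPhi1_smooth (by simp [cuspPhi1])

lemma cuspData2 : CuspData cuspPhi2 cuspM2 (cuspC cuspPhi2) where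
  meas := (cuspPhi2_smooth 0).continuous.measurable
  bd := by
    refine ⟨2, fun u hu => ?_, fun u hu => ?_⟩
    · linarith [cuspPhi2_bd u hu, cuspPhi0_bd1 u hu]
    · linarith [cuspPhi2_bd u hu, cuspPhi0_bd2 u hu]
  mero := cuspM2_mero
  mellin := fun t h h' => cuspM2_mellin h h'
  an := by
    intro t h h'
    unfold cuspM2
    have h1 := cuspGamma_diff1 h'
    have h2 := cuspGamma_diff' (g := fun t => t + 1/2) (t := t) (by fun_prop)
      (by simp; linarith)
    fun_prop
  taylor := cusp_taylor cuspPhi2_smooth (by simp [cuspPhi2])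

/-! ### scaling -/
noncomputable def cuspF (b : ℝ) (q : ℕ) (φ : ℝ → ℝ) (u : ℝ) : ℝ := (b ^ q)⁻¹ * φ (u / b)
noncomputable def cuspMb (b : ℝ) (q : ℕ) (M : ℂ → ℂ) (t : ℂ) : ℂ := (b:ℂ) ^ (1 - (q:ℂ) - 2 * t) * M t
noncomputable def cuspCb (b : ℝ) (q : ℕ) (c : ℕ → ℝ) (m : ℕ) : ℝ := (b ^ q)⁻¹ * (c m * (b ^ (m + 1))⁻¹)

lemma cuspG_scale (b : ℝ) (q : ℕ) (φ : ℝ → ℝ) (c : ℕ → ℝ) (N : ℕ) (u : ℝ) :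
    cuspG (cuspF b q φ) (cuspCb b q c) N u = (b ^ q)⁻¹ * cuspG φ c N (u / b) := by
  unfold cuspG cuspF cuspCb
  rw [mul_sub, Finset.mul_sum]
  congr 1
  refine Finset.sum_congr rfl fun m _ => ?_
  rw [div_pow]
  ring

lemma cuspG_scale_bound {φ : ℝ → ℝ} {M : ℂ → ℂ} {c : ℕ → ℝ} (h : CuspData φ M c) (N : ℕ) :
    ∃ C, 0 ≤ C ∧ ∀ b, 0 < b → ∀ q u, 0 < u → |cuspG (cuspF b q φ) (cuspCb b q c) N u| ≤
      (b ^ q)⁻¹ * (C * (u / b) ^ (N + 1)) := by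
  obtain ⟨A, hA, -⟩ := h.bd
  obtain ⟨C, hC⟩ := cusp_taylor_global hA (h.taylor N)
  refine ⟨C, ?_, fun b hb q u hu => ?_⟩
  · have := (abs_nonneg _).trans (hC 1 one_pos)
    simpa using this
  · rw [cuspG_scale, abs_mul, abs_of_pos (by positivity)]
    exact mul_le_mul_of_nonneg_left (hC _ (by positivity)) (by positivity)

lemma cuspData_scale {φ : ℝ → ℝ} {M : ℂ → ℂ} {c : ℕ → ℝ} (h : CuspData φ M c) {b : ℝ} (hb : 0 < b)
    (q : ℕ) : CuspData (cuspF b q φ) (cuspMb b q M) (cuspCb b q c) where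
  meas := by
    unfold cuspF
    exact (h.meas.comp (measurable_id.div_const b)).const_mul _
  bd := by
    obtain ⟨A, hA, hA2⟩ := h.bd
    have hA0 : 0 ≤ A := by simpa using (abs_nonneg _).trans (hA 1 one_pos)
    refine ⟨max ((b ^ q)⁻¹ * (A / b)) ((b ^ q)⁻¹ * (A / √b)), fun u hu => ?_, fun u hu => ?_⟩
    · refine le_trans ?_ (mul_le_mul_of_nonneg_right (le_max_left _ _) hu.le)
      unfold cuspF
      rw [abs_mul, abs_of_pos (by positivity), mul_assoc]
      refine mul_le_mul_of_nonneg_left ((hA _ (by positivity)).trans (le_of_eq (by ring))) (by positivity)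
    · refine le_trans ?_ (mul_le_mul_of_nonneg_right (le_max_right _ _) (Real.sqrt_nonneg u))
      unfold cuspF
      rw [abs_mul, abs_of_pos (by positivity), mul_assoc]
      refine mul_le_mul_of_nonneg_left ((hA2 _ (by positivity)).trans (le_of_eq ?_)) (by positivity)
      rw [Real.sqrt_div hu.le]; ring
  mero := by
    intro t
    unfold cuspMb
    refine MeromorphicAt.mul ?_ (h.mero t)
    refine AnalyticAt.meromorphicAt ?_
    have : (b:ℂ) ∈ Complex.slitPlane := Complex.ofReal_mem_slitPlane.2 hb
    exact AnalyticAt.cpow analyticAt_const (by fun_prop) this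
  mellin := by
    intro t ht ht1
    have e := integral_comp_mul_left_Ioi
      (fun v : ℝ => ((b * v : ℝ) : ℂ) ^ (-2 * t) * (cuspF b q φ (b * v) : ℂ)) 0 (inv_pos.2 hb)
    have hb0 : (b:ℂ) ≠ 0 := Complex.ofReal_ne_zero.2 hb.ne'
    have e2 : ∀ v : ℝ, b * (b⁻¹ * v) = v := fun v => by field_simp
    simp only [e2, inv_inv, mul_zero] at e
    rw [e, cuspMb, ← h.mellin t ht ht1, ← integral_const_mul, ← integral_smul]
    refine setIntegral_congr_fun measurableSet_Ioi fun v hv => ?_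
    have hv : 0 < v := hv
    have e3 : b * v / b = v := by field_simp
    simp only [cuspF, e3]
    push_cast
    rw [Complex.mul_cpow_ofReal_nonneg hb.le hv.le, Complex.real_smul,
      show 1 - (q:ℂ) - 2 * t = 1 + -2 * t + -(q:ℂ) by ring, Complex.cpow_add _ _ hb0,
      Complex.cpow_add _ _ hb0, Complex.cpow_one, Complex.cpow_neg, Complex.cpow_natCast]
    ring
  an := by
    intro t ht h'
    unfold cuspMb
    refine DifferentiableAt.mul ?_ (h.an t ht h')
    refine DifferentiableAt.const_cpow (by fun_prop) (Or.inl (Complex.ofReal_ne_zero.2 hb.ne'))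
  taylor := by
    intro N
    obtain ⟨C, hC0, hC⟩ := cuspG_scale_bound h N
    refine ⟨(b ^ q)⁻¹ * (C / b ^ (N + 1)), fun u hu _ => (hC b hb q u hu).trans (le_of_eq ?_)⟩
    rw [div_pow]; ring

lemma cusp_rpow_cpow {x : ℝ} (hx : 0 < x) (e : ℝ) (z : ℂ) :
    ((x ^ e : ℝ) : ℂ) ^ z = (x : ℂ) ^ (e * z) := by
  rw [Complex.cpow_def_of_ne_zero (Complex.ofReal_ne_zero.2 (by positivity)),
    Complex.cpow_def_of_ne_zero (Complex.ofReal_ne_zero.2 hx.ne'), ← Complex.ofReal_log (by positivity),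
    ← Complex.ofReal_log hx.le, Real.log_rpow hx]
  push_cast
  ring_nf


lemma cuspT_orig {δ : ℝ} (hδ : 0 ≤ δ) (p : ℝ) (f : ℝ → ℝ) (k : ℕ) (s : ℂ) :
    (cuspN k : ℂ) ^ (p:ℂ) * ∫ u in Set.Ioi (cuspN k ^ (δ - 1)),
      ((cuspN k ^ 2 * u ^ 2 - 1/4 : ℝ) : ℂ) ^ (-s) * (f u : ℂ) = cuspT δ p f 0 k s := by
  have hn := cuspN_pos k
  have hn0 := cuspN_ne k
  have hpos : 0 < cuspN k ^ (δ - 1) := Real.rpow_pos_of_pos hn _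
  have e := integral_comp_mul_left_Ioi
    (fun u : ℝ => ((cuspN k ^ 2 * u ^ 2 - 1/4 : ℝ) : ℂ) ^ (-s) * (f u : ℂ)) 1 hpos
  rw [mul_one] at e
  have e2 : ∫ u in Set.Ioi (cuspN k ^ (δ - 1)),
      ((cuspN k ^ 2 * u ^ 2 - 1/4 : ℝ) : ℂ) ^ (-s) * (f u : ℂ) = (cuspN k ^ (δ - 1)) •
      ∫ x in Set.Ioi (1:ℝ), ((cuspN k ^ 2 * (cuspN k ^ (δ - 1) * x) ^ 2 - 1/4 : ℝ) : ℂ) ^ (-s) *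
        (f (cuspN k ^ (δ - 1) * x) : ℂ) := by
    rw [e, smul_smul, mul_inv_cancel₀ hpos.ne', one_smul]
  have hI : ∫ x in Set.Ioi (1:ℝ), ((cuspN k ^ 2 * (cuspN k ^ (δ - 1) * x) ^ 2 - 1/4 : ℝ) : ℂ) ^ (-s) *
        (f (cuspN k ^ (δ - 1) * x) : ℂ) = (cuspN k : ℂ) ^ (-(2 * δ * s)) * ∫ x in Set.Ioi (1:ℝ),
      (x : ℂ) ^ (-2 * s) * cuspR 0 s (1 / (4 * (cuspN k ^ δ * x) ^ 2)) *
        (f (cuspN k ^ (δ - 1) * x) : ℂ) := by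
    rw [← integral_const_mul]
    refine setIntegral_congr_fun measurableSet_Ioi fun x hx => ?_
    have hx : 1 < x := hx
    have hx0 : 0 < x := by linarith
    obtain ⟨h1, h2⟩ := cusp_y_mem hδ k hx
    have hd : 0 < cuspN k ^ δ := Real.rpow_pos_of_pos hn _
    have e3 : cuspN k ^ 2 * (cuspN k ^ (δ - 1) * x) ^ 2 - 1/4 =
        (cuspN k ^ δ * x) ^ 2 * (1 - 1 / (4 * (cuspN k ^ δ * x) ^ 2)) := by
      rw [Real.rpow_sub_one hn.ne']
      field_simp
    have e4 : (((cuspN k ^ δ * x) ^ 2 : ℝ) : ℂ) ^ (-s) =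
        (cuspN k : ℂ) ^ (-(2 * δ * s)) * (x:ℂ) ^ (-2 * s) := by
      rw [mul_pow, Complex.ofReal_mul, Complex.mul_cpow_ofReal_nonneg (by positivity) (by positivity),
        ← Real.rpow_natCast, ← Real.rpow_mul hn.le, cuspN_rpow_cpow, ← Real.rpow_natCast x,
        cusp_rpow_cpow hx0]
      push_cast
      congr 2 <;> ring
    rw [e3, Complex.ofReal_mul, Complex.mul_cpow_ofReal_nonneg (by positivity) (by linarith), e4]
    simp only [cuspR, Finset.range_zero, Finset.sum_empty, sub_zero]
    ring
  rw [e2, hI, cuspT, show (p:ℂ) + δ - 1 - 2 * δ * s = p + ((δ - 1 : ℝ) : ℂ) + -(2 * δ * s) by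
    push_cast; ring, Complex.cpow_add _ _ hn0, Complex.cpow_add _ _ hn0, Complex.real_smul,
    Complex.ofReal_cpow hn.le]
  ring

lemma cuspN_cast (k : ℕ) : ((k + 1 : ℕ) : ℝ) = cuspN k := by unfold cuspN; push_cast; rfl

lemma cusp_dens0 {b : ℝ} (hb : 0 < b) (u : ℝ) : u / (u ^ 2 + b ^ 2) = cuspF b 1 cuspPhi0 u := by
  unfold cuspF cuspPhi0
  field_simp
  ring

lemma cusp_dens1 (b u : ℝ) : Real.arsinh (u / b) = cuspF b 0 cuspPhi1 u := by
  simp [cuspF, cuspPhi1]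

lemma cusp_dens2 {b : ℝ} (hb : 0 < b) (u : ℝ) :
    (u * (u ^ 2 + b ^ 2) ^ (-(3 : ℝ) / 2) / 24) * (13 - 15 * u ^ 2 * (u ^ 2 + b ^ 2)⁻¹) =
      cuspF b 2 cuspPhi2 u := by
  unfold cuspF cuspPhi2
  have e : u ^ 2 + b ^ 2 = b ^ 2 * (1 + (u / b) ^ 2) := by field_simp; ring
  have e2 : (b ^ 2) ^ (-(3:ℝ)/2) = (b ^ 3)⁻¹ := by
    rw [← Real.rpow_natCast, ← Real.rpow_mul hb.le, ← Real.rpow_natCast, ← Real.rpow_neg hb.le]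
    norm_num
  rw [e, Real.mul_rpow (by positivity) (by positivity), e2]
  generalize (1 + (u / b) ^ 2) ^ (-(3:ℝ)/2) = X
  field_simp

noncomputable def cuspSum (δ b : ℝ) (J : ℕ) (s : ℂ) : ℂ :=
  (Complex.sin ((Real.pi : ℂ) * s) / (Real.pi : ℂ)) *
    (-cuspS δ 0 (cuspF b 1 cuspPhi0) (cuspMb b 1 cuspM0) (cuspCb b 1 (cuspC cuspPhi0)) J s +
      2 * cuspS δ 1 (cuspF b 0 cuspPhi1) (cuspMb b 0 cuspM1) (cuspCb b 0 (cuspC cuspPhi1)) J s +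
      2 * cuspS δ (-1) (cuspF b 2 cuspPhi2) (cuspMb b 2 cuspM2) (cuspCb b 2 (cuspC cuspPhi2)) J s)

lemma cuspE_eq {a δ : ℝ} (ha : 0 < a) (hδ : 0 ≤ δ) (k : ℕ) (s : ℂ) :
    cuspE a δ (k + 1) s = (Complex.sin ((Real.pi : ℂ) * s) / (Real.pi : ℂ)) *
    (-cuspT δ 0 (cuspF (2 * Real.pi * a) 1 cuspPhi0) 0 k s +
      2 * cuspT δ 1 (cuspF (2 * Real.pi * a) 0 cuspPhi1) 0 k s +
      2 * cuspT δ (-1) (cuspF (2 * Real.pi * a) 2 cuspPhi2) 0 k s) := by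
  have hb : 0 < 2 * Real.pi * a := by positivity
  rw [← cuspT_orig hδ 0, ← cuspT_orig hδ 1, ← cuspT_orig hδ (-1)]
  unfold cuspE cuspE0 cuspE1 cuspE2
  have hk : ((k + 1 : ℕ) : ℂ) = (cuspN k : ℂ) := by rw [← cuspN_cast]; push_cast; rfl
  simp only [cusp_dens0 hb, cusp_dens1, cusp_dens2 hb, cuspN_cast, hk]
  rw [Complex.ofReal_zero, Complex.cpow_zero, Complex.ofReal_one, Complex.cpow_one,
    Complex.ofReal_neg, Complex.ofReal_one, Complex.cpow_neg_one]
  ring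

lemma cuspE_bound {a δ : ℝ} (ha : 0 < a) (hδ : 0 < δ) (s₀ : ℂ) (hs₀ : 1 < s₀.re) :
    ∃ V ∈ 𝓝 s₀, ∃ u : ℕ → ℝ, Summable u ∧ ∀ k, ∀ s ∈ V, ‖cuspE a δ (k + 1) s‖ ≤ u k := by
  have hb : 0 < 2 * Real.pi * a := by positivity
  obtain ⟨A0, h0, -⟩ := (cuspData_scale cuspData0 hb 1).bd
  obtain ⟨A1, h1, -⟩ := (cuspData_scale cuspData1 hb 0).bd
  obtain ⟨A2, h2, -⟩ := (cuspData_scale cuspData2 hb 2).bd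
  have hs : 1 - ((0:ℕ):ℝ) < s₀.re := by simpa using hs₀
  obtain ⟨V0, hV0, u0, hu0, b0⟩ := cuspT_bound hδ (zero_le_one) h0 0 s₀ hs
  obtain ⟨V1, hV1, u1, hu1, b1⟩ := cuspT_bound hδ le_rfl h1 0 s₀ hs
  obtain ⟨V2, hV2, u2, hu2, b2⟩ := cuspT_bound hδ (by norm_num : (-1:ℝ) ≤ 1) h2 0 s₀ hs
  have hc : ContinuousAt (fun s : ℂ => ‖Complex.sin ((Real.pi : ℂ) * s) / (Real.pi : ℂ)‖) s₀ := by
    fun_prop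
  have hV3 := hc.eventually (gt_mem_nhds (lt_add_one _))
  set c := ‖Complex.sin ((Real.pi : ℂ) * s₀) / (Real.pi : ℂ)‖ + 1
  refine ⟨_, inter_mem (inter_mem hV0 hV1) (inter_mem hV2 hV3),
    fun k => c * (u0 k + 2 * u1 k + 2 * u2 k), ((hu0.add (hu1.mul_left 2)).add
      (hu2.mul_left 2)).mul_left c, ?_⟩
  rintro k s ⟨⟨m0, m1⟩, m2, m3⟩
  rw [cuspE_eq ha hδ.le, norm_mul]
  have m3 : ‖Complex.sin ((Real.pi : ℂ) * s) / (Real.pi : ℂ)‖ < c := m3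
  refine mul_le_mul m3.le ?_ (norm_nonneg _) ((norm_nonneg _).trans m3.le)
  refine (norm_add_le _ _).trans (add_le_add ((norm_add_le _ _).trans (add_le_add ?_ ?_)) ?_)
  · rw [norm_neg]; exact b0 k s m0
  · rw [norm_mul, Complex.norm_two]; exact mul_le_mul_of_nonneg_left (b1 k s m1) zero_le_two
  · rw [norm_mul, Complex.norm_two]; exact mul_le_mul_of_nonneg_left (b2 k s m2) zero_le_two

lemma cuspT_summable {δ : ℝ} (hδ : 0 < δ) {p : ℝ} (hp : p ≤ 1) {f : ℝ → ℝ} {M : ℂ → ℂ} {γ : ℕ → ℝ}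
    (h : CuspData f M γ) {s : ℂ} (hs : 1 < s.re) : Summable (fun k => cuspT δ p f 0 k s) := by
  obtain ⟨A, h0, -⟩ := h.bd
  obtain ⟨V, hV, u, hu, b⟩ := cuspT_bound hδ hp h0 0 s (by simpa using hs)
  exact Summable.of_norm_bounded hu (fun k => b k s (mem_of_mem_nhds hV))

lemma cuspE_tsum {a δ : ℝ} (ha : 0 < a) (hδ : 0 < δ) {s : ℂ} (hs : 1 < s.re) :
    ∑' k, cuspE a δ (k + 1) s = cuspSum δ (2 * Real.pi * a) 0 s := by
  have hb : 0 < 2 * Real.pi * a := by positivity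
  have h0 := (cuspT_summable hδ zero_le_one (cuspData_scale cuspData0 hb 1) hs).hasSum.neg
  have h1 := (cuspT_summable hδ le_rfl (cuspData_scale cuspData1 hb 0) hs).hasSum.mul_left 2
  have h2 := (cuspT_summable hδ (by norm_num : (-1:ℝ) ≤ 1)
    (cuspData_scale cuspData2 hb 2) hs).hasSum.mul_left 2
  have := ((h0.add h1).add h2).mul_left (Complex.sin ((Real.pi : ℂ) * s) / (Real.pi : ℂ))
  simp only [cuspE_eq ha hδ.le]
  rw [this.tsum_eq]
  simp [cuspSum, cuspS]

lemma cuspSum_mero {δ b : ℝ} (hδ0 : 0 < δ) (hδ : δ < 1/2) (hb : 0 < b) (J : ℕ) {s : ℂ}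
    (hs : 1 - (J:ℝ) < s.re) (hs2 : s.re < 2) : MeromorphicAt (cuspSum δ b J) s := by
  have h0 := cuspS_mero hδ0 hδ zero_le_one (cuspData_scale cuspData0 hb 1) J hs hs2
  have h1 := cuspS_mero hδ0 hδ le_rfl (cuspData_scale cuspData1 hb 0) J hs hs2
  have h2 := cuspS_mero hδ0 hδ (by norm_num : (-1:ℝ) ≤ 1) (cuspData_scale cuspData2 hb 2) J hs hs2
  have h3 : MeromorphicAt (fun s : ℂ => Complex.sin ((Real.pi : ℂ) * s) / (Real.pi : ℂ)) s :=
    AnalyticAt.meromorphicAt (by fun_prop)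
  exact h3.mul ((h0.neg.add ((MeromorphicAt.const 2 s).mul h1)).add
    ((MeromorphicAt.const 2 s).mul h2))

lemma cuspSum_an {δ b : ℝ} (hδ0 : 0 < δ) (hb : 0 < b) {s : ℂ}
    (hs : 1 < s.re) : AnalyticAt ℂ (cuspSum δ b 0) s := by
  have ho : IsOpen {s : ℂ | 1 - ((0:ℕ):ℝ) < s.re} := cusp_strip_open' _
  have hm : {s : ℂ | 1 - ((0:ℕ):ℝ) < s.re} ∈ 𝓝 s := ho.mem_nhds (by simpa using hs)
  have h0 := (cuspT_sum_diff hδ0 zero_le_one (cuspData_scale cuspData0 hb 1) 0).analyticAt hm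
  have h1 := (cuspT_sum_diff hδ0 le_rfl (cuspData_scale cuspData1 hb 0) 0).analyticAt hm
  have h2 := (cuspT_sum_diff hδ0 (by norm_num : (-1:ℝ) ≤ 1)
    (cuspData_scale cuspData2 hb 2) 0).analyticAt hm
  unfold cuspSum cuspS
  simp only [Finset.range_zero, Finset.sum_empty, zero_add]
  have h3 : AnalyticAt ℂ (fun s : ℂ => Complex.sin ((Real.pi : ℂ) * s) / (Real.pi : ℂ)) s := by
    fun_prop
  exact h3.mul ((h0.neg.add (analyticAt_const.mul h1)).add (analyticAt_const.mul h2))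

lemma cuspSum_eq {δ b : ℝ} (hδ0 : 0 < δ) (hδ : δ < 1/2) (hb : 0 < b) (J : ℕ) {s : ℂ}
    (hs : 1 < s.re) (hs2 : s.re < 3/2) : cuspSum δ b J s = cuspSum δ b 0 s := by
  unfold cuspSum
  rw [cuspS_eq hδ0 hδ zero_le_one (cuspData_scale cuspData0 hb 1) J hs hs2,
    cuspS_eq hδ0 hδ le_rfl (cuspData_scale cuspData1 hb 0) J hs hs2,
    cuspS_eq hδ0 hδ (by norm_num : (-1:ℝ) ≤ 1) (cuspData_scale cuspData2 hb 2) J hs hs2]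
  simp [cuspS]

lemma cusp_exists_F {δ b : ℝ} (hδ0 : 0 < δ) (hδ : δ < 1/2) (hb : 0 < b) :
    ∃ F : ℂ → ℂ, (∀ z, MeromorphicNFAt F z) ∧ ∀ J : ℕ, ∀ z : ℂ, 1 - (J:ℝ) < z.re → z.re < 2 →
      F =ᶠ[𝓝[≠] z] cuspSum δ b J := by
  have hO : ∀ J : ℕ, IsOpen {s : ℂ | 1 - (J:ℝ) < s.re ∧ s.re < 2} := fun J =>
    (cusp_strip_open' _).inter (cusp_strip_open 2)
  have hV : IsOpen {s : ℂ | 1 < s.re ∧ s.re < 3/2} := (cusp_strip_open' _).inter (cusp_strip_open _)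
  let D : Option ℕ → Set ℂ := fun i => match i with
      | none => {s : ℂ | 1 < s.re}
      | some J => {s : ℂ | 1 - (J:ℝ) < s.re ∧ s.re < 2}
  let f : Option ℕ → ℂ → ℂ := fun i => match i with
      | none => cuspSum δ b 0
      | some J => cuspSum δ b J
  have key : ∃ F : ℂ → ℂ, (∀ z, MeromorphicNFAt F z) ∧ ∀ i, ∀ z ∈ D i, F =ᶠ[𝓝[≠] z] f i := by
    refine cusp_glue D f {s : ℂ | 1 < s.re ∧ s.re < 3/2} hV
      ⟨((5/4 : ℝ) : ℂ), ?_⟩ ?_ ?_ ?_ ?_ ?_ ?_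
    · constructor <;> rw [Complex.ofReal_re] <;> norm_num
    · rintro (_ | J)
      · exact cusp_strip_open' 1
      · exact hO J
    · rintro (_ | J)
      · exact convex_halfSpace_re_gt 1
      · exact (convex_halfSpace_re_gt _).inter (convex_halfSpace_re_lt _)
    · rintro (_ | J) s ⟨hs, hs2⟩
      · exact hs
      · refine ⟨?_, by linarith⟩
        have : (0:ℝ) ≤ J := Nat.cast_nonneg J
        linarith
    · rintro (_ | J) s hs
      · exact (cuspSum_an hδ0 hb hs).meromorphicAt
      · exact cuspSum_mero hδ0 hδ hb J hs.1 hs.2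
    · rintro (_ | J) (_ | K) s ⟨hs, hs2⟩
      · rfl
      · exact (cuspSum_eq hδ0 hδ hb K hs hs2).symm
      · exact cuspSum_eq hδ0 hδ hb J hs hs2
      · exact (cuspSum_eq hδ0 hδ hb J hs hs2).trans (cuspSum_eq hδ0 hδ hb K hs hs2).symm
    · intro z
      by_cases h : 1 < z.re
      · exact ⟨none, h⟩
      · obtain ⟨J, hJ⟩ := exists_nat_gt (1 - z.re)
        exact ⟨some J, by linarith, by linarith⟩
  obtain ⟨F, h1, h2⟩ := key
  exact ⟨F, h1, fun J z hz hz2 => h2 (some J) z ⟨hz, hz2⟩⟩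

lemma cusp_NF_eq {F g : ℂ → ℂ} {z : ℂ} (hF : MeromorphicNFAt F z) (hg : AnalyticAt ℂ g z)
    (h : F =ᶠ[𝓝[≠] z] g) : F =ᶠ[𝓝 z] g :=
  (hF.eventuallyEq_nhdsNE_iff_eventuallyEq_nhds hg.meromorphicNFAt).1 h

/-- everything in the first part of the theorem, given analyticity at zero of a local model -/
lemma cusp_part1 {δ : ℝ} (hδ0 : 0 < δ) (hδ : δ < 1/2) {a : ℝ} (ha : 0 < a) :
    (∀ s ∈ {s : ℂ | 1 < s.re ∧ s.re < 2}, Summable (fun k : ℕ => ‖cuspE a δ (k + 1) s‖)) ∧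
    TendstoLocallyUniformlyOn
          (fun (n : ℕ) (s : ℂ) => ∑ k ∈ Finset.range n, cuspE a δ (k + 1) s)
          (fun s : ℂ => ∑' k : ℕ, cuspE a δ (k + 1) s)
          atTop {s : ℂ | 1 < s.re ∧ s.re < 2} ∧
    ∃ F : ℂ → ℂ, MeromorphicOn F Set.univ ∧
        Set.EqOn F (fun s : ℂ => ∑' k : ℕ, cuspE a δ (k + 1) s) {s : ℂ | 1 < s.re ∧ s.re < 2} ∧
        ∀ L : ℂ → ℂ, AnalyticAt ℂ L 0 → cuspSum δ (2 * Real.pi * a) 2 =ᶠ[𝓝[≠] 0] L →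
          F =ᶠ[𝓝 0] L := by
  have hb : 0 < 2 * Real.pi * a := by positivity
  refine ⟨?_, ?_, ?_⟩
  · rintro s ⟨hs, -⟩
    obtain ⟨V, hV, u, hu, b⟩ := cuspE_bound ha hδ0 s hs
    exact Summable.of_nonneg_of_le (fun _ => norm_nonneg _) (fun k => b k s (mem_of_mem_nhds hV)) hu
  · exact cusp_tlu_tsum fun s hs => cuspE_bound ha hδ0 s hs.1
  · obtain ⟨F, h1, h2⟩ := cusp_exists_F hδ0 hδ hb
    refine ⟨F, fun z _ => (h1 z).meromorphicAt, ?_, ?_⟩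
    · rintro s ⟨hs, hs2⟩
      show F s = ∑' k : ℕ, cuspE a δ (k + 1) s
      rw [cuspE_tsum ha hδ0 hs]
      exact (cusp_NF_eq (h1 s) (cuspSum_an hδ0 hb hs) (h2 0 s (by simpa using hs) hs2)).eq_of_nhds
    · intro L hL hL2
      exact cusp_NF_eq (h1 0) hL ((h2 2 0 (by norm_num) (by norm_num)).trans hL2)

noncomputable def cuspSn (s : ℂ) : ℂ := Complex.sin ((Real.pi : ℂ) * s) / (Real.pi : ℂ)
noncomputable def cuspSc (s : ℂ) : ℂ := dslope cuspSn 0 s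

lemma cuspSn_diff : Differentiable ℂ cuspSn := by unfold cuspSn; fun_prop

lemma cuspSn_zero : cuspSn 0 = 0 := by simp [cuspSn]

lemma cuspSn_hasDeriv : HasDerivAt cuspSn 1 0 := by
  have hpi : (Real.pi : ℂ) ≠ 0 := Complex.ofReal_ne_zero.2 Real.pi_ne_zero
  have h1 : HasDerivAt (fun s : ℂ => (Real.pi : ℂ) * s) ((Real.pi : ℂ) * 1) 0 :=
    (hasDerivAt_id (0:ℂ)).const_mul _
  have := (h1.csin).div_const (Real.pi : ℂ)
  refine this.congr_deriv ?_
  simp [hpi]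

lemma cuspSc_diff : Differentiable ℂ cuspSc := by
  have : DifferentiableOn ℂ (dslope cuspSn 0) Set.univ :=
    (Complex.differentiableOn_dslope univ_mem).2 cuspSn_diff.differentiableOn
  exact differentiableOn_univ.1 this

lemma cuspSc_zero : cuspSc 0 = 1 := by
  rw [cuspSc, dslope_same, cuspSn_hasDeriv.deriv]

lemma cuspSn_eq (s : ℂ) : cuspSn s = s * cuspSc s := by
  have := sub_smul_dslope cuspSn 0 s
  rw [cuspSn_zero, sub_zero, sub_zero, smul_eq_mul] at this
  exact this.symm

lemma cuspSn_ne : ∀ᶠ s in 𝓝[≠] (0:ℂ), cuspSn s ≠ 0 := by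
  have h1 : ∀ᶠ s in 𝓝 (0:ℂ), cuspSc s ≠ 0 :=
    cuspSc_diff.continuous.continuousAt.eventually_ne (by rw [cuspSc_zero]; exact one_ne_zero)
  filter_upwards [nhdsWithin_le_nhds h1, self_mem_nhdsWithin] with s hs hs0
  rw [cuspSn_eq]
  exact mul_ne_zero hs0 hs

lemma cusp_zeta_an {z : ℂ} (hz : z ≠ 1) : AnalyticAt ℂ riemannZeta z :=
  (cusp_zeta_mero z).analyticAt (differentiableAt_riemannZeta hz).continuousAt

lemma cusp_zeta_aff (a b : ℂ) {z : ℂ} (hz : a * z + b ≠ 1) :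
    AnalyticAt ℂ (fun s => riemannZeta (a * s + b)) z := by
  have h1 : AnalyticAt ℂ (fun s : ℂ => a * s + b) z := by fun_prop
  exact AnalyticAt.fun_comp (g := riemannZeta) (f := fun s : ℂ => a * s + b) (cusp_zeta_an hz) h1

lemma cusp_zeta_aff' (a b : ℂ) {z : ℂ} (hz : (a * z + b).re ≠ 1) :
    AnalyticAt ℂ (fun s => riemannZeta (a * s + b)) z :=
  cusp_zeta_aff a b (fun h => hz (by rw [h]; rfl))

noncomputable def cuspY (δ p : ℝ) (f : ℝ → ℝ) (γ : ℕ → ℝ) (s : ℂ) : ℂ :=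
  (∑ m ∈ Finset.range 4, (γ m : ℂ) *
    riemannZeta (2 * δ * s + (-p + (1 - δ) * (m + 2))) / (m + 2 - 2 * s)) +
    ∑' k, cuspP δ p (cuspG f γ 4) k s

noncomputable def cuspY1 (δ p : ℝ) (f : ℝ → ℝ) (γ : ℕ → ℝ) (s : ℂ) : ℂ :=
  (∑ m ∈ Finset.range 3, (γ (m + 1) : ℂ) *
    riemannZeta (2 * δ * s + (2 * δ + (-p + (1 - δ) * (m + 3)))) / (m + 1 - 2 * s)) +
    ∑' k, cuspP δ p (cuspG f γ 4) k (s + 1)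

lemma cuspP_sum_an {δ : ℝ} (hδ0 : 0 < δ) (hδ : δ < 1/8) {p : ℝ} (hp : p ≤ 1) {f : ℝ → ℝ} {M : ℂ → ℂ}
    {γ : ℕ → ℝ} (h : CuspData f M γ) {z : ℂ} (hz : 0 ≤ z.re) (hz2 : z.re < 3) :
    AnalyticAt ℂ (fun t => ∑' k, cuspP δ p (cuspG f γ 4) k t) z := by
  refine (cuspP_sum_diff hδ0 (by linarith) p h 4).analyticAt ((cuspP_dom_open δ p 4).mem_nhds ?_)
  refine ⟨by push_cast; linarith, ?_⟩
  have : 0 ≤ δ * z.re := by positivity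
  push_cast
  nlinarith

lemma cuspY_an {δ : ℝ} (hδ0 : 0 < δ) (hδ : δ < 1/8) {p : ℝ} (hp : p = 0 ∨ p = 1 ∨ p = -1)
    {f : ℝ → ℝ} {M : ℂ → ℂ} {γ : ℕ → ℝ} (h : CuspData f M γ) : AnalyticAt ℂ (cuspY δ p f γ) 0 := by
  have hp1 : p ≤ 1 := by rcases hp with rfl | rfl | rfl <;> norm_num
  unfold cuspY
  refine AnalyticAt.add ?_ (cuspP_sum_an hδ0 hδ hp1 h (by simp) (by simp))
  refine Finset.analyticAt_fun_sum _ fun m hm => ?_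
  refine AnalyticAt.div (analyticAt_const.mul (cusp_zeta_aff' _ _ ?_)) (by fun_prop) ?_
  · have : ((2 * δ * 0 + (-p + (1 - δ) * (m + 2)) : ℂ)).re = -p + (1 - δ) * (m + 2) := by
      simp
    rw [this]
    rcases hp with rfl | rfl | rfl
    · have : (0:ℝ) ≤ m := Nat.cast_nonneg m
      nlinarith
    · rcases m with _ | m
      · push_cast; intro h; linarith
      · have : (0:ℝ) ≤ m := Nat.cast_nonneg m
        push_cast; nlinarith
    · have : (0:ℝ) ≤ m := Nat.cast_nonneg m
      nlinarith
  · refine cusp_ne_of_re ?_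
    simp
    positivity

lemma cuspY1_an {δ : ℝ} (hδ0 : 0 < δ) (hδ : δ < 1/8) {p : ℝ} (hp1 : p ≤ 1)
    {f : ℝ → ℝ} {M : ℂ → ℂ} {γ : ℕ → ℝ} (h : CuspData f M γ) : AnalyticAt ℂ (cuspY1 δ p f γ) 0 := by
  unfold cuspY1
  have h1 : AnalyticAt ℂ (fun t => ∑' k, cuspP δ p (cuspG f γ 4) k t) (0 + 1) :=
    cuspP_sum_an hδ0 hδ hp1 h (by simp) (by simp)
  have h2 : AnalyticAt ℂ (fun t : ℂ => t + 1) 0 := by fun_prop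
  have h3 := AnalyticAt.fun_comp (g := fun t => ∑' k, cuspP δ p (cuspG f γ 4) k t)
    (f := fun t : ℂ => t + 1) h1 h2
  refine AnalyticAt.add ?_ h3
  refine Finset.analyticAt_fun_sum _ fun m hm => ?_
  have hm : (0:ℝ) ≤ m := Nat.cast_nonneg m
  refine AnalyticAt.div (analyticAt_const.mul (cusp_zeta_aff' _ _ ?_)) (by fun_prop) ?_
  · have : ((2 * δ * 0 + (2 * δ + (-p + (1 - δ) * (m + 3))) : ℂ)).re =
      2 * δ + (-p + (1 - δ) * (m + 3)) := by
      simp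
    rw [this]
    nlinarith
  · refine cusp_ne_of_re ?_
    simp
    positivity

lemma cuspT_sum_zero (δ p : ℝ) (f : ℝ → ℝ) : ∑' k, cuspT δ p f 2 k 0 = 0 := by
  have : ∀ y, cuspR 2 0 y = 0 := by
    intro y
    simp [cuspR, Finset.sum_range_succ, cuspA]
  simp [cuspT, this]

lemma cuspS_two (δ p : ℝ) (f : ℝ → ℝ) (M : ℂ → ℂ) (γ : ℕ → ℝ) {s : ℂ} (hs : s ≠ 0) :
    cuspS δ p f M γ 2 s = riemannZeta (2 * s + -p) * M s +
      s * (riemannZeta (2 * s + (2 - p)) * M (s + 1)) / 4 +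
      (-cuspY δ p f γ s - s / 4 * cuspY1 δ p f γ s + ∑' k, cuspT δ p f 2 k s) +
      γ 0 / 8 * riemannZeta (2 * δ * s + (2 - p)) := by
  have e1 : cuspGf δ p f M γ (2 * 2) (s + ((0:ℕ):ℂ)) =
      riemannZeta (2 * s + -p) * M s - cuspY δ p f γ s := by
    unfold cuspGf cuspY
    simp only [Nat.cast_zero, add_zero, show 2 * 2 = 4 from rfl]
    ring
  have e2 : cuspGf δ p f M γ (2 * 2) (s + ((1:ℕ):ℂ)) =
      riemannZeta (2 * s + (2 - p)) * M (s + 1) + γ 0 * riemannZeta (2 * δ * s + (2 - p)) / (2 * s)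
        - cuspY1 δ p f γ s := by
    unfold cuspGf cuspY1
    simp only [Nat.cast_one, show 2 * 2 = 3 + 1 from rfl]
    rw [Finset.sum_range_succ']
    have e3 : ∀ m : ℕ, (γ (m + 1) : ℂ) * riemannZeta (2 * δ * (s + 1) +
        (-p + (1 - δ) * (((m + 1 : ℕ) : ℂ) + 2))) / (((m + 1 : ℕ) : ℂ) + 2 - 2 * (s + 1)) =
        (γ (m + 1) : ℂ) *
          riemannZeta (2 * δ * s + (2 * δ + (-p + (1 - δ) * (m + 3)))) / (m + 1 - 2 * s) := by
      intro m
      congr 1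
      · congr 2; push_cast; ring
      · push_cast; ring
    simp only [e3]
    rw [show 2 * (s + 1) + -(p:ℂ) = 2 * s + (2 - p) by ring,
      show 2 * δ * (s + 1) + (-(p:ℂ) + (1 - δ) * (((0:ℕ):ℂ) + 2)) = 2 * δ * s + (2 - p) by
        push_cast; ring,
      show ((0:ℕ):ℂ) + 2 - 2 * (s + 1) = -(2 * s) by push_cast; ring, div_neg]
    ring
  unfold cuspS
  rw [Finset.sum_range_succ, Finset.sum_range_one, e1, e2]
  simp only [cuspA, pow_zero, pow_one]
  field_simp
  ring

/-- local model at zero -/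
lemma cusp_local {δ : ℝ} (hδ0 : 0 < δ) (hδ : δ < 1/8) {p : ℝ} (hp : p = 0 ∨ p = 1 ∨ p = -1)
    {f : ℝ → ℝ} {M : ℂ → ℂ} {γ : ℕ → ℝ} (h : CuspData f M γ) {A B Z : ℂ → ℂ}
    (hA : AnalyticAt ℂ A 0) (hB : AnalyticAt ℂ B 0) (hZ : AnalyticAt ℂ Z 0)
    (eA : A =ᶠ[𝓝[≠] 0] fun s => cuspSn s * (riemannZeta (2 * s + -p) * M s))
    (eB : B =ᶠ[𝓝[≠] 0] fun s => cuspSn s * (s * (riemannZeta (2 * s + (2 - p)) * M (s + 1))))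
    (eZ : Z =ᶠ[𝓝[≠] 0] fun s => cuspSn s * riemannZeta (2 * δ * s + (2 - p))) :
    ∃ L : ℂ → ℂ, AnalyticAt ℂ L 0 ∧ (fun s => cuspSn s * cuspS δ p f M γ 2 s) =ᶠ[𝓝[≠] 0] L ∧
      deriv L 0 = deriv A 0 + deriv B 0 / 4 - cuspY δ p f γ 0 + γ 0 / 8 * deriv Z 0 := by
  have hp1 : p ≤ 1 := by rcases hp with rfl | rfl | rfl <;> norm_num
  have hY := cuspY_an hδ0 hδ hp h
  have hY1 := cuspY1_an hδ0 hδ hp1 h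
  have hR : AnalyticAt ℂ (fun s => ∑' k, cuspT δ p f 2 k s) 0 := by
    refine (cuspT_sum_diff hδ0 hp1 h 2).analyticAt ((cusp_strip_open' _).mem_nhds ?_)
    simp
  have hS := cuspSn_diff.analyticAt 0
  have hX : AnalyticAt ℂ (fun s => -cuspY δ p f γ s - s / 4 * cuspY1 δ p f γ s +
      ∑' k, cuspT δ p f 2 k s) 0 := by fun_prop
  have hX0 : (fun s => -cuspY δ p f γ s - s / 4 * cuspY1 δ p f γ s +
      ∑' k, cuspT δ p f 2 k s) 0 = -cuspY δ p f γ 0 := by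
    simp only [cuspT_sum_zero]; ring
  set X : ℂ → ℂ := (fun s => -cuspY δ p f γ s - s / 4 * cuspY1 δ p f γ s +
      ∑' k, cuspT δ p f 2 k s) with hXdef
  refine ⟨fun s => A s + B s / 4 + cuspSn s * X s + γ 0 / 8 * Z s, ?_, ?_, ?_⟩
  · fun_prop
  · filter_upwards [eA, eB, eZ, self_mem_nhdsWithin] with s h1 h2 h3 hs
    rw [cuspS_two δ p f M γ hs, h1, h2, h3, hXdef]
    ring
  · have d := (((hA.differentiableAt.hasDerivAt).add (hB.differentiableAt.hasDerivAt.div_const 4)).add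
      (cuspSn_hasDeriv.mul hX.differentiableAt.hasDerivAt)).add
      (hZ.differentiableAt.hasDerivAt.const_mul ((γ 0 : ℂ) / 8))
    have := d.deriv
    rw [cuspSn_zero, hX0] at this
    refine this.trans ?_
    ring

lemma cuspY_bound {δ : ℝ} (hδ0 : 0 < δ) (hδ : δ < 1/8) {p : ℝ} (hp1 : p ≤ 1) :
    ∃ K : ℝ, 0 ≤ K ∧ ∀ (f : ℝ → ℝ) (γ : ℕ → ℝ) (C : ℝ),
      (∀ u, 0 < u → u ≤ 1 → |cuspG f γ 4 u| ≤ C * u ^ (4 + 1)) →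
      ‖cuspY δ p f γ 0‖ ≤ K * ((∑ m ∈ Finset.range 4, |γ m|) + C) := by
  set I : ℝ := ∫ x in Set.Ioc (0:ℝ) 1, x ^ (((4:ℕ):ℝ) + 1 - 2 * 0) with hI
  have hI0 : 0 ≤ I := setIntegral_nonneg measurableSet_Ioc fun x hx => Real.rpow_nonneg hx.1.le _
  set e : ℝ := p - 2 * δ * 0 - (1 - δ) * (((4:ℕ):ℝ) + 2) with he
  have he1 : e < -1 := by rw [he]; push_cast; nlinarith
  have hs := cuspN_summable he1
  set Zc : ℕ → ℝ := fun m => ‖riemannZeta (2 * δ * 0 + (-p + (1 - δ) * (m + 2))) / (m + 2 - 2 * 0)‖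
  set K1 : ℝ := ∑ m ∈ Finset.range 4, Zc m with hK1
  set K2 : ℝ := I * ∑' k, cuspN k ^ e with hK2
  have hK10 : 0 ≤ K1 := Finset.sum_nonneg fun m _ => norm_nonneg _
  have hK20 : 0 ≤ K2 := mul_nonneg hI0 (tsum_nonneg fun k => (Real.rpow_pos_of_pos (cuspN_pos k) _).le)
  refine ⟨K1 + K2, by positivity, fun f γ C hC => ?_⟩
  have hC0 : 0 ≤ C := by simpa using (abs_nonneg _).trans (hC 1 one_pos le_rfl)
  have hg0 : 0 ≤ ∑ m ∈ Finset.range 4, |γ m| := Finset.sum_nonneg fun m _ => abs_nonneg _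
  unfold cuspY
  have h1 : ‖∑ m ∈ Finset.range 4, (γ m : ℂ) *
      riemannZeta (2 * δ * 0 + (-p + (1 - δ) * (m + 2))) / (m + 2 - 2 * 0)‖ ≤
      K1 * ∑ m ∈ Finset.range 4, |γ m| := by
    refine (norm_sum_le _ _).trans ?_
    rw [Finset.mul_sum]
    refine Finset.sum_le_sum fun m hm => ?_
    rw [mul_div_assoc, norm_mul, Complex.norm_real, Real.norm_eq_abs, mul_comm]
    refine mul_le_mul_of_nonneg_right ?_ (abs_nonneg _)
    exact Finset.single_le_sum (f := Zc) (fun i _ => norm_nonneg _) hm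
  have h2 : ‖∑' k, cuspP δ p (cuspG f γ 4) k 0‖ ≤ K2 * C := by
    have hb : ∀ k, ‖cuspP δ p (cuspG f γ 4) k 0‖ ≤ C * I * cuspN k ^ e := fun k =>
      cuspP_norm_le hδ0.le (by linarith) p hC k (σ₀ := 0) (σ₁ := 0) (by simp) (by simp)
        (by norm_num)
    refine (tsum_of_norm_bounded (hs.mul_left (C * I)).hasSum hb).trans (le_of_eq ?_)
    rw [tsum_mul_left, hK2]; ring
  refine (norm_add_le _ _).trans ((add_le_add h1 h2).trans ?_)
  nlinarith [mul_nonneg hK10 hC0, mul_nonneg hK20 hg0]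

lemma cusp_cpow_deriv {b : ℝ} (hb : 0 < b) (c : ℂ) {α : ℂ → ℂ} (hα : AnalyticAt ℂ α 0) :
    HasDerivAt (fun s : ℂ => (b:ℂ) ^ (c - 2 * s) * α s)
      ((b:ℂ) ^ c * (deriv α 0 - 2 * Real.log b * α 0)) 0 := by
  have hb0 : (b:ℂ) ≠ 0 := Complex.ofReal_ne_zero.2 hb.ne'
  have h0 : HasDerivAt (fun s : ℂ => c - 2 * s) (-(2 * 1)) 0 :=
    ((hasDerivAt_id (0:ℂ)).const_mul 2).const_sub c
  have h1 := h0.const_cpow (c := (b:ℂ)) (Or.inl hb0)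
  refine (h1.mul hα.differentiableAt.hasDerivAt).congr_deriv ?_
  rw [Complex.ofReal_log hb.le]
  simp only [mul_zero, sub_zero]
  ring

lemma cusp_generic {δ : ℝ} (hδ0 : 0 < δ) (hδ : δ < 1/8) {p : ℝ} (hp : p = 0 ∨ p = 1 ∨ p = -1)
    {φ : ℝ → ℝ} {M : ℂ → ℂ} {c : ℕ → ℝ} (h : CuspData φ M c) (q : ℕ) {α β Z : ℂ → ℂ}
    (hA : AnalyticAt ℂ α 0) (hB : AnalyticAt ℂ β 0) (hZ : AnalyticAt ℂ Z 0)
    (eA : α =ᶠ[𝓝[≠] 0] fun s => cuspSn s * (riemannZeta (2 * s + -p) * M s))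
    (eB : β =ᶠ[𝓝[≠] 0] fun s => cuspSn s * (s * (riemannZeta (2 * s + (2 - p)) * M (s + 1))))
    (eZ : Z =ᶠ[𝓝[≠] 0] fun s => cuspSn s * riemannZeta (2 * δ * s + (2 - p))) :
    ∃ K : ℝ, ∀ b : ℝ, 0 < b → ∃ L : ℂ → ℂ, AnalyticAt ℂ L 0 ∧
      (fun s => cuspSn s * cuspS δ p (cuspF b q φ) (cuspMb b q M) (cuspCb b q c) 2 s) =ᶠ[𝓝[≠] 0] L ∧
      (1 ≤ b → ‖deriv L 0 - ((b:ℂ) ^ (1 - (q:ℂ)) * (deriv α 0 - 2 * Real.log b * α 0) +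
        (b:ℂ) ^ (-1 - (q:ℂ)) * (deriv β 0 - 2 * Real.log b * β 0) / 4)‖ ≤ K / b) := by
  have hp1 : p ≤ 1 := by rcases hp with rfl | rfl | rfl <;> norm_num
  obtain ⟨K0, hK0, hK⟩ := cuspY_bound hδ0 hδ hp1
  obtain ⟨C, hC0, hC⟩ := cuspG_scale_bound h 4
  refine ⟨K0 * ((∑ m ∈ Finset.range 4, |c m|) + C) + |c 0| / 8 * ‖deriv Z 0‖, fun b hb => ?_⟩
  have hb0 : (b:ℂ) ≠ 0 := Complex.ofReal_ne_zero.2 hb.ne'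
  have hpow : ∀ c₀ : ℂ, AnalyticAt ℂ (fun s : ℂ => (b:ℂ) ^ (c₀ - 2 * s)) 0 := fun c₀ =>
    AnalyticAt.cpow analyticAt_const (by fun_prop) (Complex.ofReal_mem_slitPlane.2 hb)
  obtain ⟨L, hL, hL2, hL3⟩ := cusp_local hδ0 hδ hp (cuspData_scale h hb q)
    (A := fun s : ℂ => (b:ℂ) ^ ((1 - (q:ℂ)) - 2 * s) * α s)
    (B := fun s : ℂ => (b:ℂ) ^ ((-1 - (q:ℂ)) - 2 * s) * β s) (Z := Z)
    ((hpow _).mul hA) ((hpow _).mul hB) hZ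
    (by
      filter_upwards [eA] with s hs
      rw [hs, cuspMb]; ring)
    (by
      filter_upwards [eB] with s hs
      rw [hs, cuspMb, show 1 - (q:ℂ) - 2 * (s + 1) = -1 - (q:ℂ) - 2 * s by ring]; ring) eZ
  refine ⟨L, hL, hL2, fun hb1 => ?_⟩
  rw [hL3, (cusp_cpow_deriv hb _ hA).deriv, (cusp_cpow_deriv hb _ hB).deriv]
  have hγ : ∀ m, |cuspCb b q c m| ≤ |c m| / b := by
    intro m
    unfold cuspCb
    rw [abs_mul, abs_mul, abs_of_pos (by positivity : 0 < (b ^ q)⁻¹),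
      abs_of_pos (by positivity : 0 < (b ^ (m + 1))⁻¹), div_eq_mul_inv]
    have h1 : (b ^ q)⁻¹ ≤ 1 := inv_le_one_of_one_le₀ (one_le_pow₀ hb1)
    have h2 : (b ^ (m + 1))⁻¹ ≤ b⁻¹ := inv_anti₀ hb (le_self_pow₀ hb1 (by omega))
    calc (b ^ q)⁻¹ * (|c m| * (b ^ (m + 1))⁻¹) ≤ 1 * (|c m| * b⁻¹) := by gcongr
      _ = _ := one_mul _
  have hG : ∀ u, 0 < u → u ≤ 1 → |cuspG (cuspF b q φ) (cuspCb b q c) 4 u| ≤ C / b * u ^ (4 + 1) := by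
    intro u hu _
    refine (hC b hb q u hu).trans ?_
    have h1 : (b ^ q)⁻¹ ≤ 1 := inv_le_one_of_one_le₀ (one_le_pow₀ hb1)
    have h2 : (b ^ (4 + 1))⁻¹ ≤ b⁻¹ := inv_anti₀ hb (le_self_pow₀ hb1 (by omega))
    rw [div_pow, div_eq_mul_inv, div_eq_mul_inv]
    calc (b ^ q)⁻¹ * (C * (u ^ (4 + 1) * (b ^ (4 + 1))⁻¹)) ≤ 1 * (C * (u ^ (4 + 1) * b⁻¹)) := by gcongr
      _ = _ := by ring
  have hY := hK _ _ _ hG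
  have hsum : ∑ m ∈ Finset.range 4, |cuspCb b q c m| ≤ (∑ m ∈ Finset.range 4, |c m|) / b := by
    rw [Finset.sum_div]
    exact Finset.sum_le_sum fun m _ => hγ m
  have e : ∀ x y z w : ℂ, x + y - z + w - (x + y) = w - z := fun x y z w => by ring
  rw [e]
  refine (norm_sub_le _ _).trans ?_
  rw [norm_mul, norm_div, Complex.norm_real, Real.norm_eq_abs, add_div, add_comm]
  refine add_le_add (hY.trans ?_) ?_
  · rw [mul_div_assoc, add_div]
    gcongr
  · have h8 : ‖(8:ℂ)‖ = 8 := by norm_num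
    rw [h8]
    calc |cuspCb b q c 0| / 8 * ‖deriv Z 0‖ ≤ |c 0| / b / 8 * ‖deriv Z 0‖ := by
          gcongr; exact hγ 0
      _ = _ := by ring

lemma cuspGamma_an {g : ℂ → ℂ} {t : ℂ} (hg : AnalyticAt ℂ g t) (h : ∀ m : ℕ, g t ≠ -m) :
    AnalyticAt ℂ (fun t => Complex.Gamma (g t)) t :=
  AnalyticAt.fun_comp (g := Complex.Gamma) ((Meromorphic.Gamma (g t)).analyticAt
    (Complex.differentiableAt_Gamma _ h).continuousAt) hg

lemma cuspGamma_an' {g : ℂ → ℂ} {t : ℂ} (hg : AnalyticAt ℂ g t) (h : 0 < (g t).re) :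
    AnalyticAt ℂ (fun t => Complex.Gamma (g t)) t := by
  refine cuspGamma_an hg fun m hm => ?_
  rw [hm] at h
  simp at h
  have : (0:ℝ) ≤ m := Nat.cast_nonneg m
  linarith

lemma cuspGamma_half : Complex.Gamma (1/2) ≠ 0 := Complex.Gamma_ne_zero_of_re_pos (by norm_num)

lemma cuspM1_an : AnalyticAt ℂ cuspM1 0 := by
  unfold cuspM1
  have h1 : AnalyticAt ℂ (fun t : ℂ => Complex.Gamma (1 - t)) 0 :=
    cuspGamma_an' (by fun_prop) (by simp)
  have h2 : AnalyticAt ℂ (fun t : ℂ => Complex.Gamma (t - 1/2)) 0 := by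
    refine cuspGamma_an (by fun_prop) fun m hm => ?_
    have := congrArg Complex.re hm
    simp at this
    rcases m with _ | m
    · norm_num at this
    · have h0 : (0:ℝ) ≤ m := Nat.cast_nonneg m
      push_cast at this
      norm_num at this
      linarith
  refine (analyticAt_const.mul ((h1.mul h2).div analyticAt_const cuspGamma_half)).div
    (by fun_prop) (by norm_num)

lemma cuspM1_zero : cuspM1 0 = 1 := by
  have h := Complex.Gamma_add_one (-1/2 : ℂ) (by norm_num)
  rw [show (-1/2:ℂ) + 1 = 1/2 by norm_num] at h
  have h2 : Complex.Gamma (0 - 1/2) = -2 * Complex.Gamma (1/2) := by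
    rw [h, show (0:ℂ) - 1/2 = -1/2 by norm_num]; ring
  have := cuspGamma_half
  rw [cuspM1, h2, sub_zero, Complex.Gamma_one]
  field_simp
  norm_num

lemma cuspM2_an : AnalyticAt ℂ cuspM2 0 := by
  unfold cuspM2
  have h1 : AnalyticAt ℂ (fun t : ℂ => Complex.Gamma (1 - t)) 0 :=
    cuspGamma_an' (by fun_prop) (by simp)
  have h2 : AnalyticAt ℂ (fun t : ℂ => Complex.Gamma (t + 1/2)) 0 :=
    cuspGamma_an' (by fun_prop) (by simp)
  exact ((h1.mul h2).mul (by fun_prop)).div analyticAt_const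
    (mul_ne_zero (by norm_num) cuspGamma_half)

lemma cuspM2_zero : cuspM2 0 = 1/8 := by
  have := cuspGamma_half
  rw [cuspM2, sub_zero, Complex.Gamma_one, zero_add]
  field_simp
  norm_num

/-- `s * M1 (s+1)` -/
noncomputable def cuspW1 (s : ℂ) : ℂ :=
  -(1/2) * (Complex.Gamma (1 - s) * Complex.Gamma (s + 1/2) / Complex.Gamma (1/2)) / (2 * s + 1)

/-- `s * M2 (s+1)` -/
noncomputable def cuspW2 (s : ℂ) : ℂ :=
  -(Complex.Gamma (1 - s) * Complex.Gamma (s + 3/2) * (10 * s + 13) / (24 * Complex.Gamma (1/2)))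

lemma cuspGamma_neg {s : ℂ} (hs : s ≠ 0) : s * Complex.Gamma (1 - (s + 1)) = -Complex.Gamma (1 - s) := by
  have := Complex.Gamma_add_one (-s) (neg_ne_zero.2 hs)
  rw [show -s + 1 = 1 - s by ring] at this
  rw [this, show 1 - (s + 1) = -s by ring]
  ring

lemma cuspW1_eq {s : ℂ} (hs : s ≠ 0) : s * cuspM1 (s + 1) = cuspW1 s := by
  have h := cuspGamma_neg hs
  unfold cuspM1 cuspW1
  rw [show s + 1 - 1/2 = s + 1/2 by ring, show 2 * (s + 1) - 1 = 2 * s + 1 by ring,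
    show -(1/2) * (Complex.Gamma (1 - s) * Complex.Gamma (s + 1/2) / Complex.Gamma (1/2)) / (2 * s + 1)
      = 1/2 * (-Complex.Gamma (1 - s) * Complex.Gamma (s + 1/2) / Complex.Gamma (1/2)) / (2 * s + 1) by
      ring, ← h]
  ring

lemma cuspW2_eq {s : ℂ} (hs : s ≠ 0) : s * cuspM2 (s + 1) = cuspW2 s := by
  have h := cuspGamma_neg hs
  unfold cuspM2 cuspW2
  rw [show s + 1 + 1/2 = s + 3/2 by ring, show 10 * (s + 1) + 3 = 10 * s + 13 by ring,
    ← neg_div, ← neg_mul, ← neg_mul, ← h]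
  ring

lemma cuspW1_an : AnalyticAt ℂ cuspW1 0 := by
  unfold cuspW1
  have h1 : AnalyticAt ℂ (fun t : ℂ => Complex.Gamma (1 - t)) 0 :=
    cuspGamma_an' (by fun_prop) (by simp)
  have h2 : AnalyticAt ℂ (fun t : ℂ => Complex.Gamma (t + 1/2)) 0 :=
    cuspGamma_an' (by fun_prop) (by simp)
  exact (analyticAt_const.mul ((h1.mul h2).div analyticAt_const cuspGamma_half)).div
    (by fun_prop) (by norm_num)

lemma cuspW2_an : AnalyticAt ℂ cuspW2 0 := by
  unfold cuspW2
  have h1 : AnalyticAt ℂ (fun t : ℂ => Complex.Gamma (1 - t)) 0 :=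
    cuspGamma_an' (by fun_prop) (by simp)
  have h2 : AnalyticAt ℂ (fun t : ℂ => Complex.Gamma (t + 3/2)) 0 :=
    cuspGamma_an' (by fun_prop) (by simp)
  exact (((h1.mul h2).mul (by fun_prop)).div analyticAt_const
    (mul_ne_zero (by norm_num) cuspGamma_half)).neg

lemma cuspW1_zero : cuspW1 0 = -1/2 := by
  have := cuspGamma_half
  rw [cuspW1, sub_zero, Complex.Gamma_one, zero_add]
  field_simp
  norm_num

/-- `s * ζ(c s + 1)` -/
noncomputable def cuspZt (c : ℂ) (s : ℂ) : ℂ := riemannZeta₁ (c * s + 1) / c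

lemma cuspZt_eq {c s : ℂ} (hc : c ≠ 0) (hs : s ≠ 0) : s * riemannZeta (c * s + 1) = cuspZt c s := by
  have hcs : c * s ≠ 0 := mul_ne_zero hc hs
  rw [riemannZeta_eq_inv_sub_mul (by simpa using hcs), cuspZt, add_sub_cancel_right]
  field_simp

lemma cuspZt_an (c : ℂ) : AnalyticAt ℂ (cuspZt c) 0 := by
  have : Differentiable ℂ (cuspZt c) := by
    unfold cuspZt
    have := differentiable_riemannZeta₁
    fun_prop
  exact this.analyticAt 0

lemma cuspZt_zero (c : ℂ) : cuspZt c 0 = 1 / c := by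
  simp [cuspZt, riemannZeta₁_one]

lemma cuspSn_an : AnalyticAt ℂ cuspSn 0 := cuspSn_diff.analyticAt 0
lemma cuspSc_an : AnalyticAt ℂ cuspSc 0 := cuspSc_diff.analyticAt 0

lemma cuspM0_sn {s : ℂ} (hs : cuspSn s ≠ 0) : cuspSn s * cuspM0 s = 1/2 := by
  have h := Complex.Gamma_mul_Gamma_one_sub s
  have hpi : (Real.pi : ℂ) ≠ 0 := Complex.ofReal_ne_zero.2 Real.pi_ne_zero
  have hs' : Complex.sin ((Real.pi : ℂ) * s) ≠ 0 := fun h0 => hs (by rw [cuspSn, h0, zero_div])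
  rw [cuspM0, mul_comm (Complex.Gamma (1 - s)), h, cuspSn]
  field_simp

lemma cuspM0_shift {s : ℂ} (hs : s ≠ 0) : cuspM0 (s + 1) = -cuspM0 s := by
  have h := cuspGamma_neg hs
  unfold cuspM0
  rw [Complex.Gamma_add_one s hs]
  linear_combination (1/2) * Complex.Gamma s * h

lemma cusp_res0 {δ : ℝ} (hδ0 : 0 < δ) (hδ : δ < 1/8) :
    ∃ K : ℝ, ∀ b : ℝ, 0 < b → ∃ L : ℂ → ℂ, AnalyticAt ℂ L 0 ∧
      (fun s => cuspSn s * cuspS δ 0 (cuspF b 1 cuspPhi0) (cuspMb b 1 cuspM0)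
        (cuspCb b 1 (cuspC cuspPhi0)) 2 s) =ᶠ[𝓝[≠] 0] L ∧
      (1 ≤ b → ‖deriv L 0 - (deriv riemannZeta 0 - riemannZeta 0 * Real.log b)‖ ≤ K / b) := by
  have hA : AnalyticAt ℂ (fun s => 1/2 * riemannZeta (2 * s + 0)) 0 :=
    analyticAt_const.mul (cusp_zeta_aff' 2 0 (by simp))
  have hB : AnalyticAt ℂ (fun s => -(1/2) * s * riemannZeta (2 * s + 2)) 0 :=
    AnalyticAt.mul (by fun_prop) (cusp_zeta_aff' 2 2 (by simp))
  have hZ : AnalyticAt ℂ (fun s => cuspSn s * riemannZeta (2 * δ * s + 2)) 0 :=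
    cuspSn_an.mul (cusp_zeta_aff' _ 2 (by simp))
  obtain ⟨K, hK⟩ := cusp_generic hδ0 hδ (p := 0) (Or.inl rfl) cuspData0 1 hA hB hZ
    (by
      filter_upwards [cuspSn_ne] with s hs
      have := cuspM0_sn hs
      simp only [Complex.ofReal_zero, neg_zero]
      linear_combination -riemannZeta (2 * s + 0) * this)
    (by
      filter_upwards [cuspSn_ne, self_mem_nhdsWithin] with s hs hs0
      have := cuspM0_sn hs
      rw [cuspM0_shift hs0]
      simp only [Complex.ofReal_zero, sub_zero]
      linear_combination s * riemannZeta (2 * s + 2) * this)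
    (by
      filter_upwards with s
      simp only [Complex.ofReal_zero, sub_zero])
  set β' := deriv (fun s => -(1/2) * s * riemannZeta (2 * s + 2)) 0
  refine ⟨K + ‖β'‖ / 4, fun b hb => ?_⟩
  obtain ⟨L, h1, h2, h3⟩ := hK b hb
  refine ⟨L, h1, h2, fun hb1 => ?_⟩
  have hb0 : (b:ℂ) ≠ 0 := Complex.ofReal_ne_zero.2 hb.ne'
  have h3 := h3 hb1
  have d : deriv (fun s => 1/2 * riemannZeta (2 * s + 0)) 0 = deriv riemannZeta 0 := by
    have hz : HasDerivAt riemannZeta (deriv riemannZeta 0) (2 * 0 + 0) := by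
      simpa using (differentiableAt_riemannZeta (zero_ne_one)).hasDerivAt
    have hl : HasDerivAt (fun s : ℂ => 2 * s + 0) (2 * 1) 0 :=
      ((hasDerivAt_id (0:ℂ)).const_mul 2).add_const 0
    have := (HasDerivAt.comp (h₂ := riemannZeta) (h := fun s : ℂ => 2 * s + 0) (0:ℂ) hz hl).const_mul (1/2)
    exact (this.congr_deriv (by ring)).deriv
  have hsub : deriv L 0 - (deriv riemannZeta 0 - riemannZeta 0 * Real.log b) =
      (deriv L 0 - ((b:ℂ) ^ (1 - ((1:ℕ):ℂ)) * (deriv (fun s => 1/2 * riemannZeta (2 * s + 0)) 0 -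
        2 * Real.log b * (1/2 * riemannZeta (2 * 0 + 0))) +
        (b:ℂ) ^ (-1 - ((1:ℕ):ℂ)) * (β' - 2 * Real.log b * (-(1/2) * 0 * riemannZeta (2 * 0 + 2))) / 4))
        + (b:ℂ) ^ (-1 - ((1:ℕ):ℂ)) * β' / 4 := by
    rw [d]
    simp only [Nat.cast_one, sub_self, Complex.cpow_zero, mul_zero, zero_mul, sub_zero, add_zero]
    ring
  rw [hsub, add_div]
  refine (norm_add_le _ _).trans (add_le_add h3 ?_)
  rw [norm_div, norm_mul, Complex.norm_cpow_eq_rpow_re_of_pos hb]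
  have h4 : ‖(4:ℂ)‖ = 4 := by norm_num
  have h5 : b ^ (-1 - ((1:ℕ):ℂ)).re ≤ b⁻¹ := by
    rw [← Real.rpow_neg_one]
    exact Real.rpow_le_rpow_of_exponent_le hb1 (by simp)
  rw [h4]
  calc b ^ (-1 - ((1:ℕ):ℂ)).re * ‖β'‖ / 4 ≤ b⁻¹ * ‖β'‖ / 4 := by gcongr
    _ = _ := by ring

lemma cusp_res1 {δ : ℝ} (hδ0 : 0 < δ) (hδ : δ < 1/8) :
    ∃ K : ℝ, ∀ b : ℝ, 0 < b → ∃ L : ℂ → ℂ, AnalyticAt ℂ L 0 ∧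
      (fun s => cuspSn s * cuspS δ 1 (cuspF b 0 cuspPhi1) (cuspMb b 0 cuspM1)
        (cuspCb b 0 (cuspC cuspPhi1)) 2 s) =ᶠ[𝓝[≠] 0] L ∧
      (1 ≤ b → ‖deriv L 0 - (b * riemannZeta (-1) + Real.log b / (8 * b))‖ ≤ K / b) := by
  have hδc : 2 * (δ:ℂ) ≠ 0 := mul_ne_zero two_ne_zero (Complex.ofReal_ne_zero.2 hδ0.ne')
  have hX : AnalyticAt ℂ (fun s => riemannZeta (2 * s + -1) * cuspM1 s) 0 :=
    (cusp_zeta_aff' 2 (-1) (by simp; norm_num)).mul cuspM1_an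
  have hA : AnalyticAt ℂ (fun s => cuspSn s * (riemannZeta (2 * s + -1) * cuspM1 s)) 0 :=
    cuspSn_an.mul hX
  have hB : AnalyticAt ℂ (fun s => cuspSc s * cuspZt 2 s * cuspW1 s) 0 :=
    (cuspSc_an.mul (cuspZt_an 2)).mul cuspW1_an
  have hZ : AnalyticAt ℂ (fun s => cuspSc s * cuspZt (2 * δ) s) 0 :=
    cuspSc_an.mul (cuspZt_an _)
  obtain ⟨K, hK⟩ := cusp_generic hδ0 hδ (p := 1) (Or.inr (Or.inl rfl)) cuspData1 0 hA hB hZ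
    (by
      filter_upwards with s
      simp only [Complex.ofReal_one])
    (by
      filter_upwards [self_mem_nhdsWithin] with s hs0
      rw [← cuspW1_eq hs0, ← cuspZt_eq two_ne_zero hs0, cuspSn_eq, Complex.ofReal_one,
        show (2:ℂ) - 1 = 1 by norm_num]
      ring)
    (by
      filter_upwards [self_mem_nhdsWithin] with s hs0
      rw [← cuspZt_eq hδc hs0, cuspSn_eq, Complex.ofReal_one, show (2:ℂ) - 1 = 1 by norm_num]
      ring)
  set β' := deriv (fun s => cuspSc s * cuspZt 2 s * cuspW1 s) 0
  refine ⟨K + ‖β'‖ / 4, fun b hb => ?_⟩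
  obtain ⟨L, h1, h2, h3⟩ := hK b hb
  refine ⟨L, h1, h2, fun hb1 => ?_⟩
  have hb0 : (b:ℂ) ≠ 0 := Complex.ofReal_ne_zero.2 hb.ne'
  have h3 := h3 hb1
  have d : deriv (fun s => cuspSn s * (riemannZeta (2 * s + -1) * cuspM1 s)) 0 =
      riemannZeta (-1) := by
    have := (cuspSn_hasDeriv.mul hX.differentiableAt.hasDerivAt).deriv
    refine this.trans ?_
    simp [cuspSn_zero, cuspM1_zero]
  have hsub : deriv L 0 - (b * riemannZeta (-1) + Real.log b / (8 * b)) =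
      (deriv L 0 - ((b:ℂ) ^ (1 - ((0:ℕ):ℂ)) *
        (deriv (fun s => cuspSn s * (riemannZeta (2 * s + -1) * cuspM1 s)) 0 -
        2 * Real.log b * (cuspSn 0 * (riemannZeta (2 * 0 + -1) * cuspM1 0))) +
        (b:ℂ) ^ (-1 - ((0:ℕ):ℂ)) * (β' - 2 * Real.log b * (cuspSc 0 * cuspZt 2 0 * cuspW1 0)) / 4))
        + (b:ℂ) ^ (-1 - ((0:ℕ):ℂ)) * β' / 4 := by
    rw [d, cuspSn_zero, cuspSc_zero, cuspZt_zero, cuspW1_zero]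
    simp only [Nat.cast_zero, sub_zero, Complex.cpow_one, Complex.cpow_neg_one, mul_zero, zero_mul]
    field_simp
    ring
  rw [hsub, add_div]
  refine (norm_add_le _ _).trans (add_le_add h3 ?_)
  rw [norm_div, norm_mul, Complex.norm_cpow_eq_rpow_re_of_pos hb]
  have h4 : ‖(4:ℂ)‖ = 4 := by norm_num
  have h5 : b ^ (-1 - ((0:ℕ):ℂ)).re ≤ b⁻¹ := by
    rw [← Real.rpow_neg_one]
    exact Real.rpow_le_rpow_of_exponent_le hb1 (by simp)
  rw [h4]
  calc b ^ (-1 - ((0:ℕ):ℂ)).re * ‖β'‖ / 4 ≤ b⁻¹ * ‖β'‖ / 4 := by gcongr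
    _ = _ := by ring

lemma cusp_res2 {δ : ℝ} (hδ0 : 0 < δ) (hδ : δ < 1/8) :
    ∃ K : ℝ, ∀ b : ℝ, 0 < b → ∃ L : ℂ → ℂ, AnalyticAt ℂ L 0 ∧
      (fun s => cuspSn s * cuspS δ (-1) (cuspF b 2 cuspPhi2) (cuspMb b 2 cuspM2)
        (cuspCb b 2 (cuspC cuspPhi2)) 2 s) =ᶠ[𝓝[≠] 0] L ∧
      (1 ≤ b → ‖deriv L 0 - (-(Real.log b / (8 * b)))‖ ≤ K / b) := by
  have hA : AnalyticAt ℂ (fun s => cuspSc s * cuspZt 2 s * cuspM2 s) 0 :=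
    (cuspSc_an.mul (cuspZt_an 2)).mul cuspM2_an
  have hB : AnalyticAt ℂ (fun s => cuspSn s * (riemannZeta (2 * s + 3) * cuspW2 s)) 0 :=
    cuspSn_an.mul ((cusp_zeta_aff' 2 3 (by simp)).mul cuspW2_an)
  have hZ : AnalyticAt ℂ (fun s => cuspSn s * riemannZeta (2 * δ * s + 3)) 0 :=
    cuspSn_an.mul (cusp_zeta_aff' _ 3 (by simp))
  obtain ⟨K, hK⟩ := cusp_generic hδ0 hδ (p := -1) (Or.inr (Or.inr rfl)) cuspData2 2 hA hB hZ
    (by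
      filter_upwards [self_mem_nhdsWithin] with s hs0
      rw [← cuspZt_eq two_ne_zero hs0, cuspSn_eq, Complex.ofReal_neg, Complex.ofReal_one, neg_neg]
      ring)
    (by
      filter_upwards [self_mem_nhdsWithin] with s hs0
      rw [← cuspW2_eq hs0, Complex.ofReal_neg, Complex.ofReal_one,
        show (2:ℂ) - -1 = 3 by norm_num]
      ring)
    (by
      filter_upwards with s
      rw [Complex.ofReal_neg, Complex.ofReal_one, show (2:ℂ) - -1 = 3 by norm_num])
  set α' := deriv (fun s => cuspSc s * cuspZt 2 s * cuspM2 s) 0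
  set β' := deriv (fun s => cuspSn s * (riemannZeta (2 * s + 3) * cuspW2 s)) 0
  refine ⟨K + (‖α'‖ + ‖β'‖ / 4), fun b hb => ?_⟩
  obtain ⟨L, h1, h2, h3⟩ := hK b hb
  refine ⟨L, h1, h2, fun hb1 => ?_⟩
  have hb0 : (b:ℂ) ≠ 0 := Complex.ofReal_ne_zero.2 hb.ne'
  have h3 := h3 hb1
  have hsub : deriv L 0 - (-(Real.log b / (8 * b))) =
      (deriv L 0 - ((b:ℂ) ^ (1 - ((2:ℕ):ℂ)) *
        (α' - 2 * Real.log b * (cuspSc 0 * cuspZt 2 0 * cuspM2 0)) +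
        (b:ℂ) ^ (-1 - ((2:ℕ):ℂ)) * (β' - 2 * Real.log b *
          (cuspSn 0 * (riemannZeta (2 * 0 + 3) * cuspW2 0))) / 4))
        + ((b:ℂ)⁻¹ * α' + (b:ℂ) ^ (-1 - ((2:ℕ):ℂ)) * β' / 4) := by
    rw [cuspSn_zero, cuspSc_zero, cuspZt_zero, cuspM2_zero,
      show 1 - ((2:ℕ):ℂ) = -1 by norm_num, Complex.cpow_neg_one]
    generalize (b:ℂ) ^ (-1 - ((2:ℕ):ℂ)) = X
    simp only [mul_zero, zero_mul, sub_zero]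
    field_simp
    ring
  rw [hsub, add_div]
  refine (norm_add_le _ _).trans (add_le_add h3 ?_)
  rw [add_div]
  refine (norm_add_le _ _).trans (add_le_add ?_ ?_)
  · rw [norm_mul, norm_inv, Complex.norm_real, Real.norm_eq_abs, abs_of_pos hb, div_eq_inv_mul]
  rw [norm_div, norm_mul, Complex.norm_cpow_eq_rpow_re_of_pos hb]
  have h4 : ‖(4:ℂ)‖ = 4 := by norm_num
  have h5 : b ^ (-1 - ((2:ℕ):ℂ)).re ≤ b⁻¹ := by
    rw [← Real.rpow_neg_one]
    exact Real.rpow_le_rpow_of_exponent_le hb1 (by simp)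
  rw [h4]
  calc b ^ (-1 - ((2:ℕ):ℂ)).re * ‖β'‖ / 4 ≤ b⁻¹ * ‖β'‖ / 4 := by gcongr
    _ = _ := by ring

lemma cusp_final {δ : ℝ} (hδ0 : 0 < δ) (hδ : δ < 1/8) :
    ∃ K : ℝ, ∀ a : ℝ, ∃ F : ℂ → ℂ, 0 < a →
      ((∀ s ∈ {s : ℂ | 1 < s.re ∧ s.re < 2},
          Summable (fun k : ℕ => ‖cuspE a δ (k + 1) s‖)) ∧
        TendstoLocallyUniformlyOn
          (fun (n : ℕ) (s : ℂ) => ∑ k ∈ Finset.range n, cuspE a δ (k + 1) s)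
          (fun s : ℂ => ∑' k : ℕ, cuspE a δ (k + 1) s)
          atTop {s : ℂ | 1 < s.re ∧ s.re < 2} ∧
        MeromorphicOn F Set.univ ∧
        Set.EqOn F (fun s : ℂ => ∑' k : ℕ, cuspE a δ (k + 1) s)
          {s : ℂ | 1 < s.re ∧ s.re < 2} ∧
        AnalyticAt ℂ F 0) ∧
      (1 ≤ 2 * Real.pi * a → ‖deriv F 0 -
          (4 * (Real.pi : ℂ) * riemannZeta (-1) * (a : ℂ) +
            riemannZeta 0 * (Real.log a : ℂ))‖ ≤ K / (2 * Real.pi * a)) := by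
  obtain ⟨K0, h0⟩ := cusp_res0 hδ0 hδ
  obtain ⟨K1, h1⟩ := cusp_res1 hδ0 hδ
  obtain ⟨K2, h2⟩ := cusp_res2 hδ0 hδ
  refine ⟨K0 + 2 * K1 + 2 * K2, fun a => ?_⟩
  by_cases ha : 0 < a
  swap
  · exact ⟨0, fun h => absurd h ha⟩
  have hb : 0 < 2 * Real.pi * a := by positivity
  obtain ⟨L0, a0, e0, d0⟩ := h0 _ hb
  obtain ⟨L1, a1, e1, d1⟩ := h1 _ hb
  obtain ⟨L2, a2, e2, d2⟩ := h2 _ hb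
  obtain ⟨p1, p2, F, p3, p4, p5⟩ := cusp_part1 hδ0 (by linarith : δ < 1/2) ha
  have hL : AnalyticAt ℂ (fun s => -L0 s + 2 * L1 s + 2 * L2 s) 0 := by fun_prop
  have hF := p5 _ hL (by
    filter_upwards [e0, e1, e2] with s q0 q1 q2
    rw [← q0, ← q1, ← q2]
    simp only [cuspSum, cuspSn]
    ring)
  refine ⟨F, fun _ => ⟨⟨p1, p2, p3, p4, hL.congr hF.symm⟩, fun hb1 => ?_⟩⟩
  have hd : deriv F 0 = -deriv L0 0 + 2 * deriv L1 0 + 2 * deriv L2 0 := by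
    rw [hF.deriv_eq]
    exact ((a0.differentiableAt.hasDerivAt.neg.add
      (a1.differentiableAt.hasDerivAt.const_mul 2)).add
      (a2.differentiableAt.hasDerivAt.const_mul 2)).deriv
  have d0 := d0 hb1
  have d1 := d1 hb1
  have d2 := d2 hb1
  have hlog : (Real.log (2 * Real.pi * a) : ℂ) = Real.log (2 * Real.pi) + Real.log a := by
    rw [Real.log_mul (by positivity) ha.ne']; push_cast; ring
  have hz : deriv riemannZeta 0 = -(Real.log (2 * Real.pi) : ℂ) / 2 := by
    rw [deriv_riemannZeta_zero, Complex.ofReal_log (by positivity)]; push_cast; rfl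
  have key : deriv F 0 - (4 * (Real.pi : ℂ) * riemannZeta (-1) * (a : ℂ) +
            riemannZeta 0 * (Real.log a : ℂ)) =
      -(deriv L0 0 - (deriv riemannZeta 0 - riemannZeta 0 * Real.log (2 * Real.pi * a)))
      + 2 * (deriv L1 0 - (((2 * Real.pi * a : ℝ) : ℂ) * riemannZeta (-1) +
        Real.log (2 * Real.pi * a) / (8 * ((2 * Real.pi * a : ℝ) : ℂ))))
      + 2 * (deriv L2 0 - -(Real.log (2 * Real.pi * a) / (8 * ((2 * Real.pi * a : ℝ) : ℂ)))) := by
    rw [hd, hz, riemannZeta_zero, hlog]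
    push_cast
    ring
  rw [key]
  have n2 : ‖(2:ℂ)‖ = 2 := by norm_num
  calc _ ≤ K0 / (2 * Real.pi * a) + 2 * (K1 / (2 * Real.pi * a)) + 2 * (K2 / (2 * Real.pi * a)) := by
        refine (norm_add₃_le).trans ?_
        rw [norm_neg, norm_mul, norm_mul, n2]
        gcongr
    _ = _ := by ring

/-- for fixed `δ ∈ (0,1/8)`, for every `a > 0` the series
`ζ_E(s) = Σ_{k≥1} (E_{0,k}(s) + E_{1,k}(s) + E_{2,k}(s))` converges absolutely and locally
uniformly on the strip `1 < Re(s) < 2`, its sum extends to a meromorphic function on `ℂ`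
holomorphic at `s = 0`, and the derivative at `0` satisfies
`ζ_E'(0) = 4π·ζ(-1)·a + ζ(0)·log a + O(1/a)` as `a → ∞`. -/
theorem statement0 (δ : ℝ) (hδ0 : 0 < δ) (hδ1 : δ < 1 / 8) :
    ∃ F : ℝ → ℂ → ℂ,
      (∀ a : ℝ, 0 < a →
        (∀ s ∈ {s : ℂ | 1 < s.re ∧ s.re < 2},
          Summable (fun k : ℕ => ‖cuspE a δ (k + 1) s‖)) ∧
        TendstoLocallyUniformlyOn
          (fun (n : ℕ) (s : ℂ) => ∑ k ∈ Finset.range n, cuspE a δ (k + 1) s)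
          (fun s : ℂ => ∑' k : ℕ, cuspE a δ (k + 1) s)
          atTop {s : ℂ | 1 < s.re ∧ s.re < 2} ∧
        MeromorphicOn (F a) Set.univ ∧
        Set.EqOn (F a) (fun s : ℂ => ∑' k : ℕ, cuspE a δ (k + 1) s)
          {s : ℂ | 1 < s.re ∧ s.re < 2} ∧
        AnalyticAt ℂ (F a) 0) ∧
      (fun a : ℝ => deriv (F a) 0 -
          (4 * (Real.pi : ℂ) * riemannZeta (-1) * (a : ℂ) +
            riemannZeta 0 * (Real.log a : ℂ)))
        =O[atTop] (fun a : ℝ => 1 / a) := by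
  obtain ⟨K, hK⟩ := cusp_final hδ0 hδ1
  choose F hF using hK
  refine ⟨F, fun a ha => (hF a ha).1, ?_⟩
  refine Asymptotics.IsBigO.of_bound (K / (2 * Real.pi)) ?_
  filter_upwards [eventually_ge_atTop 1] with a ha
  have ha0 : 0 < a := by linarith
  refine ((hF a ha0).2 ?_).trans (le_of_eq ?_)
  · nlinarith [Real.pi_gt_three]
  · rw [Real.norm_of_nonneg (by positivity)]
    field_simp
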